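/- arXiv:2110.01570 — 2 statements merged into one kernel-verified Lean document; each statement's English description precedes it below -/
import Mathlib

section
/- Suppose 0 < 1/n ≤ 1/q ≪ 1/k ≤ 1/2 and 1/q ≪ ν. Let H be an n-vertex k-graph on a vertex set V, and let Q be chosen uniformly at random from the q-element subsets of V. Then the probability that |H[Q]| = (q^k/n^k)·|H| ± ν·C(q,k) is at least 1 − 2e^{−ν²q/(8k²)}. -/
/-- The average of `g` over the `q`-element subsets of `W`. -/
noncomputable def sliceMean {V : Type*} (q : ℕ) (W : Finset V) (g : Finset V → ℝ) : ℝ :=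
  (∑ Q ∈ W.powersetCard q, g Q) / (W.card.choose q : ℝ)

open Finset in
theorem sum_insert_powersetCard_erase {V : Type*} [DecidableEq V] (q : ℕ) (W : Finset V)
    (g : Finset V → ℝ) :
    ∑ x ∈ W, ∑ R ∈ (W.erase x).powersetCard q, g (insert x R) =
      (q + 1 : ℝ) * ∑ Q ∈ W.powersetCard (q + 1), g Q := by
  have hinner : ∀ x ∈ W, ∑ R ∈ (W.erase x).powersetCard q, g (insert x R) =
      ∑ Q ∈ W.powersetCard (q + 1), if x ∈ Q then g Q else 0 := by
    intro x hx
    rw [← sum_filter]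
    refine sum_nbij' (fun R => insert x R) (fun Q => Q.erase x) ?_ ?_ ?_ ?_ ?_
    · intro R hR
      obtain ⟨hRW, hRc⟩ := mem_powersetCard.1 hR
      have hxR : x ∉ R := fun h => notMem_erase x W (hRW h)
      simp only [mem_filter, mem_powersetCard, mem_insert_self, and_true]
      exact ⟨insert_subset hx (hRW.trans (erase_subset x W)), by rw [card_insert_of_notMem hxR, hRc]⟩
    · intro Q hQ
      simp only [mem_filter, mem_powersetCard] at hQ
      exact mem_powersetCard.2 ⟨erase_subset_erase x hQ.1.1,
        by rw [card_erase_of_mem hQ.2, hQ.1.2, Nat.add_sub_cancel]⟩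
    · intro R hR
      exact erase_insert fun h => notMem_erase x W ((mem_powersetCard.1 hR).1 h)
    · intro Q hQ
      exact insert_erase (mem_filter.1 hQ).2
    · intro R _
      rfl
  rw [sum_congr rfl hinner, sum_comm, mul_sum]
  refine sum_congr rfl fun Q hQ => ?_
  obtain ⟨hQW, hQc⟩ := mem_powersetCard.1 hQ
  rw [← sum_filter, filter_mem_eq_inter, inter_eq_right.2 hQW, sum_const, hQc, nsmul_eq_mul]
  push_cast
  rfl

open Finset in
theorem sliceMean_succ {V : Type*} [DecidableEq V] (q : ℕ) (W : Finset V) (hq : q + 1 ≤ W.card)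
    (g : Finset V → ℝ) :
    sliceMean (q + 1) W g =
      (∑ x ∈ W, sliceMean q (W.erase x) fun R => g (insert x R)) / (W.card : ℝ) := by
  obtain ⟨m, hm⟩ : ∃ m, W.card = m + 1 := ⟨W.card - 1, by omega⟩
  have hinner : ∀ x ∈ W, (sliceMean q (W.erase x) fun R => g (insert x R)) =
      (∑ R ∈ (W.erase x).powersetCard q, g (insert x R)) / (m.choose q : ℝ) := by
    intro x hx
    rw [sliceMean, card_erase_of_mem hx, hm, Nat.add_sub_cancel]
  rw [sum_congr rfl hinner, ← sum_div, sum_insert_powersetCard_erase, sliceMean, hm]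
  have h1 : (0 : ℝ) < m.choose q := by exact_mod_cast Nat.choose_pos (by omega)
  have h2 : (0 : ℝ) < (m + 1).choose (q + 1) := by exact_mod_cast Nat.choose_pos (by omega)
  have h3 : ((m : ℝ) + 1) * m.choose q = (m + 1).choose (q + 1) * (q + 1) := by
    exact_mod_cast Nat.add_one_mul_choose_eq m q
  push_cast
  field_simp
  linear_combination (∑ Q ∈ W.powersetCard (q + 1), g Q) * h3

open Finset in
theorem abs_sliceMean_insert_sub_le {V : Type*} [DecidableEq V] {q : ℕ} {W : Finset V}
    {g : Finset V → ℝ} {c : ℝ} (hc : 0 ≤ c)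
    (hg : ∀ R ⊆ W, R.card = q → ∀ x ∈ W, ∀ y ∈ W, x ∉ R → y ∉ R →
      |g (insert x R) - g (insert y R)| ≤ c)
    {x y : V} (hx : x ∈ W) (hy : y ∈ W) (hq : q + 1 ≤ W.card) :
    |(sliceMean q (W.erase x) fun R => g (insert x R)) -
      sliceMean q (W.erase y) fun R => g (insert y R)| ≤ c := by
  let e : V ↪ V := (Equiv.swap x y).toEmbedding
  have hmem : ∀ (S : Finset V) (z : V), z ∈ S.map e ↔ Equiv.swap x y z ∈ S := by
    intro S z
    simp only [e, mem_map_equiv, Equiv.symm_swap]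
  have hW : W.erase y = (W.erase x).map e := by
    ext z
    rw [hmem, mem_erase, mem_erase]
    by_cases hzx : z = x
    · subst hzx; simp [hx, hy, eq_comm]
    by_cases hzy : z = y
    · subst hzy; simp
    rw [Equiv.swap_apply_of_ne_of_ne hzx hzy]
    simp [hzx, hzy]
  have hpos : (0 : ℝ) < (W.card - 1).choose q := by
    exact_mod_cast Nat.choose_pos (by omega)
  rw [sliceMean, sliceMean, card_erase_of_mem hx, card_erase_of_mem hy, ← sub_div, abs_div,
    abs_of_pos hpos, div_le_iff₀ hpos, hW, powersetCard_map, sum_map, ← sum_sub_distrib]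
  refine (abs_sum_le_sum_abs _ _).trans ?_
  have hcard : (((W.card - 1).choose q : ℕ) : ℝ) = ((W.erase x).powersetCard q).card := by
    rw [card_powersetCard, card_erase_of_mem hx]
  rw [hcard, mul_comm, ← nsmul_eq_mul]
  refine sum_le_card_nsmul _ _ _ fun R hR => ?_
  obtain ⟨hRW, hRc⟩ := mem_powersetCard.1 hR
  have hxR : x ∉ R := fun h => notMem_erase x W (hRW h)
  change |g (insert x R) - g (insert y (R.map e))| ≤ c
  by_cases hyR : y ∈ R
  · have : insert y (R.map e) = insert x R := by
      ext z
      rw [mem_insert, mem_insert, hmem]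
      by_cases hzx : z = x
      · subst hzx; simp [hyR]
      by_cases hzy : z = y
      · subst hzy; simp [hyR]
      rw [Equiv.swap_apply_of_ne_of_ne hzx hzy]
      simp [hzx, hzy]
    simpa [this] using hc
  · have : R.map e = R := by
      ext z
      rw [hmem]
      by_cases hzx : z = x
      · subst hzx; simp [hxR, hyR]
      by_cases hzy : z = y
      · subst hzy; simp [hxR, hyR]
      rw [Equiv.swap_apply_of_ne_of_ne hzx hzy]
    rw [this]
    exact hg R (hRW.trans (erase_subset x W)) hRc x hx y hy hxR hyR

open Finset in
theorem sum_exp_div_card_le {V : Type*} {W : Finset V} (hW : W.Nonempty) {m : V → ℝ} {c : ℝ}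
    (hc : 0 < c) (hm : ∀ x ∈ W, ∀ y ∈ W, |m x - m y| ≤ c) (s : ℝ) :
    (∑ x ∈ W, Real.exp (s * m x)) / (W.card : ℝ) ≤
      Real.exp (s * ((∑ x ∈ W, m x) / (W.card : ℝ)) + (s * c) ^ 2 / 2) := by
  have hpos : (0 : ℝ) < W.card := by exact_mod_cast hW.card_pos
  set μ : ℝ := (∑ x ∈ W, m x) / (W.card : ℝ) with hμ
  have hμW : ∑ x ∈ W, (m x - μ) = 0 := by
    rw [sum_sub_distrib, sum_const, nsmul_eq_mul, hμ, mul_div_cancel₀ _ hpos.ne', sub_self]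
  have hdev : ∀ x ∈ W, |(m x - μ) / c| ≤ 1 := by
    intro x hx
    rw [abs_div, abs_of_pos hc, div_le_one hc]
    have h1 : m x - μ = (∑ y ∈ W, (m x - m y)) / (W.card : ℝ) := by
      rw [sum_sub_distrib, sum_const, nsmul_eq_mul, hμ]
      field_simp
    rw [h1, abs_div, abs_of_pos hpos, div_le_iff₀ hpos, mul_comm, ← nsmul_eq_mul]
    exact (abs_sum_le_sum_abs _ _).trans (sum_le_card_nsmul _ _ _ fun y hy => hm x hx y hy)
  rw [div_le_iff₀ hpos]
  calc ∑ x ∈ W, Real.exp (s * m x)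
      = ∑ x ∈ W, Real.exp (s * μ) * Real.exp ((m x - μ) / c * (s * c)) := by
        refine sum_congr rfl fun x _ => ?_
        rw [← Real.exp_add]
        congr 1
        field_simp
        ring
    _ ≤ ∑ x ∈ W, Real.exp (s * μ) *
          (Real.cosh (s * c) + (m x - μ) / c * Real.sinh (s * c)) := by
        refine sum_le_sum fun x hx => ?_
        gcongr
        exact Real.exp_mul_le_cosh_add_mul_sinh (hdev x hx) _
    _ = Real.exp (s * μ) * Real.cosh (s * c) * W.card := by
        rw [← mul_sum, sum_add_distrib, ← sum_mul, ← sum_div, hμW, sum_const, nsmul_eq_mul]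
        ring
    _ ≤ Real.exp (s * μ + (s * c) ^ 2 / 2) * W.card := by
        rw [Real.exp_add]
        gcongr
        exact Real.cosh_le_exp_half_sq _

open Finset in
theorem sliceMean_exp_le {V : Type*} [DecidableEq V] {c : ℝ} (hc : 0 < c) (s : ℝ) (q : ℕ) :
    ∀ (W : Finset V) (g : Finset V → ℝ), q ≤ W.card →
      (∀ R ⊆ W, R.card + 1 = q → ∀ x ∈ W, ∀ y ∈ W, x ∉ R → y ∉ R →
        |g (insert x R) - g (insert y R)| ≤ c) →
      sliceMean q W (fun Q => Real.exp (s * g Q)) ≤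
        Real.exp (s * sliceMean q W g + q * ((s * c) ^ 2 / 2)) := by
  induction q with
  | zero =>
    intro W g _ _
    simp [sliceMean]
  | succ q ih =>
    intro W g hq hg
    have hW : W.Nonempty := card_pos.1 (by omega)
    have hpos : (0 : ℝ) < W.card := by exact_mod_cast hW.card_pos
    rw [sliceMean_succ q W hq, sliceMean_succ q W hq]
    have hstep : ∀ x ∈ W, (sliceMean q (W.erase x) fun R => Real.exp (s * g (insert x R))) ≤
        Real.exp (s * sliceMean q (W.erase x) fun R => g (insert x R)) *
          Real.exp (q * ((s * c) ^ 2 / 2)) := by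
      intro x hx
      rw [← Real.exp_add]
      refine ih (W.erase x) (fun R => g (insert x R)) (by rw [card_erase_of_mem hx]; omega) ?_
      intro R hRW hRc y hy z hz hyR hzR
      have hxR : x ∉ R := fun h => notMem_erase x W (hRW h)
      rw [insert_comm x y, insert_comm x z]
      refine hg (insert x R) (insert_subset hx (hRW.trans (erase_subset x W)))
        (by rw [card_insert_of_notMem hxR, hRc]) y (mem_of_mem_erase hy) z (mem_of_mem_erase hz)
        ?_ ?_
      · simp [hyR, ne_of_mem_erase hy]
      · simp [hzR, ne_of_mem_erase hz]
    have hmean := sum_exp_div_card_le hW hc (m := fun x =>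
      sliceMean q (W.erase x) fun R => g (insert x R)) (fun x hx y hy =>
        abs_sliceMean_insert_sub_le hc.le
          (fun R hRW hRc => hg R hRW (by rw [hRc])) hx hy hq) s
    calc (∑ x ∈ W, sliceMean q (W.erase x) fun R => Real.exp (s * g (insert x R))) / (W.card : ℝ)
        ≤ (∑ x ∈ W, Real.exp (s * sliceMean q (W.erase x) fun R => g (insert x R)) *
            Real.exp (q * ((s * c) ^ 2 / 2))) / (W.card : ℝ) := by
          gcongr with x hx
          exact hstep x hx
      _ = (∑ x ∈ W, Real.exp (s * sliceMean q (W.erase x) fun R => g (insert x R))) /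
            (W.card : ℝ) * Real.exp (q * ((s * c) ^ 2 / 2)) := by
          rw [← sum_mul]
          ring
      _ ≤ _ := by
          refine (mul_le_mul_of_nonneg_right hmean (Real.exp_pos _).le).trans_eq ?_
          rw [← Real.exp_add]
          congr 1
          push_cast
          ring

open Finset in
/-- One-sided Azuma inequality on the slice of `q`-element subsets of `W`. -/
theorem card_filter_sliceMean_add_le {V : Type*} [DecidableEq V] {c : ℝ} (hc : 0 < c) {q : ℕ}
    (hq0 : 0 < q) {W : Finset V} (hq : q ≤ W.card) {g : Finset V → ℝ}
    (hg : ∀ R ⊆ W, R.card + 1 = q → ∀ x ∈ W, ∀ y ∈ W, x ∉ R → y ∉ R →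
      |g (insert x R) - g (insert y R)| ≤ c) {t : ℝ} (ht : 0 ≤ t)
    (P : Finset V → Prop) [DecidablePred P] (hP : ∀ Q, P Q → sliceMean q W g + t ≤ g Q) :
    (((W.powersetCard q).filter P).card : ℝ) ≤
      Real.exp (-t ^ 2 / (2 * q * c ^ 2)) * (W.powersetCard q).card := by
  have hq' : (0 : ℝ) < q := by exact_mod_cast hq0
  set s : ℝ := t / (q * c ^ 2) with hs
  have hs0 : 0 ≤ s := by positivity
  have hN : (0 : ℝ) < W.card.choose q := by exact_mod_cast Nat.choose_pos hq
  have hmgf := sliceMean_exp_le hc s q W g hq hg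
  set μ := sliceMean q W g with hμ
  rw [sliceMean, div_le_iff₀ hN] at hmgf
  have hlow : (((W.powersetCard q).filter P).card : ℝ) * Real.exp (s * (μ + t)) ≤
      ∑ Q ∈ W.powersetCard q, Real.exp (s * g Q) := by
    rw [← nsmul_eq_mul]
    refine (card_nsmul_le_sum ((W.powersetCard q).filter P) (fun Q => Real.exp (s * g Q)) _
      fun Q hQ => ?_).trans
      (sum_le_sum_of_subset_of_nonneg (filter_subset _ _) fun _ _ _ => (Real.exp_pos _).le)
    have := hP Q (mem_filter.1 hQ).2
    gcongr
  have hexp : Real.exp (s * μ + q * ((s * c) ^ 2 / 2)) =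
      Real.exp (-t ^ 2 / (2 * q * c ^ 2)) * Real.exp (s * (μ + t)) := by
    rw [← Real.exp_add]
    congr 1
    rw [hs]
    field_simp
    ring
  rw [card_powersetCard]
  refine le_of_mul_le_mul_right ?_ (Real.exp_pos (s * (μ + t)))
  calc _ ≤ _ := hlow
    _ ≤ _ := hmgf
    _ = _ := by rw [hexp]; ring

theorem sliceMean_neg {V : Type*} (q : ℕ) (W : Finset V) (g : Finset V → ℝ) :
    (sliceMean q W fun Q => -g Q) = -sliceMean q W g := by
  rw [sliceMean, sliceMean, Finset.sum_neg_distrib, neg_div]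

open Finset in
/-- Two-sided Azuma inequality on the slice of `q`-element subsets of `W`. -/
theorem card_filter_abs_sub_sliceMean_le {V : Type*} [DecidableEq V] {c : ℝ} (hc : 0 < c) {q : ℕ}
    (hq0 : 0 < q) {W : Finset V} (hq : q ≤ W.card) {g : Finset V → ℝ}
    (hg : ∀ R ⊆ W, R.card + 1 = q → ∀ x ∈ W, ∀ y ∈ W, x ∉ R → y ∉ R →
      |g (insert x R) - g (insert y R)| ≤ c) {t : ℝ} (ht : 0 ≤ t)
    (P : Finset V → Prop) [DecidablePred P] (hP : ∀ Q, P Q → t ≤ |g Q - sliceMean q W g|) :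
    (((W.powersetCard q).filter P).card : ℝ) ≤
      2 * Real.exp (-t ^ 2 / (2 * q * c ^ 2)) * (W.powersetCard q).card := by
  classical
  have h1 := card_filter_sliceMean_add_le hc hq0 hq hg ht
    (fun Q => sliceMean q W g + t ≤ g Q) fun _ h => h
  have h2 := card_filter_sliceMean_add_le hc hq0 hq (g := fun Q => -g Q)
    (fun R hR hRc x hx y hy hxR hyR => by
      rw [neg_sub_neg]; exact hg R hR hRc y hy x hx hyR hxR) ht
    (fun Q => sliceMean q W (fun Q => -g Q) + t ≤ -g Q) fun _ h => h
  have hsub : (W.powersetCard q).filter P ⊆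
      (W.powersetCard q).filter (fun Q => sliceMean q W g + t ≤ g Q) ∪
      (W.powersetCard q).filter (fun Q => sliceMean q W (fun Q => -g Q) + t ≤ -g Q) := by
    intro Q hQ
    obtain ⟨hQW, hQP⟩ := mem_filter.1 hQ
    rw [mem_union, mem_filter, mem_filter, sliceMean_neg]
    rcases le_abs.1 (hP Q hQP) with h | h
    · exact Or.inl ⟨hQW, by linarith⟩
    · exact Or.inr ⟨hQW, by linarith⟩
  have h3 : (((W.powersetCard q).filter P).card : ℝ) ≤ _ :=
    Nat.cast_le.2 ((card_le_card hsub).trans (card_union_le _ _))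
  push_cast at h3
  linarith

open Finset in
/-- The mean number of edges of a `k`-graph induced on a `q`-element subset. -/
theorem sliceMean_card_filter_subset {V : Type*} [DecidableEq V] {k q : ℕ} (hkq : k ≤ q)
    {W : Finset V} (hq : q ≤ W.card) {H : Finset (Finset V)}
    (hH : ∀ e ∈ H, e ⊆ W ∧ e.card = k) :
    (sliceMean q W fun Q => ((H.filter fun e => e ⊆ Q).card : ℝ)) =
      (q.choose k : ℝ) / (W.card.choose k : ℝ) * H.card := by
  have hsum : ∑ Q ∈ W.powersetCard q, (H.filter fun e => e ⊆ Q).card =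
      H.card * (W.card - k).choose (q - k) := by
    simp_rw [card_filter]
    rw [sum_comm, ← smul_eq_mul]
    refine sum_eq_card_nsmul fun e he => ?_
    obtain ⟨heW, hec⟩ := hH e he
    rw [← card_filter, card_filter_powersetCard_subset e W q heW (hec ▸ hkq), hec]
  have h1 : (0 : ℝ) < W.card.choose q := by exact_mod_cast Nat.choose_pos hq
  have h2 : (0 : ℝ) < W.card.choose k := by exact_mod_cast Nat.choose_pos (hkq.trans hq)
  have h3 : (W.card.choose q : ℝ) * q.choose k =
      W.card.choose k * (W.card - k).choose (q - k) := by
    exact_mod_cast Nat.choose_mul hkq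
  rw [sliceMean, ← Nat.cast_sum, hsum]
  push_cast
  field_simp
  linear_combination -(H.card : ℝ) * h3

open Finset in
theorem abs_card_filter_subset_insert_sub_le {V : Type*} [DecidableEq V] {k : ℕ}
    {H : Finset (Finset V)} (hH : ∀ e ∈ H, e.card = k) (R : Finset V) (x y : V) (hx : x ∉ R)
    (hy : y ∉ R) :
    |((H.filter fun e => e ⊆ insert x R).card : ℝ) - (H.filter fun e => e ⊆ insert y R).card| ≤
      (R.card.choose (k - 1) : ℝ) := by
  have hlow : ∀ z, (H.filter fun e => e ⊆ R).card ≤ (H.filter fun e => e ⊆ insert z R).card :=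
    fun z => card_le_card <| monotone_filter_right H fun e _ he => he.trans (subset_insert z R)
  have hupp : ∀ z ∉ R, (H.filter fun e => e ⊆ insert z R).card ≤
      (H.filter fun e => e ⊆ R).card + R.card.choose (k - 1) := by
    intro z hz
    rw [← card_powersetCard, ← card_image_of_injOn (s := R.powersetCard (k - 1)) (f := insert z)]
    · refine (card_le_card ?_).trans (card_union_le _ _)
      intro e he
      obtain ⟨heH, heR⟩ := mem_filter.1 he
      rw [mem_union, mem_filter, mem_image]
      by_cases hze : z ∈ e
      · refine Or.inr ⟨e.erase z, mem_powersetCard.2 ⟨?_, ?_⟩, insert_erase hze⟩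
        · exact subset_insert_iff.1 heR
        · rw [card_erase_of_mem hze, hH e heH]
      · exact Or.inl ⟨heH, (subset_insert_iff_of_notMem hze).1 heR⟩
    · intro A hA B hB hAB
      have hzA : z ∉ A := fun h => hz ((mem_powersetCard.1 hA).1 h)
      have hzB : z ∉ B := fun h => hz ((mem_powersetCard.1 hB).1 h)
      rw [← erase_insert hzA, ← erase_insert hzB]
      exact congrArg (fun S => S.erase z) hAB
  have a1 : ((H.filter fun e => e ⊆ R).card : ℝ) ≤ _ := Nat.cast_le.2 (hlow x)
  have a2 : ((H.filter fun e => e ⊆ R).card : ℝ) ≤ _ := Nat.cast_le.2 (hlow y)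
  have a3 : ((H.filter fun e => e ⊆ insert x R).card : ℝ) ≤ _ := Nat.cast_le.2 (hupp x hx)
  have a4 : ((H.filter fun e => e ⊆ insert y R).card : ℝ) ≤ _ := Nat.cast_le.2 (hupp y hy)
  push_cast at a3 a4
  rw [abs_le]
  constructor <;> linarith

theorem pow_mul_descFactorial_le {q n : ℕ} (hqn : q ≤ n) (k : ℕ) :
    n ^ k * q.descFactorial k ≤ q ^ k * n.descFactorial k := by
  induction k with
  | zero => simp
  | succ k ih =>
    rw [Nat.descFactorial_succ, Nat.descFactorial_succ]
    have h : n * (q - k) ≤ q * (n - k) := by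
      rw [Nat.mul_sub, Nat.mul_sub, mul_comm n q]
      have := Nat.mul_le_mul_right k hqn
      omega
    calc n ^ (k + 1) * ((q - k) * q.descFactorial k)
        = (n * (q - k)) * (n ^ k * q.descFactorial k) := by ring
      _ ≤ (q * (n - k)) * (q ^ k * n.descFactorial k) := Nat.mul_le_mul h ih
      _ = _ := by ring

open Filter Topology in
theorem eventually_pow_le_mul_descFactorial (k : ℕ) {δ : ℝ} (hδ : 0 < δ) :
    ∀ᶠ q : ℕ in atTop, (q : ℝ) ^ k ≤ (1 + δ) * (q.descFactorial k : ℝ) := by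
  have h := (isEquivalent_descFactorial k).symm.isLittleO.bound hδ
  filter_upwards [h] with q hq
  simp only [Pi.sub_apply, Real.norm_eq_abs, Nat.abs_cast] at hq
  have := (abs_le.1 hq).2
  linarith

/-- The density `q.choose k / n.choose k` is close to `q ^ k / n ^ k`. -/
theorem abs_choose_div_choose_sub_le {k q n : ℕ} (hk : k ≤ q) (hq0 : 0 < q) (hqn : q ≤ n) {δ : ℝ}
    (hδ : (q : ℝ) ^ k ≤ (1 + δ) * (q.descFactorial k : ℝ)) {h : ℝ} (h0 : 0 ≤ h)
    (hn : h ≤ n.choose k) :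
    |(q.choose k : ℝ) / n.choose k * h - (q : ℝ) ^ k / (n : ℝ) ^ k * h| ≤ δ * q.choose k := by
  have hn0 : (0 : ℝ) < (n : ℝ) ^ k := by
    have : (0 : ℝ) < n := by exact_mod_cast hq0.trans_le hqn
    positivity
  have hf : (0 : ℝ) < k.factorial := by exact_mod_cast k.factorial_pos
  have hC : (0 : ℝ) < n.choose k := by exact_mod_cast Nat.choose_pos (hk.trans hqn)
  have hdq : (q.descFactorial k : ℝ) = k.factorial * q.choose k := by
    exact_mod_cast Nat.descFactorial_eq_factorial_mul_choose q k
  have hdn : (n.descFactorial k : ℝ) = k.factorial * n.choose k := by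
    exact_mod_cast Nat.descFactorial_eq_factorial_mul_choose n k
  have hmono : (n : ℝ) ^ k * q.descFactorial k ≤ (q : ℝ) ^ k * n.descFactorial k := by
    exact_mod_cast pow_mul_descFactorial_le hqn k
  have hpow : (n.descFactorial k : ℝ) ≤ (n : ℝ) ^ k := by
    exact_mod_cast Nat.descFactorial_le_pow n k
  rw [hdq] at hmono hδ
  rw [hdn] at hmono hpow
  have hle : (q.choose k : ℝ) / n.choose k ≤ (q : ℝ) ^ k / (n : ℝ) ^ k := by
    rw [div_le_div_iff₀ hC hn0]
    refine le_of_mul_le_mul_left ?_ hf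
    linarith
  have hupp : (q : ℝ) ^ k / (n : ℝ) ^ k * n.choose k ≤ (1 + δ) * q.choose k := by
    refine le_of_mul_le_mul_left ?_ hf
    calc (k.factorial : ℝ) * ((q : ℝ) ^ k / (n : ℝ) ^ k * n.choose k)
        = (q : ℝ) ^ k * ((k.factorial * n.choose k) / (n : ℝ) ^ k) := by ring
      _ ≤ (q : ℝ) ^ k * 1 := by
        gcongr
        exact (div_le_one hn0).2 hpow
      _ ≤ _ := by linarith
  rw [abs_sub_comm, ← sub_mul, abs_of_nonneg (mul_nonneg (sub_nonneg.2 hle) h0)]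
  calc _ ≤ ((q : ℝ) ^ k / (n : ℝ) ^ k - (q.choose k : ℝ) / n.choose k) * n.choose k :=
        mul_le_mul_of_nonneg_left hn (sub_nonneg.2 hle)
    _ = (q : ℝ) ^ k / (n : ℝ) ^ k * n.choose k - q.choose k := by
        rw [sub_mul, div_mul_cancel₀ _ hC.ne']
    _ ≤ _ := by linarith

open Finset in
/-- Lemma: the number of edges induced on a uniformly random q-subset is concentrated. -/
theorem random_subset_edge_count :
    ∀ k : ℕ, 2 ≤ k → ∀ ν : ℝ, 0 < ν → ∃ q₀ : ℕ, ∀ q n : ℕ, q₀ ≤ q → q ≤ n →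
    ∀ (V : Type) [DecidableEq V], ∀ W : Finset V, W.card = n →
    ∀ H : Finset (Finset V), (∀ e ∈ H, e ⊆ W ∧ e.card = k) →
    haveI : DecidablePred fun Q : Finset V =>
        |(((H.filter fun e => e ⊆ Q).card : ℝ)) - (q : ℝ)^k / (n : ℝ)^k * (H.card : ℝ)|
          ≤ ν * (q.choose k : ℝ) := fun _ => Classical.propDecidable _
    (1 - 2 * Real.exp (-(ν^2 * (q : ℝ)) / (8 * (k : ℝ)^2))) * ((W.powersetCard q).card : ℝ) ≤
      (((W.powersetCard q).filter fun Q =>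
        |(((H.filter fun e => e ⊆ Q).card : ℝ)) - (q : ℝ)^k / (n : ℝ)^k * (H.card : ℝ)|
          ≤ ν * (q.choose k : ℝ)).card : ℝ) := by
  intro k hk ν hν
  obtain ⟨q₁, hq₁⟩ := Filter.eventually_atTop.1
    (eventually_pow_le_mul_descFactorial k (half_pos hν))
  refine ⟨max q₁ k, ?_⟩
  intro q n hq hqn V _ W hW H hH
  have hkq : k ≤ q := (le_max_right _ _).trans hq
  have hq0 : 0 < q := by omega
  have hHcard : (H.card : ℝ) ≤ n.choose k := by
    rw [← hW, ← card_powersetCard]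
    exact_mod_cast card_le_card fun e he => mem_powersetCard.2 (hH e he)
  have hmean := abs_choose_div_choose_sub_le hkq hq0 hqn (hq₁ q ((le_max_left _ _).trans hq))
    (Nat.cast_nonneg H.card) hHcard
  rw [← hW, ← sliceMean_card_filter_subset hkq (hW ▸ hqn) hH, hW] at hmean
  have hc : (0 : ℝ) < (q - 1).choose (k - 1) := by exact_mod_cast Nat.choose_pos (by omega)
  have hqR : (0 : ℝ) < q := by exact_mod_cast hq0
  have hkR : (0 : ℝ) < k := by exact_mod_cast (by omega : 0 < k)
  have hchoose : (q : ℝ) * (q - 1).choose (k - 1) = q.choose k * k := by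
    have := Nat.add_one_mul_choose_eq (q - 1) (k - 1)
    rw [Nat.sub_add_cancel (by omega), Nat.sub_add_cancel (by omega)] at this
    exact_mod_cast this
  classical
  have htail := card_filter_abs_sub_sliceMean_le (t := ν / 2 * q.choose k) hc hq0 (hW ▸ hqn)
    (g := fun Q => ((H.filter fun e => e ⊆ Q).card : ℝ))
    (fun R _ hRc x _ y _ hxR hyR => by
      rw [show q - 1 = R.card by omega]
      exact abs_card_filter_subset_insert_sub_le (fun e he => (hH e he).2) R x y hxR hyR)
    (by positivity)
    (fun Q => ¬ |(((H.filter fun e => e ⊆ Q).card : ℝ)) - (q : ℝ)^k / (n : ℝ)^k * (H.card : ℝ)|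
          ≤ ν * (q.choose k : ℝ))
    (fun Q hQ => by
      have := abs_sub_le ((H.filter fun e => e ⊆ Q).card : ℝ)
        (sliceMean q W fun Q => ((H.filter fun e => e ⊆ Q).card : ℝ))
        ((q : ℝ)^k / (n : ℝ)^k * (H.card : ℝ))
      linarith [not_le.1 hQ])
  have hexp : -(ν / 2 * q.choose k) ^ 2 / (2 * q * ((q - 1).choose (k - 1) : ℝ) ^ 2) =
      -(ν ^ 2 * (q : ℝ)) / (8 * (k : ℝ) ^ 2) := by
    have : (q.choose k : ℝ) = q * (q - 1).choose (k - 1) / k := by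
      rw [hchoose, mul_div_cancel_right₀ _ hkR.ne']
    rw [this]
    field_simp
    ring
  rw [hexp] at htail
  have hsplit := congrArg (Nat.cast : ℕ → ℝ) <|
    card_filter_add_card_filter_not (s := W.powersetCard q) fun Q =>
      |(((H.filter fun e => e ⊆ Q).card : ℝ)) - (q : ℝ)^k / (n : ℝ)^k * (H.card : ℝ)|
        ≤ ν * (q.choose k : ℝ)
  rw [Nat.cast_add] at hsplit
  have hgoal : (1 - 2 * Real.exp (-(ν^2 * (q : ℝ)) / (8 * (k : ℝ)^2))) *
      ((W.powersetCard q).card : ℝ) ≤ (((W.powersetCard q).filter fun Q =>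
        |(((H.filter fun e => e ⊆ Q).card : ℝ)) - (q : ℝ)^k / (n : ℝ)^k * (H.card : ℝ)|
          ≤ ν * (q.choose k : ℝ)).card : ℝ) := by
    linarith
  convert hgoal
end

section
/- Suppose 0 < 1/m, 1/n ≪ ε ≪ ν, 1/o, 1/k ≤ 1 and k, o ∈ ℕ∖{1}. Suppose P = P(k−1,a) and Q = Q(k−1,a) are both o-bounded (1/a_1, ε, a)-equitable families of partitions of vertex sets V and V' respectively, with |V| = n and |V'| = m. Suppose H^(k−1) ⊆ K_{k−1}(P^(1)) is a (k−1)-graph on V. Then there exist a (k−1)-graph G^(k−1) ⊆ K_{k−1}(P^(1)) on V and a (k−1)-graph F^(k−1) ⊆ K_{k−1}(Q^(1)) on V' such that (F1) |H^(k−1) △ G^(k−1)| ≤ ν·C(n,k−1), and (F2) for each ẑ ∈ Â(k,k−1,a), d(K_k(G^(k−1)) | P̂^(k−1)(ẑ)) = d(K_k(F^(k−1)) | Q̂^(k−1)(ẑ)) ± ν. -/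
namespace HypReg

open Finset

attribute [local instance 10] Classical.propDecidable

noncomputable section

variable {V : Type*} [DecidableEq V]

/-- Representation of a 1-graph: the set of singletons of `U`. -/
def sing (U : Finset V) : Finset (Finset V) :=
  U.image fun v => ({v} : Finset V)

/-- `Kset W j i B`: the i-element subsets of `W` all of whose j-element subsets lie in `B`. -/
def Kset (W : Finset V) (j i : ℕ) (B : Finset (Finset V)) : Finset (Finset V) :=
  (W.powersetCard i).filter fun S => ∀ T ∈ S.powersetCard j, T ∈ B

/-- Clique operator which, at level 1, uses the ambient family `cr` of crossing i-sets. -/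
def KsetC (W : Finset V) (cr : Finset (Finset V)) (j i : ℕ) (B : Finset (Finset V)) :
    Finset (Finset V) :=
  if j = 1 then cr.filter fun S => ∀ v ∈ S, ({v} : Finset V) ∈ B
  else Kset W j i B

/-- `A` (a (j+1)-graph) is (ε,d)-regular with respect to the j-graph `B` (plain clique sets). -/
def RegPair (W : Finset V) (j : ℕ) (ε d : ℝ) (A B : Finset (Finset V)) : Prop :=
  ∀ Q ⊆ B, ε * ((Kset W j (j+1) B).card : ℝ) ≤ ((Kset W j (j+1) Q).card : ℝ) →
    |((A ∩ Kset W j (j+1) Q).card : ℝ) - d * ((Kset W j (j+1) Q).card : ℝ)|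
      ≤ ε * ((Kset W j (j+1) Q).card : ℝ)

/-- (ε,d)-regularity with crossing-aware clique sets. -/
def RegPairC (W : Finset V) (cr : Finset (Finset V)) (j : ℕ) (ε d : ℝ)
    (A B : Finset (Finset V)) : Prop :=
  ∀ Q ⊆ B, ε * ((KsetC W cr j (j+1) B).card : ℝ) ≤ ((KsetC W cr j (j+1) Q).card : ℝ) →
    |((A ∩ KsetC W cr j (j+1) Q).card : ℝ) - d * ((KsetC W cr j (j+1) Q).card : ℝ)|
      ≤ ε * ((KsetC W cr j (j+1) Q).card : ℝ)

/-- Relative density `d(A | B)` of the (j+1)-graph `A` w.r.t. the j-graph `B`. -/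
def dens (W : Finset V) (cr : Finset (Finset V)) (j : ℕ) (A B : Finset (Finset V)) : ℝ :=
  if (KsetC W cr j (j+1) B).card = 0 then 0
  else ((A ∩ KsetC W cr j (j+1) B).card : ℝ) / ((KsetC W cr j (j+1) B).card : ℝ)

/-- `H` is a k-graph on the vertex set `W`. -/
def IsKGraph (W : Finset V) (k : ℕ) (H : Finset (Finset V)) : Prop :=
  ∀ e ∈ H, e ⊆ W ∧ e.card = k

/-- symmetric difference of two hypergraphs -/
def sd (A B : Finset (Finset V)) : Finset (Finset V) := (A \ B) ∪ (B \ A)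

/-- A (candidate) family of partitions: the ground set, the class of each vertex and,
for each level `j ≥ 2`, the class of each crossing j-set. -/
structure PartFam (V : Type*) [DecidableEq V] where
  gnd : Finset V
  vClass : V → Finset V
  cls : ℕ → Finset V → Finset (Finset V)

namespace PartFam

variable (F : PartFam V)

/-- crossing i-sets -/
def cross (i : ℕ) : Finset (Finset V) :=
  (F.gnd.powersetCard i).filter fun S =>
    ∀ u ∈ S, ∀ v ∈ S, u ≠ v → F.vClass u ≠ F.vClass v

/-- the level-j polyad of a vertex set `J` -/
def polyad (j : ℕ) (J : Finset V) : Finset (Finset V) :=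
  if j = 1 then sing (J.sup F.vClass) else (J.powersetCard j).sup (F.cls j)

/-- the clique set `K_j(P̂^{(j-1)}(J))` of the (j−1)-polyad of a crossing j-set `J` -/
def polyCliques (j : ℕ) (J : Finset V) : Finset (Finset V) :=
  KsetC F.gnd (F.cross j) (j-1) j (F.polyad (j-1) J)

/-- `F` is a family of partitions `P(k−1, a)`. -/
def IsFamily (k : ℕ) (a : ℕ → ℕ) : Prop :=
  (∀ v ∈ F.gnd, v ∈ F.vClass v) ∧
  (∀ v ∈ F.gnd, F.vClass v ⊆ F.gnd) ∧
  (∀ u ∈ F.gnd, ∀ v ∈ F.gnd, u ∈ F.vClass v → F.vClass u = F.vClass v) ∧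
  (F.gnd.image F.vClass).card = a 1 ∧ k ≤ a 1 ∧
  ∀ j, 2 ≤ j → j ≤ k - 1 →
    (∀ J ∈ F.cross j, J ∈ F.cls j J) ∧
    (∀ J ∈ F.cross j, ∀ I ∈ F.cls j J, F.cls j I = F.cls j J) ∧
    (∀ J ∈ F.cross j, F.cls j J ⊆ F.polyCliques j J) ∧
    (∀ J ∈ F.cross j, F.polyCliques j J ⊆ F.cross j) ∧
    (∀ J ∈ F.cross j, ((F.polyCliques j J).image (F.cls j)).card = a j)

/-- the regularity condition in the definition of an equitable family of partitions:
all polyad complexes of crossing k-sets are (ε, (1/a_2, …, 1/a_{k−1}))-regular. -/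
def PolyadReg (k : ℕ) (a : ℕ → ℕ) (ε : ℝ) : Prop :=
  ∀ K ∈ F.cross k, ∀ j, 2 ≤ j → j ≤ k - 1 → ∀ J ∈ K.powersetCard j,
    RegPairC F.gnd (F.cross j) (j-1) ε (1 / (a j : ℝ)) (F.polyad j K) (F.polyad (j-1) J)

/-- `(η, ε, a, λ)`-equitable family of partitions -/
def IsEquitable (k : ℕ) (a : ℕ → ℕ) (η ε lam : ℝ) : Prop :=
  1 ≤ η * (a 1 : ℝ) ∧
  (∀ v ∈ F.gnd, |((F.vClass v).card : ℝ) - (F.gnd.card : ℝ) / (a 1 : ℝ)|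
      ≤ lam * (F.gnd.card : ℝ) / (a 1 : ℝ)) ∧
  F.PolyadReg k a ε

/-- `(η, ε, a)`-equitable family of partitions (classes of size ⌊n/a₁⌋ or ⌊n/a₁⌋+1) -/
def IsEquitableE (k : ℕ) (a : ℕ → ℕ) (η ε : ℝ) : Prop :=
  1 ≤ η * (a 1 : ℝ) ∧
  (∀ v ∈ F.gnd, (F.vClass v).card = F.gnd.card / a 1 ∨
      (F.vClass v).card = F.gnd.card / a 1 + 1) ∧
  F.PolyadReg k a ε

/-- `G` is perfectly ε-regular with respect to `F`. -/
def PerfectlyRegular (k : ℕ) (ε : ℝ) (G : Finset (Finset V)) : Prop :=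
  ∀ K ∈ F.cross k, ∃ d : ℝ, 0 ≤ d ∧
    RegPairC F.gnd (F.cross k) (k-1) ε d G (F.polyad (k-1) K)

end PartFam

/-- `a` is a T-bounded vector of length k−1. -/
def BoundedVec (k T : ℕ) (a : ℕ → ℕ) : Prop := ∀ j, 1 ≤ j → j ≤ k - 1 → a j ≤ T

/-- level-j refinement `F^{(j)} ≺ P^{(j)}` between two families of partitions -/
def RefinesAt (F P : PartFam V) (j : ℕ) : Prop :=
  if j = 1 then ∀ v ∈ F.gnd, F.vClass v ⊆ P.vClass v
  else ∀ I ∈ F.cross j,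
    (∃ J ∈ P.cross j, F.cls j I ⊆ P.cls j J) ∨ ∀ S ∈ F.cls j I, S ∉ P.cross j

/-- level-j approximate refinement `F^{(j)} ≺_ν P^{(j)}` -/
def RefinesApproxAt (F P : PartFam V) (j : ℕ) (ν : ℝ) : Prop :=
  if j = 1 then
    ∃ f : Finset V → Finset V,
      (∀ v ∈ F.gnd, f (F.vClass v) ∈ F.gnd.image P.vClass) ∧
      ∑ C ∈ F.gnd.image F.vClass, ((C \ f C).card : ℝ) ≤ ν * (F.gnd.card : ℝ)
  else
    ∃ f : Finset (Finset V) → Finset (Finset V),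
      (∀ I ∈ F.cross j,
        f (F.cls j I) ∈ ((P.cross j).image (P.cls j)) ∪ {F.cross j \ P.cross j}) ∧
      ∑ C ∈ (F.cross j).image (F.cls j), ((C \ f C).card : ℝ) ≤ ν * ((F.cross j).card : ℝ)

/-- The address space: a base set (of class indices) together with a labelling of its subsets. -/
abbrev Addr := Finset ℕ × (Finset ℕ → ℕ)

/-- `x` is an element of the address space `Â(l, j, a)`. -/
def IsAddress (l j : ℕ) (a : ℕ → ℕ) (x : Addr) : Prop :=
  x.1.card = l ∧ (∀ i ∈ x.1, 1 ≤ i ∧ i ≤ a 1) ∧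
  (∀ L : Finset ℕ, L ⊆ x.1 → 2 ≤ L.card → L.card ≤ j → 1 ≤ x.2 L ∧ x.2 L ≤ a L.card) ∧
  (∀ L : Finset ℕ, ¬(L ⊆ x.1 ∧ 2 ≤ L.card ∧ L.card ≤ j) → x.2 L = 0)

/-- restriction `ŷ ≤ x̂` of an address to the base `B`, keeping levels up to `j`. -/
def restrictA (x : Addr) (j : ℕ) (B : Finset ℕ) : Addr :=
  (B, fun L => if L ⊆ B ∧ 2 ≤ L.card ∧ L.card ≤ j then x.2 L else 0)

/-- `d` is a density function of `Â(k, k−1, a)`. -/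
def DensityFun (k : ℕ) (a : ℕ → ℕ) (d : Addr → ℝ) : Prop :=
  ∀ x : Addr, IsAddress k (k-1) a x → 0 ≤ d x ∧ d x ≤ 1

/-- A family of partitions together with an `a`-labelling. -/
structure LabFam (V : Type*) [DecidableEq V] extends PartFam V where
  vIdx : V → ℕ
  lbl : ℕ → Finset V → ℕ

namespace LabFam

variable (F : LabFam V)

/-- `F` is a family of partitions with a legitimate `a`-labelling. -/
def IsLabeled (k : ℕ) (a : ℕ → ℕ) : Prop :=
  F.toPartFam.IsFamily k a ∧
  (∀ v ∈ F.gnd, 1 ≤ F.vIdx v ∧ F.vIdx v ≤ a 1) ∧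
  (∀ u ∈ F.gnd, ∀ v ∈ F.gnd, (F.vIdx u = F.vIdx v ↔ F.vClass u = F.vClass v)) ∧
  ∀ j, 2 ≤ j → j ≤ k - 1 →
    (∀ I ∈ F.toPartFam.cross j, 1 ≤ F.lbl j I ∧ F.lbl j I ≤ a j) ∧
    (∀ I ∈ F.toPartFam.cross j, ∀ I' ∈ F.cls j I, F.lbl j I' = F.lbl j I) ∧
    (∀ I ∈ F.toPartFam.cross j, ∀ I' ∈ F.toPartFam.cross j,
      F.toPartFam.polyad (j-1) I = F.toPartFam.polyad (j-1) I' →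
      F.lbl j I = F.lbl j I' → F.cls j I = F.cls j I')

/-- the address `x̂(L)` (up to level j) of a crossing set `L` -/
def addrOf (j : ℕ) (L : Finset V) : Addr :=
  (L.image F.vIdx,
   fun M => if M ⊆ L.image F.vIdx ∧ 2 ≤ M.card ∧ M.card ≤ j
     then F.lbl M.card (L.filter fun v => F.vIdx v ∈ M) else 0)

/-- the part `P^{(j)}(x̂, b)` -/
def partAt (j : ℕ) (x : Addr) (b : ℕ) : Finset (Finset V) :=
  if j ≤ 1 then (if x.1 = {b} then sing (F.gnd.filter fun v => F.vIdx v = b) else ∅)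
  else (F.toPartFam.cross j).filter fun I => F.addrOf (j-1) I = x ∧ F.lbl j I = b

/-- the polyad `P̂^{(j)}(x̂)` -/
def polyAt (j : ℕ) (x : Addr) : Finset (Finset V) :=
  if j = 1 then sing (F.gnd.filter fun v => F.vIdx v ∈ x.1)
  else (x.1.powersetCard j).sup fun B => F.partAt j (restrictA x (j-1) B) (x.2 B)

/-- `F` is an `(ε, d)`-partition of `H`. -/
def IsDensPartition (k : ℕ) (a : ℕ → ℕ) (ε : ℝ) (d : Addr → ℝ)
    (H : Finset (Finset V)) : Prop :=
  ∀ x : Addr, IsAddress k (k-1) a x →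
    RegPairC F.gnd (F.toPartFam.cross k) (k-1) ε (d x) H (F.polyAt (k-1) x)

/-- `F` is an `(ε, a, d)`-equitable partition of `H`. -/
def IsEquitPartition (k : ℕ) (a : ℕ → ℕ) (ε : ℝ) (d : Addr → ℝ)
    (H : Finset (Finset V)) : Prop :=
  F.IsLabeled k a ∧ F.toPartFam.IsEquitableE k a (1 / (a 1 : ℝ)) ε ∧
  F.IsDensPartition k a ε d H

end LabFam

/-- An ℓ-partite complex: vertex classes and, for each level, a partite graph. -/
structure Cx (V : Type*) [DecidableEq V] (l : ℕ) where
  C : Fin l → Finset V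
  G : ℕ → Finset (Finset V)

namespace Cx

variable {l : ℕ} (X : Cx V l)

def gnd : Finset V := Finset.univ.sup X.C

/-- crossing i-sets with respect to the classes of `X` -/
def cross (i : ℕ) : Finset (Finset V) :=
  (X.gnd.powersetCard i).filter fun S => ∀ t : Fin l, (S ∩ X.C t).card ≤ 1

/-- restriction of the level-j graph to the classes indexed by `L` -/
def restr (j : ℕ) (L : Finset (Fin l)) : Finset (Finset V) :=
  if j = 1 then sing (L.sup X.C) else (X.G j).filter fun e => e ⊆ L.sup X.C

/-- `X` is a complex with levels up to `k`. -/
def IsComplex (k : ℕ) : Prop :=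
  (∀ s t : Fin l, s ≠ t → Disjoint (X.C s) (X.C t)) ∧
  (∀ j, 2 ≤ j → j ≤ k → X.G j ⊆ X.cross j) ∧
  (∀ j, 3 ≤ j → j ≤ k → X.G j ⊆ Kset X.gnd (j-1) j (X.G (j-1)))

/-- `X` is an (ε, (d_2, …, d_k))-regular complex. -/
def IsRegular (k : ℕ) (ε : ℝ) (d : ℕ → ℝ) : Prop :=
  ∀ j, 2 ≤ j → j ≤ k → ∀ L ∈ (Finset.univ : Finset (Fin l)).powersetCard j,
    RegPairC X.gnd (X.cross j) (j-1) ε (d j) (X.G j) (X.restr (j-1) L)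

/-- The restricted complex `X[L]` is (ε, (d_2, …, d_{k−1}, p))-regular. -/
def RestrRegular (k : ℕ) (ε : ℝ) (d : ℕ → ℝ) (L : Finset (Fin l)) (p : ℝ) : Prop :=
  ∀ j, 2 ≤ j → j ≤ k → ∀ L' ∈ L.powersetCard j,
    RegPairC X.gnd (X.cross j) (j-1) ε (if j = k then p else d j)
      (X.restr j L) (X.restr (j-1) L')

/-- clique set `K_i` of the level-j graph of the complex (level 1: crossing sets). -/
def KsetLvl (j i : ℕ) : Finset (Finset V) :=
  if j ≤ 1 then X.cross i else Kset X.gnd j i (X.G j)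

end Cx

/-- `eCL`, `mCL` satisfy the counting lemma of Kohayakawa–Rödl–Skokan. -/
def CountingProp (eCL : ℝ → ℝ → ℕ → ℕ → ℝ) (mCL : ℝ → ℝ → ℕ → ℕ → ℕ) : Prop :=
  ∀ γ d₀ : ℝ, 0 < γ → 0 < d₀ → ∀ k l : ℕ, 2 ≤ k → k ≤ l →
    (0 < eCL γ d₀ k l ∧ eCL γ d₀ k l ≤ 1) ∧
    ∀ (V₀ : Type) [DecidableEq V₀], ∀ (X : Cx V₀ l) (m : ℕ) (lam ε : ℝ) (d : ℕ → ℝ),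
      0 ≤ lam → lam < 1/4 → 0 < ε → ε ≤ eCL γ d₀ k l → mCL γ d₀ k l ≤ m →
      (∀ j, 2 ≤ j → j ≤ k → d₀ ≤ d j) →
      X.IsComplex k →
      (∀ i, |((X.C i).card : ℝ) - (m : ℝ)| ≤ lam * m) →
      X.IsRegular k ε d →
      |((Kset X.gnd k l (X.G k)).card : ℝ) -
        (∏ j ∈ Finset.Icc 2 k, d j ^ (l.choose j)) * ∏ i, ((X.C i).card : ℝ)|
        ≤ γ * ((∏ j ∈ Finset.Icc 2 k, d j ^ (l.choose j)) * ∏ i, ((X.C i).card : ℝ))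

/-- `eRI` is a legitimate function for defining regularity instances. -/
def GoodERI (eRI : ℕ → ℕ → ℝ) : Prop :=
  (∀ t k : ℕ, 1 ≤ t → 2 ≤ k → 0 < eRI t k ∧ eRI t k ≤ 1) ∧
  (∀ k t t' : ℕ, 1 ≤ t → t ≤ t' → eRI t' k ≤ eRI t k) ∧
  (∀ t k k' : ℕ, 2 ≤ k → k ≤ k' → eRI t k' ≤ eRI t k) ∧
  (∀ k : ℕ, Filter.Tendsto (fun t => eRI t k) Filter.atTop (nhds 0)) ∧
  ∃ (eCL : ℝ → ℝ → ℕ → ℕ → ℝ) (mCL : ℝ → ℝ → ℕ → ℕ → ℕ),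
    CountingProp eCL mCL ∧
    ∀ t k : ℕ, 1 ≤ t → 2 ≤ k →
      eRI t k < eCL (1/(t:ℝ)) (1/(t:ℝ)) (k-1) k / (4 * (t:ℝ) ^ (4^k))

/-- `max_i a_i` over `i ∈ [k−1]` -/
def maxA (k : ℕ) (a : ℕ → ℕ) : ℕ := (Finset.Icc 1 (k-1)).sup a

/-- `(ε, a, d)` is a regularity instance. -/
def RegInstance (eRI : ℕ → ℕ → ℝ) (k : ℕ) (ε : ℝ) (a : ℕ → ℕ) (d : Addr → ℝ) : Prop :=
  2 ≤ k ∧ (∀ j, 1 ≤ j → j ≤ k - 1 → 1 ≤ a j) ∧ 0 < ε ∧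
  ε ≤ eRI (maxA k a) k ∧ DensityFun k a d

section Counting

variable {W : Type} [Fintype W] [DecidableEq W]

/-- `S` spans an induced copy of `Fg` in `H` (both k-graphs). -/
def InducedCopy (Fg : Finset (Finset W)) (H : Finset (Finset V)) (k : ℕ) (S : Finset V) :
    Prop :=
  ∃ e : W → V, Function.Injective e ∧ Finset.univ.image e = S ∧
    ∀ A : Finset W, A.card = k → (A.image e ∈ H ↔ A ∈ Fg)

/-- the size of the automorphism group of `Fg` -/
def AutCount (Fg : Finset (Finset W)) : ℕ :=
  Nat.card {π : W ≃ W // ∀ A : Finset W, A.image π ∈ Fg ↔ A ∈ Fg}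

/-- the number `IC_σ(F, H)` of σ-induced copies of `Fg` in the complex `X` -/
def ICosig {l : ℕ} (X : Cx V l) (k : ℕ) (Fg : Finset (Finset W)) (σ : W ≃ Fin l) : ℕ :=
  Set.ncard {e : W → V |
    (∀ v, e v ∈ X.C (σ v)) ∧
    Finset.univ.image e ∈ X.KsetLvl (k-1) l ∧
    ∀ A : Finset W, A.card = k → (A.image e ∈ X.G k ↔ A ∈ Fg)}

/-- `IC(F, d, x̂, σ)` -/
def ICs (Fg : Finset (Finset W)) (k l : ℕ) (a : ℕ → ℕ) (d : Addr → ℝ)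
    (x : Addr) (σ : W → ℕ) : ℝ :=
  (∏ B ∈ x.1.powersetCard k,
    if ∃ A ∈ Fg, A.image σ = B then d (restrictA x (k-1) B)
    else 1 - d (restrictA x (k-1) B)) *
  ∏ j ∈ Finset.Icc 2 (k-1), ((a j : ℝ) ^ (l.choose j))⁻¹

/-- `IC(F, d, x̂)` -/
def ICa (Fg : Finset (Finset W)) (k l : ℕ) (a : ℕ → ℕ) (d : Addr → ℝ) (x : Addr) : ℝ :=
  (AutCount Fg : ℝ)⁻¹ *
    ∑ᶠ σ ∈ {σ : W → ℕ | Set.BijOn σ Set.univ ↑x.1}, ICs Fg k l a d x σ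

/-- `IC(F, d)` -/
def IC (Fg : Finset (Finset W)) (k l : ℕ) (a : ℕ → ℕ) (d : Addr → ℝ) : ℝ :=
  (((a 1).choose l : ℝ))⁻¹ * ∑ᶠ x ∈ {x : Addr | IsAddress l (k-1) a x}, ICa Fg k l a d x

end Counting

end

end HypReg

namespace HypReg

open Finset
open scoped BigOperators

section Transversal

set_option linter.unusedSectionVars false

/-- The real-valued indicator of a proposition. -/
noncomputable def ind (p : Prop) : ℝ := open Classical in if p then 1 else 0

lemma ind_true {p : Prop} (h : p) : ind p = 1 := by simp [ind, h]

lemma ind_false {p : Prop} (h : ¬p) : ind p = 0 := by simp [ind, h]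

lemma ind_nonneg (p : Prop) : 0 ≤ ind p := by
  by_cases h : p <;> simp [ind, h]

lemma ind_le_one (p : Prop) : ind p ≤ 1 := by
  by_cases h : p <;> simp [ind, h]

lemma ind_and (p q : Prop) : ind (p ∧ q) = ind p * ind q := by
  by_cases h : p <;> by_cases h' : q <;> simp [ind, h, h']

lemma ind_congr {p q : Prop} (h : p ↔ q) : ind p = ind q := by rw [propext h]

lemma ind_forall_mem {α : Type*} (s : Finset α) (p : α → Prop) :
    ind (∀ i ∈ s, p i) = ∏ i ∈ s, ind (p i) := by
  classical
  induction s using Finset.induction_on with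
  | empty => simp [ind]
  | insert a s ha ih =>
    rw [prod_insert ha, ← ih, ← ind_and]
    exact ind_congr (by simp)

lemma sum_ind_eq {α : Type*} [Fintype α] (a : α) : ∑ b, ind (a = b) = 1 := by
  classical
  simp [ind]

lemma sum_ind_mul {α : Type*} [Fintype α] (a : α) (f : α → ℝ) :
    ∑ b, ind (a = b) * f b = f a := by
  classical
  simp [ind]

variable {ι : Type} [Fintype ι] [DecidableEq ι] {V : ι → Type} [∀ i, Fintype (V i)]

lemma piecewise_dependsOn (B : Finset ι) (y : ∀ i, V i) :
    DependsOn (fun x : ∀ i, V i => B.piecewise x y) B := by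
  intro x x' h
  funext i
  by_cases hi : i ∈ B
  · simpa [hi] using h i hi
  · simp [hi]

lemma dependsOn_comp_piecewise {β : Type*} {S : Set ι} {g : (∀ i, V i) → β}
    (hg : DependsOn g S) (B : Finset ι) (y : ∀ i, V i) :
    DependsOn (fun x => g (B.piecewise x y)) (B ∩ S) := by
  intro x x' h
  refine hg fun i hi => ?_
  by_cases hB : i ∈ B
  · simpa [hB] using h i ⟨hB, hi⟩
  · simp [hB]

lemma apply_piecewise_of_dependsOn {β : Type*} {B : Finset ι} {g : (∀ i, V i) → β}
    (hg : DependsOn g B) (x y : ∀ i, V i) : g (B.piecewise x y) = g x :=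
  hg fun i hi => by simp [show i ∈ B from hi]

variable [∀ i, Nonempty (V i)]

lemma abs_expect_le_of_abs_le {α : Type*} [Fintype α] [Nonempty α] {f : α → ℝ} {c : ℝ}
    (h : ∀ x, |f x| ≤ c) : |𝔼 x, f x| ≤ c := by
  refine abs_le.2 ⟨?_, ?_⟩
  · calc -c = 𝔼 _x : α, -c := (Fintype.expect_const _).symm
      _ ≤ _ := expect_le_expect fun x _ => (abs_le.1 (h x)).1
  · calc 𝔼 x, f x ≤ 𝔼 _x : α, c := expect_le_expect fun x _ => (abs_le.1 (h x)).2
      _ = c := Fintype.expect_const _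

lemma expect_piecewise (B : Finset ι) (g : (∀ i, V i) → ℝ) :
    𝔼 y, 𝔼 x, g (B.piecewise x y) = 𝔼 x, g x := by
  classical
  have hsw : Function.Involutive
      (fun p : (∀ i, V i) × (∀ i, V i) => (B.piecewise p.1 p.2, B.piecewise p.2 p.1)) := by
    rintro ⟨x, y⟩
    ext i <;> by_cases hi : i ∈ B <;> simp [hi]
  calc 𝔼 y, 𝔼 x, g (B.piecewise x y)
      = 𝔼 p : (∀ i, V i) × (∀ i, V i), g (B.piecewise p.1 p.2) := by
        rw [expect_comm, ← univ_product_univ, expect_product]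
    _ = 𝔼 p : (∀ i, V i) × (∀ i, V i), g p.1 :=
        Fintype.expect_equiv hsw.toPerm _ _ fun p => rfl
    _ = 𝔼 x, g x := by
        rw [← univ_product_univ, expect_product]
        simp

lemma abs_expect_mul_le_of_indicator {S : Finset ι} {h u : (∀ i, V i) → ℝ} {c : ℝ}
    (hu : DependsOn u S) (hu0 : ∀ x, 0 ≤ u x) (hu1 : ∀ x, u x ≤ 1)
    (hc : ∀ A : (∀ i, V i) → Prop, DependsOn A S → |𝔼 x, h x * ind (A x)| ≤ c) :
    |𝔼 x, h x * u x| ≤ c := by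
  set hb : (∀ i, V i) → ℝ := fun x => 𝔼 y, h (S.piecewise x y) with hbdef
  have hbS : DependsOn hb S := by
    intro x x' hx
    simp only [hbdef]
    exact expect_congr rfl fun y _ => congrArg h (piecewise_dependsOn S y hx)
  have key : ∀ v : (∀ i, V i) → ℝ, DependsOn v S → 𝔼 x, h x * v x = 𝔼 x, hb x * v x := by
    intro v hv
    rw [← expect_piecewise S (fun x => h x * v x), expect_comm]
    refine expect_congr rfl fun x _ => ?_
    rw [hbdef, expect_mul]
    exact expect_congr rfl fun y _ => by rw [apply_piecewise_of_dependsOn hv]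
  have hdep : ∀ q : ℝ → Prop, DependsOn (fun x => ind (q (hb x))) (S : Set ι) :=
    fun q x x' hx => by simp only [hbS hx]
  have hdep' : ∀ q : ℝ → Prop, DependsOn (fun x => q (hb x)) (S : Set ι) :=
    fun q x x' hx => by simp only [hbS hx]
  rw [key u hu, abs_le]
  have h1 := hc (fun x => 0 < hb x) (hdep' fun t => 0 < t)
  have h2 := hc (fun x => hb x < 0) (hdep' fun t => t < 0)
  rw [key (fun x => ind (0 < hb x)) (hdep fun t => 0 < t)] at h1
  rw [key (fun x => ind (hb x < 0)) (hdep fun t => t < 0)] at h2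
  constructor
  · refine (abs_le.1 h2).1.trans (expect_le_expect fun x _ => ?_)
    by_cases hx : hb x < 0
    · rw [ind_true hx]
      nlinarith [hu1 x]
    · rw [ind_false hx]
      nlinarith [hu0 x]
  · refine le_trans (expect_le_expect fun x _ => ?_) (abs_le.1 h1).2
    by_cases hx : 0 < hb x
    · rw [ind_true hx]
      nlinarith [hu1 x]
    · rw [ind_false hx]
      nlinarith [hu0 x]

/-- `h` correlates by at most `c` with every product of indicators, indexed by `i ∈ B`, where the
`i`-th one depends only on the coordinates in `B \ {i}`. -/
def CutLE (B : Finset ι) (h : (∀ i, V i) → ℝ) (c : ℝ) : Prop :=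
  ∀ u : ι → (∀ i, V i) → Prop, (∀ i ∈ B, DependsOn (u i) (B.erase i)) →
    |𝔼 x, h x * ind (∀ i ∈ B, u i x)| ≤ c

lemma CutLE.real {B : Finset ι} {h : (∀ i, V i) → ℝ} {c : ℝ} (hc : CutLE B h c)
    (v : ι → (∀ i, V i) → ℝ) (hv : ∀ i ∈ B, DependsOn (v i) (B.erase i))
    (hv0 : ∀ i x, 0 ≤ v i x) (hv1 : ∀ i x, v i x ≤ 1) :
    |𝔼 x, h x * ∏ i ∈ B, v i x| ≤ c := by
  have main : ∀ T ⊆ B, ∀ v : ι → (∀ i, V i) → ℝ, (∀ i ∈ B, DependsOn (v i) (B.erase i)) →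
      (∀ i x, 0 ≤ v i x) → (∀ i x, v i x ≤ 1) →
      (∀ i ∈ B, i ∉ T → ∀ x, v i x = ind (v i x = 1)) →
      |𝔼 x, h x * ∏ i ∈ B, v i x| ≤ c := by
    intro T
    induction T using Finset.induction_on with
    | empty =>
      intro _ v hv _ _ h01
      convert hc (fun i x => v i x = 1) (fun i hi x y hxy => by simp only [hv i hi hxy]) using 4 with x
      rw [ind_forall_mem]
      exact prod_congr rfl fun i hi => h01 i hi (by simp) x
    | insert a T ha ih =>
      intro hT v hv hv0 hv1 h01
      have haB : a ∈ B := hT (by simp)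
      have hsplit : ∀ x, h x * ∏ i ∈ B, v i x = (h x * ∏ i ∈ B.erase a, v i x) * v a x := by
        intro x
        rw [← mul_prod_erase B _ haB]
        ring
      simp only [hsplit]
      refine abs_expect_mul_le_of_indicator (hv a haB) (hv0 a) (hv1 a) fun A hA => ?_
      have := ih (fun i hi => hT (by simp [hi]))
        (Function.update v a fun x => ind (A x)) ?_ ?_ ?_ ?_
      · convert this using 3 with x
        rw [← mul_prod_erase B _ haB, Function.update_self, mul_assoc,
          mul_comm (∏ i ∈ B.erase a, v i x)]
        congr 2
        refine prod_congr rfl fun i hi => ?_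
        rw [Function.update_of_ne (ne_of_mem_erase hi)]
      · intro i hi
        by_cases hia : i = a
        · subst hia
          rw [Function.update_self]
          exact fun x y hxy => by simp only [hA hxy]
        · rw [Function.update_of_ne hia]
          exact hv i hi
      · intro i x
        by_cases hia : i = a
        · subst hia
          simpa using ind_nonneg _
        · rw [Function.update_of_ne hia]
          exact hv0 i x
      · intro i x
        by_cases hia : i = a
        · subst hia
          simpa using ind_le_one _
        · rw [Function.update_of_ne hia]
          exact hv1 i x
      · intro i hi hiT x
        by_cases hia : i = a
        · subst hia
          rw [Function.update_self]
          by_cases hAx : A x <;> simp [ind, hAx]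
        · rw [Function.update_of_ne hia]
          exact h01 i hi (by simp [hia, hiT]) x
  exact main B subset_rfl v hv hv0 hv1 fun i hi hi' => absurd hi hi'

lemma CutLE.mono {B : Finset ι} {h : (∀ i, V i) → ℝ} {c c' : ℝ} (hc : CutLE B h c)
    (hcc : c ≤ c') : CutLE B h c' := fun u hu => (hc u hu).trans hcc

lemma CutLE.add {B : Finset ι} {h h' : (∀ i, V i) → ℝ} {c c' : ℝ} (hc : CutLE B h c)
    (hc' : CutLE B h' c') : CutLE B (fun x => h x + h' x) (c + c') := by
  intro u hu
  simp only [add_mul, expect_add_distrib]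
  exact (abs_add_le _ _).trans (add_le_add (hc u hu) (hc' u hu))

lemma CutLE.sum {α : Type*} {B : Finset ι} (s : Finset α) {h : α → (∀ i, V i) → ℝ} {c : ℝ}
    (hc : ∀ a ∈ s, CutLE B (h a) c) : CutLE B (fun x => ∑ a ∈ s, h a x) (#s * c) := by
  intro u hu
  simp only [sum_mul, expect_sum_comm]
  refine (abs_sum_le_sum_abs _ _).trans ((sum_le_sum fun a ha => hc a ha u hu).trans ?_)
  simp

lemma CutLE.const_mul {B : Finset ι} {h : (∀ i, V i) → ℝ} {c t : ℝ} (hc : CutLE B h c)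
    (ht : |t| ≤ 1) : CutLE B (fun x => t * h x) c := by
  intro u hu
  simp only [mul_assoc, ← mul_expect]
  rw [abs_mul]
  have := hc u hu
  exact (mul_le_of_le_one_left (abs_nonneg _) ht).trans this

/-- `g` is a product of `[0,1]`-valued functions indexed by `i ∈ B`, the `i`-th one of which does
not depend on the `i`-th coordinate. -/
def FreeOf (B : Finset ι) (g : (∀ i, V i) → ℝ) : Prop :=
  ∃ u : ι → (∀ i, V i) → ℝ, (∀ i ∈ B, DependsOn (u i) ({i}ᶜ : Set ι)) ∧
    (∀ i x, 0 ≤ u i x) ∧ (∀ i x, u i x ≤ 1) ∧ ∀ x, g x = ∏ i ∈ B, u i x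

lemma FreeOf.one (B : Finset ι) : FreeOf B (fun _ : ∀ i, V i => 1) :=
  ⟨fun _ _ => 1, fun _ _ _ _ _ => rfl, by simp, by simp, by simp⟩

lemma FreeOf.mul {B : Finset ι} {g g' : (∀ i, V i) → ℝ} (hg : FreeOf B g) (hg' : FreeOf B g') :
    FreeOf B (fun x => g x * g' x) := by
  obtain ⟨u, hu, hu0, hu1, h⟩ := hg
  obtain ⟨u', hu', hu0', hu1', h'⟩ := hg'
  refine ⟨fun i x => u i x * u' i x, fun i hi x y hxy => ?_, fun i x => ?_, fun i x => ?_,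
    fun x => ?_⟩
  · simp only [hu i hi hxy, hu' i hi hxy]
  · exact mul_nonneg (hu0 i x) (hu0' i x)
  · exact mul_le_one₀ (hu1 i x) (hu0' i x) (hu1' i x)
  · simp only [h, h', prod_mul_distrib]

lemma FreeOf.prod {α : Type*} {B : Finset ι} (s : Finset α) {g : α → (∀ i, V i) → ℝ}
    (hg : ∀ a ∈ s, FreeOf B (g a)) : FreeOf B (fun x => ∏ a ∈ s, g a x) := by
  classical
  induction s using Finset.induction_on with
  | empty => simpa using FreeOf.one B
  | insert a s ha ih =>
    simp only [prod_insert ha]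
    exact (hg a (by simp)).mul (ih fun b hb => hg b (by simp [hb]))

lemma FreeOf.of_dependsOn {B S : Finset ι} {g : (∀ i, V i) → ℝ} (hg : DependsOn g S)
    (h0 : ∀ x, 0 ≤ g x) (h1 : ∀ x, g x ≤ 1) (hBS : ¬B ⊆ S) : FreeOf B g := by
  obtain ⟨a, haB, haS⟩ := not_subset.1 hBS
  refine ⟨fun i x => if i = a then g x else 1, fun i _ x y hxy => ?_, fun i x => ?_, fun i x => ?_,
    fun x => ?_⟩
  · by_cases hia : i = a
    · subst hia
      simp only [if_true]
      refine hg fun b hb => hxy b ?_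
      rintro rfl
      exact haS hb
    · simp [hia]
  · dsimp only
    split_ifs
    exacts [h0 x, zero_le_one]
  · dsimp only
    split_ifs
    exacts [h1 x, le_rfl]
  · simp [prod_ite_eq', haB]

lemma CutLE.freeOf {B : Finset ι} {h g : (∀ i, V i) → ℝ} {c : ℝ} (hc : CutLE B h c)
    (hB : DependsOn h B) (hg : FreeOf B g) : |𝔼 x, h x * g x| ≤ c := by
  obtain ⟨u, hu, hu0, hu1, hgu⟩ := hg
  rw [← expect_piecewise B]
  refine abs_expect_le_of_abs_le fun y => ?_
  have := hc.real (fun i x => u i (B.piecewise x y)) (fun i hi => ?_) (fun i x => hu0 i _)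
    (fun i x => hu1 i _)
  · simpa only [hgu, apply_piecewise_of_dependsOn hB] using this
  · refine (dependsOn_comp_piecewise (hu i hi) B y).mono ?_
    intro b hb
    simpa [and_comm] using hb

lemma abs_expect_prod_sub_prod_le {τ : Finset (Finset ι)} {F G : Finset ι → (∀ i, V i) → ℝ}
    {c : ℝ} (hF : ∀ B ∈ τ, DependsOn (F B) B) (hG : ∀ B ∈ τ, DependsOn (G B) B)
    (hF0 : ∀ B x, 0 ≤ F B x) (hF1 : ∀ B x, F B x ≤ 1)
    (hG0 : ∀ B x, 0 ≤ G B x) (hG1 : ∀ B x, G B x ≤ 1)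
    (hcut : ∀ B ∈ τ, CutLE B (fun x => F B x - G B x) c)
    (hanti : ∀ B ∈ τ, ∀ B' ∈ τ, B ≠ B' → ¬B ⊆ B')
    {E : (∀ i, V i) → ℝ} (hE : ∀ B ∈ τ, FreeOf B E) :
    |𝔼 x, E x * ∏ B ∈ τ, F B x - 𝔼 x, E x * ∏ B ∈ τ, G B x| ≤ #τ * c := by
  induction τ using Finset.induction_on generalizing E with
  | empty => simp
  | insert A τ hA ih =>
    have hne : ∀ B ∈ τ, A ≠ B := fun B hB h => hA (h ▸ hB)
    have e1 : 𝔼 x, E x * ∏ B ∈ insert A τ, F B x - 𝔼 x, E x * ∏ B ∈ insert A τ, G B x =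
        𝔼 x, (F A x - G A x) * (E x * ∏ B ∈ τ, F B x) +
        (𝔼 x, (E x * G A x) * ∏ B ∈ τ, F B x - 𝔼 x, (E x * G A x) * ∏ B ∈ τ, G B x) := by
      simp only [← expect_sub_distrib, ← expect_add_distrib, prod_insert hA]
      exact expect_congr rfl fun x _ => by ring
    rw [e1]
    refine (abs_add_le _ _).trans ?_
    have b1 : |𝔼 x, (F A x - G A x) * (E x * ∏ B ∈ τ, F B x)| ≤ c := by
      refine (hcut A (by simp)).freeOf ?_ ?_
      · intro x y hxy
        simp only [hF A (by simp) hxy, hG A (by simp) hxy]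
      · refine (hE A (by simp)).mul (FreeOf.prod τ fun B hB => ?_)
        exact FreeOf.of_dependsOn (hF B (by simp [hB])) (hF0 B) (hF1 B)
          (hanti A (by simp) B (by simp [hB]) (hne B hB))
    have b2 := ih (fun B hB => hF B (by simp [hB])) (fun B hB => hG B (by simp [hB]))
      (fun B hB => hcut B (by simp [hB]))
      (fun B hB B' hB' => hanti B (by simp [hB]) B' (by simp [hB']))
      (E := fun x => E x * G A x)
      (fun B hB => (hE B (by simp [hB])).mul (FreeOf.of_dependsOn (hG A (by simp)) (hG0 A) (hG1 A)
        (hanti B (by simp [hB]) A (by simp) (hne B hB).symm)))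
    rw [card_insert_of_notMem hA]
    push_cast
    linarith

lemma abs_expect_prod_ind_sub_le {L : Type} {l : Finset ι → (∀ i, V i) → L}
    {p : Finset ι → L → ℝ} {c : ℝ} (hl : ∀ B, DependsOn (l B) B)
    (hp0 : ∀ B a, 0 ≤ p B a) (hp1 : ∀ B a, p B a ≤ 1)
    (hcut : ∀ B a, CutLE B (fun x => ind (l B x = a) - p B a) c) (a : Finset ι → L)
    (τ : Finset (Finset ι)) :
    |𝔼 x, ∏ B ∈ τ, ind (l B x = a B) - ∏ B ∈ τ, p B (a B)| ≤ #τ * c := by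
  induction τ using Finset.strongInduction with
  | H τ ih =>
    rcases τ.eq_empty_or_nonempty with rfl | hne
    · simp
    obtain ⟨A, hA, hmax⟩ := τ.exists_maximal hne
    have hdep : ∀ B, DependsOn (fun x => ind (l B x = a B)) (B : Set ι) :=
      fun B x y hxy => by simp only [hl B hxy]
    have h1 := ih (τ.erase A) (erase_ssubset hA)
    have h2 : |𝔼 x, (ind (l A x = a A) - p A (a A)) * ∏ B ∈ τ.erase A, ind (l B x = a B)| ≤ c := by
      refine (hcut A (a A)).freeOf (fun x y hxy => by simp only [hl A hxy]) ?_
      refine FreeOf.prod _ fun B hB => FreeOf.of_dependsOn (hdep B) (fun x => ind_nonneg _)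
        (fun x => ind_le_one _) fun hAB => ?_
      exact ne_of_mem_erase hB (le_antisymm (hmax (mem_of_mem_erase hB) hAB) hAB)
    have e : 𝔼 x, ∏ B ∈ τ, ind (l B x = a B) - ∏ B ∈ τ, p B (a B) =
        𝔼 x, (ind (l A x = a A) - p A (a A)) * ∏ B ∈ τ.erase A, ind (l B x = a B) +
        p A (a A) * (𝔼 x, ∏ B ∈ τ.erase A, ind (l B x = a B) - ∏ B ∈ τ.erase A, p B (a B)) := by
      rw [mul_sub, mul_expect, ← add_sub_assoc, ← expect_add_distrib]
      rw [mul_prod_erase τ (fun B => p B (a B)) hA]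
      congr 1
      refine expect_congr rfl fun x _ => ?_
      rw [← mul_prod_erase τ _ hA]
      ring
    rw [e]
    refine (abs_add_le _ _).trans ?_
    rw [abs_mul, abs_of_nonneg (hp0 _ _)]
    have h3 := mul_le_of_le_one_left (abs_nonneg (𝔼 x, ∏ B ∈ τ.erase A, ind (l B x = a B) -
      ∏ B ∈ τ.erase A, p B (a B))) (hp1 A (a A))
    have hcard : (#(τ.erase A) : ℝ) + 1 = #τ := by
      exact_mod_cast card_erase_add_one hA
    rw [← hcard, add_mul, one_mul]
    linarith

/-- Conditional expectation of `f` with respect to the finite map `Φ`. -/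
noncomputable def ce {X D : Type*} [Fintype X] (Φ : X → D) (f : X → ℝ) (x : X) : ℝ :=
  (∑ y, ind (Φ x = Φ y) * f y) / ∑ y, ind (Φ x = Φ y)

lemma sum_ind_fiber_pos {X D : Type*} [Fintype X] (Φ : X → D) (x : X) :
    0 < ∑ y, ind (Φ x = Φ y) :=
  sum_pos' (fun y _ => ind_nonneg _) ⟨x, mem_univ _, by simp [ind]⟩

lemma ce_congr {X D : Type*} [Fintype X] (Φ : X → D) (f : X → ℝ) {x y : X} (h : Φ x = Φ y) :
    ce Φ f x = ce Φ f y := by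
  simp only [ce, h]

lemma expect_ce_mul {X D : Type*} [Fintype X] (Φ : X → D) (f : X → ℝ) {g : X → ℝ}
    (hg : ∀ x y, Φ x = Φ y → g x = g y) : 𝔼 x, ce Φ f x * g x = 𝔼 x, f x * g x := by
  rw [Fintype.expect_eq_sum_div_card, Fintype.expect_eq_sum_div_card]
  congr 1
  have e1 : ∀ x, ce Φ f x * g x =
      ∑ y, f y * g y * (ind (Φ y = Φ x) / ∑ z, ind (Φ y = Φ z)) := by
    intro x
    rw [ce, div_mul_eq_mul_div, sum_mul, sum_div]
    refine sum_congr rfl fun y _ => ?_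
    by_cases h : Φ x = Φ y
    · rw [ind_true h, ind_true h.symm, h, hg x y h]
      ring
    · rw [ind_false h, ind_false (Ne.symm h)]
      ring
  simp only [e1]
  rw [sum_comm]
  refine sum_congr rfl fun y _ => ?_
  rw [← mul_sum, ← sum_div, div_self (sum_ind_fiber_pos Φ y).ne', mul_one]

lemma abs_expect_mul_sq_le {X : Type*} [Fintype X] [Nonempty X] {d u : X → ℝ}
    (hu : ∀ x, |u x| ≤ 1) : (𝔼 x, d x * u x) ^ 2 ≤ 𝔼 x, d x ^ 2 := by
  set m := 𝔼 x, d x * u x with hm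
  have h : 0 ≤ 𝔼 x, (d x * u x - m) ^ 2 := expect_nonneg fun x _ => sq_nonneg _
  have e : 𝔼 x, (d x * u x - m) ^ 2 = 𝔼 x, (d x * u x) ^ 2 - m ^ 2 := by
    have : ∀ x, (d x * u x - m) ^ 2 = (d x * u x) ^ 2 - 2 * m * (d x * u x) + m ^ 2 :=
      fun x => by ring
    simp only [this, expect_add_distrib, expect_sub_distrib, ← mul_expect, ← hm]
    rw [Fintype.expect_const]
    ring
  have : 𝔼 x, (d x * u x) ^ 2 ≤ 𝔼 x, d x ^ 2 := by
    refine expect_le_expect fun x _ => ?_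
    rw [mul_pow]
    exact mul_le_of_le_one_right (sq_nonneg _) ((sq_le_one_iff_abs_le_one _).2 (hu x))
  linarith

lemma expect_ce_sq_sub {X D D' : Type*} [Fintype X] (Φ : X → D) (Φ' : X → D') (f : X → ℝ)
    (href : ∀ x y, Φ' x = Φ' y → Φ x = Φ y) :
    𝔼 x, (ce Φ' f x - ce Φ f x) ^ 2 = 𝔼 x, ce Φ' f x ^ 2 - 𝔼 x, ce Φ f x ^ 2 := by
  have h1 := expect_ce_mul Φ' f (g := ce Φ f) fun x y h => ce_congr Φ f (href x y h)
  have h2 := expect_ce_mul Φ f (g := ce Φ f) fun x y h => ce_congr Φ f h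
  have : ∀ x, (ce Φ' f x - ce Φ f x) ^ 2 =
      ce Φ' f x ^ 2 - 2 * (ce Φ' f x * ce Φ f x) + ce Φ f x * ce Φ f x := fun x => by ring
  simp only [this, expect_add_distrib, expect_sub_distrib, ← mul_expect, h1, h2]
  simp only [sq, h2]
  ring

lemma expect_sub_ce_mul_sq_le {X D D' : Type*} [Fintype X] [Nonempty X] (Φ : X → D) (Φ' : X → D')
    (f : X → ℝ) (href : ∀ x y, Φ' x = Φ' y → Φ x = Φ y) {u : X → ℝ}
    (hu : ∀ x y, Φ' x = Φ' y → u x = u y) (hu1 : ∀ x, |u x| ≤ 1) :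
    (𝔼 x, (f x - ce Φ f x) * u x) ^ 2 ≤ 𝔼 x, ce Φ' f x ^ 2 - 𝔼 x, ce Φ f x ^ 2 := by
  rw [← expect_ce_sq_sub Φ Φ' f href]
  refine le_trans (le_of_eq ?_) (abs_expect_mul_sq_le (d := fun x => ce Φ' f x - ce Φ f x) hu1)
  simp only [sub_mul, expect_sub_distrib, expect_ce_mul Φ' f hu]

lemma ce_mem_Icc {X D : Type*} [Fintype X] (Φ : X → D) {f : X → ℝ} (h0 : ∀ x, 0 ≤ f x)
    (h1 : ∀ x, f x ≤ 1) (x : X) : 0 ≤ ce Φ f x ∧ ce Φ f x ≤ 1 := by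
  refine ⟨div_nonneg (sum_nonneg fun y _ => mul_nonneg (ind_nonneg _) (h0 y))
    (sum_ind_fiber_pos Φ x).le, (div_le_one (sum_ind_fiber_pos Φ x)).2 ?_⟩
  exact sum_le_sum fun y _ => mul_le_of_le_one_right (ind_nonneg _) (h1 y)

/-- The colours that `θ` gives to the sets `B \ {i}` with `i ∈ B`. -/
def facetPat {C : Type} (B : Finset ι) (θ : Finset ι → Option C) (i : ι) : Option C :=
  if i ∈ B then θ (B.erase i) else none

/-- The colours given to the `j`-sets. -/
def levelPat {C : Type} {X : Type*} (j : ℕ) (ψ : Finset ι → X → C) (x : X) (B : Finset ι) :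
    Option C :=
  if #B = j then some (ψ B x) else none

/-- The colours given to the facets of `B`. -/
def facets {C : Type} {X : Type*} (ψ : Finset ι → X → C) (B : Finset ι) (x : X) : ι → Option C :=
  fun i => if i ∈ B then some (ψ (B.erase i) x) else none

lemma facetPat_levelPat {C : Type} {X : Type*} {j : ℕ} (ψ : Finset ι → X → C) {B : Finset ι}
    (hB : #B = j + 1) (x : X) : facetPat B (levelPat j ψ x) = facets ψ B x := by
  funext i
  by_cases hi : i ∈ B
  · simp [facetPat, facets, levelPat, hi, card_erase_of_mem, hB]
  · simp [facetPat, facets, hi]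

lemma facets_eq_iff {C : Type} {X : Type*} (ψ : Finset ι → X → C) (B : Finset ι) (x y : X) :
    facets ψ B x = facets ψ B y ↔ ∀ i ∈ B, ψ (B.erase i) x = ψ (B.erase i) y := by
  constructor
  · intro h i hi
    simpa [facets, hi] using congrFun h i
  · intro h
    funext i
    by_cases hi : i ∈ B
    · simp [facets, hi, h i hi]
    · simp [facets, hi]

lemma facets_dependsOn {C : Type} {ψ : Finset ι → (∀ i, V i) → C}
    (hψ : ∀ B, DependsOn (ψ B) B) (B : Finset ι) : DependsOn (facets ψ B) B := by
  intro x y h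
  refine (facets_eq_iff ψ B x y).2 fun i _ => hψ _ fun b hb => h b ?_
  exact erase_subset _ _ hb

/-- Weak regularity: finitely many functions can be approximated simultaneously, in the sense of
`CutLE`, by their conditional expectations on a bounded colouring of the facets. -/
lemma exists_facet_coloring (q : ℕ) {δ : ℝ} (hδ : 0 < δ) : ∃ R : ℕ, ∀ (V : ι → Type)
    [∀ i, Fintype (V i)] [∀ i, Nonempty (V i)] (τ : Type) [Fintype τ], Fintype.card τ ≤ q →
    ∀ (B : τ → Finset ι) (f : τ → (∀ i, V i) → ℝ), (∀ t x, 0 ≤ f t x) → (∀ t x, f t x ≤ 1) →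
    ∃ (C : Type) (_ : Fintype C) (ψ : Finset ι → (∀ i, V i) → C), Fintype.card C ≤ R ∧
      (∀ A, DependsOn (ψ A) A) ∧
      ∀ t, CutLE (B t) (fun x => f t x - ce (facets ψ (B t)) (f t) x) δ := by
  obtain ⟨n, hn⟩ := exists_nat_gt (q / δ ^ 2)
  refine ⟨2 ^ n, fun V _ _ τ _ hτ B f hf0 hf1 => ?_⟩
  have main : ∀ s : ℕ, (∃ (C : Type) (_ : Fintype C) (ψ : Finset ι → (∀ i, V i) → C),
      Fintype.card C ≤ 2 ^ s ∧ (∀ A, DependsOn (ψ A) A) ∧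
      ((∀ t, CutLE (B t) (fun x => f t x - ce (facets ψ (B t)) (f t) x) δ) ∨
        s * δ ^ 2 ≤ ∑ t, 𝔼 x, ce (facets ψ (B t)) (f t) x ^ 2)) := by
    intro s
    induction s with
    | zero =>
      refine ⟨Unit, inferInstance, fun _ _ => (), by simp, fun A x y _ => rfl, Or.inr ?_⟩
      simp only [Nat.cast_zero, zero_mul]
      exact sum_nonneg fun t _ => expect_nonneg fun x _ => sq_nonneg _
    | succ s ih =>
      obtain ⟨C, _, ψ, hC, hψ, h⟩ := ih
      by_cases hgood : ∀ t, CutLE (B t) (fun x => f t x - ce (facets ψ (B t)) (f t) x) δ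
      · exact ⟨C, inferInstance, ψ, hC.trans (Nat.pow_le_pow_right (by norm_num) s.le_succ), hψ,
          Or.inl hgood⟩
      have h := h.resolve_left hgood
      simp only [CutLE, not_forall, not_le] at hgood
      obtain ⟨t₀, u, hu, hbig⟩ := hgood
      classical
      let ψ' : Finset ι → (∀ i, V i) → C × Bool := fun A x =>
        (ψ A x, decide (∃ i ∈ B t₀, A = (B t₀).erase i ∧ u i x))
      have hψ' : ∀ A, DependsOn (ψ' A) A := by
        intro A x y hxy
        refine Prod.ext (hψ A hxy) ?_
        simp only [ψ', decide_eq_decide]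
        refine exists_congr fun i => and_congr_right fun hi => and_congr_right fun hA => ?_
        subst hA
        rw [hu i hi hxy]
      have href : ∀ t, ∀ x y, facets ψ' (B t) x = facets ψ' (B t) y →
          facets ψ (B t) x = facets ψ (B t) y := by
        intro t x y hxy
        rw [facets_eq_iff] at hxy ⊢
        exact fun i hi => congrArg Prod.fst (hxy i hi)
      have hue : ∀ i ∈ B t₀, ∀ x, (∃ i' ∈ B t₀, (B t₀).erase i = (B t₀).erase i' ∧ u i' x) ↔
          u i x := by
        intro i hi x
        constructor
        · rintro ⟨i', hi', hii, hux⟩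
          rwa [erase_injOn (B t₀) hi hi' hii]
        · exact fun hux => ⟨i, hi, rfl, hux⟩
      have hmeas : ∀ x y, facets ψ' (B t₀) x = facets ψ' (B t₀) y →
          ind (∀ i ∈ B t₀, u i x) = ind (∀ i ∈ B t₀, u i y) := by
        intro x y hxy
        rw [facets_eq_iff] at hxy
        refine ind_congr (forall₂_congr fun i hi => ?_)
        have := congrArg Prod.snd (hxy i hi)
        simp only [ψ', decide_eq_decide] at this
        rwa [hue i hi, hue i hi] at this
      refine ⟨C × Bool, inferInstance, ψ', ?_, hψ', Or.inr ?_⟩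
      · rw [Fintype.card_prod, Fintype.card_bool, pow_succ]
        exact Nat.mul_le_mul_right 2 hC
      have hmono : ∀ t, 0 ≤ 𝔼 x, ce (facets ψ' (B t)) (f t) x ^ 2 -
          𝔼 x, ce (facets ψ (B t)) (f t) x ^ 2 := by
        intro t
        rw [← expect_ce_sq_sub _ _ _ (href t)]
        exact expect_nonneg fun x _ => sq_nonneg _
      have hinc : δ ^ 2 ≤ 𝔼 x, ce (facets ψ' (B t₀)) (f t₀) x ^ 2 -
          𝔼 x, ce (facets ψ (B t₀)) (f t₀) x ^ 2 := by
        refine le_trans ?_ (expect_sub_ce_mul_sq_le _ _ (f t₀) (href t₀) hmeas fun x => ?_)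
        · rw [← sq_abs (𝔼 x, _)]
          exact pow_le_pow_left₀ hδ.le hbig.le 2
        · rw [abs_of_nonneg (ind_nonneg _)]
          exact ind_le_one _
      have := hinc.trans (single_le_sum (f := fun t => 𝔼 x, ce (facets ψ' (B t)) (f t) x ^ 2 -
        𝔼 x, ce (facets ψ (B t)) (f t) x ^ 2) (fun t _ => hmono t) (mem_univ t₀))
      rw [sum_sub_distrib] at this
      push_cast
      linarith
  obtain ⟨C, _, ψ, hC, hψ, h⟩ := main n
  refine ⟨C, inferInstance, ψ, hC, hψ, h.resolve_right fun hbig => ?_⟩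
  have hle : ∑ t, 𝔼 x, ce (facets ψ (B t)) (f t) x ^ 2 ≤ q := by
    calc ∑ t, 𝔼 x, ce (facets ψ (B t)) (f t) x ^ 2 ≤ ∑ _t : τ, (1 : ℝ) := by
          refine sum_le_sum fun t _ => ?_
          calc 𝔼 x, ce (facets ψ (B t)) (f t) x ^ 2 ≤ 𝔼 _x : ∀ i, V i, (1 : ℝ) := by
                refine expect_le_expect fun x _ => ?_
                have := ce_mem_Icc (facets ψ (B t)) (hf0 t) (hf1 t) x
                exact pow_le_one₀ this.1 this.2
            _ = 1 := Fintype.expect_const _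
      _ ≤ q := by
          simpa using hτ
  rw [div_lt_iff₀ (by positivity)] at hn
  linarith

lemma CutLE.nonneg {B : Finset ι} {h : (∀ i, V i) → ℝ} {c : ℝ} (hc : CutLE B h c) : 0 ≤ c :=
  (abs_nonneg _).trans (hc (fun _ _ => True) fun _ _ _ _ _ => rfl)

lemma CutLE.abs_expect_le {B : Finset ι} {h : (∀ i, V i) → ℝ} {c : ℝ} (hc : CutLE B h c) :
    |𝔼 x, h x| ≤ c := by
  simpa [ind] using hc (fun _ _ => True) fun _ _ _ _ _ => rfl

lemma CutLE.mul_ind_facets {C : Type} {ψ : Finset ι → (∀ i, V i) → C}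
    (hψ : ∀ B, DependsOn (ψ B) B) {B : Finset ι} {h : (∀ i, V i) → ℝ} {c : ℝ} (hc : CutLE B h c)
    (d : ι → Option C) : CutLE B (fun x => h x * ind (facets ψ B x = d)) c := by
  intro u hu
  by_cases hd : ∀ i, i ∉ B → d i = none
  · have hdep : ∀ i ∈ B, DependsOn (fun x => u i x ∧ some (ψ (B.erase i) x) = d i)
        (B.erase i) := fun i hi x y hxy => by
      simp only [hu i hi hxy, hψ _ hxy]
    convert hc (fun i x => u i x ∧ some (ψ (B.erase i) x) = d i) hdep using 3 with x
    · rw [mul_assoc, ← ind_and]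
      congr 1
      refine ind_congr ⟨fun hx i hi => ⟨hx.2 i hi, ?_⟩, fun hx => ⟨?_, fun i hi => (hx i hi).1⟩⟩
      · rw [← hx.1, facets, if_pos hi]
      · funext i
        by_cases hi : i ∈ B
        · rw [facets, if_pos hi, (hx i hi).2]
        · rw [facets, if_neg hi, hd i hi]
  · have : ∀ x, ind (facets ψ B x = d) = 0 := by
      refine fun x => ind_false fun hx => hd fun i hi => ?_
      rw [← hx, facets, if_neg hi]
    simpa [this] using hc.nonneg

lemma CutLE.mul_weight {C : Type} [Fintype C] {ψ : Finset ι → (∀ i, V i) → C}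
    (hψ : ∀ B, DependsOn (ψ B) B) {B : Finset ι} {h : (∀ i, V i) → ℝ} {c : ℝ} (hc : CutLE B h c)
    {w : (ι → Option C) → ℝ} (hw : ∀ d, |w d| ≤ 1) :
    CutLE B (fun x => h x * w (facets ψ B x)) (Fintype.card (ι → Option C) * c) := by
  have := CutLE.sum univ (B := B) (c := c)
    (h := fun d x => w d * (h x * ind (facets ψ B x = d))) fun d _ =>
      (hc.mul_ind_facets hψ d).const_mul (hw d)
  rw [card_univ] at this
  convert this using 2 with x
  have := sum_ind_mul (facets ψ B x) fun d => w d
  rw [← this, mul_sum]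
  exact sum_congr rfl fun d _ => by ring

lemma CutLE.of_ce {C : Type} [Fintype C] {ψ : Finset ι → (∀ i, V i) → C}
    (hψ : ∀ B, DependsOn (ψ B) B) {B : Finset ι} {f l : (∀ i, V i) → ℝ} {δ ε p : ℝ}
    (hl : CutLE B (fun x => l x - p) ε) (hf : CutLE B (fun x => f x - ce (facets ψ B) f x) δ)
    {w : (ι → Option C) → ℝ} (hw0 : ∀ d, 0 ≤ w d) (hw1 : ∀ d, w d ≤ 1)
    (hfw : ∀ x, ce (facets ψ B) f x = w (facets ψ B x) * ce (facets ψ B) l x) :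
    CutLE B (fun x => f x - p * w (facets ψ B x))
      (δ + Fintype.card (ι → Option C) * ε) := by
  have h2 : CutLE B (fun x => (ce (facets ψ B) l x - p) * w (facets ψ B x))
      (Fintype.card (ι → Option C) * ε) := by
    intro u hu
    classical
    let s : (ι → Option C) → ℝ := fun d =>
      if ∃ x, facets ψ B x = d ∧ ce (facets ψ B) l x - p < 0 then -1 else 1
    have hs : ∀ d, |s d| ≤ 1 := by
      intro d
      simp only [s]
      split_ifs <;> simp
    have hsx : ∀ x, (ce (facets ψ B) l x - p) * s (facets ψ B x) =
        |ce (facets ψ B) l x - p| := by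
      intro x
      simp only [s]
      by_cases hx : ce (facets ψ B) l x - p < 0
      · rw [if_pos ⟨x, rfl, hx⟩, abs_of_neg hx]
        ring
      · rw [if_neg, abs_of_nonneg (not_lt.1 hx), mul_one]
        rintro ⟨y, hy, hlt⟩
        rw [ce_congr _ l hy] at hlt
        exact hx hlt
    have h3 := (hl.mul_weight hψ hs).abs_expect_le
    have h4 : 𝔼 x, (l x - p) * s (facets ψ B x) = 𝔼 x, |ce (facets ψ B) l x - p| := by
      simp only [← hsx, sub_mul, expect_sub_distrib]
      rw [expect_ce_mul (facets ψ B) l (g := fun x => s (facets ψ B x))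
        fun x y h => congrArg s h]
    rw [h4] at h3
    refine le_trans ?_ ((le_abs_self _).trans h3)
    refine (Finset.abs_expect_le _ _).trans (expect_le_expect fun x _ => ?_)
    rw [mul_assoc, abs_mul]
    refine mul_le_of_le_one_right (abs_nonneg _) ?_
    rw [abs_of_nonneg (mul_nonneg (hw0 _) (ind_nonneg _))]
    exact mul_le_one₀ (hw1 _) (ind_nonneg _) (ind_le_one _)
  convert hf.add h2 using 2 with x
  rw [hfw]
  ring

section Rounding

variable {K C : Type} [Fintype K] [DecidableEq K] [Fintype C] {W : K → C → ℝ}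

lemma sum_prod_weight_mul_prod_ind (hW : ∀ k, ∑ c, W k c = 1) (S : Finset K) (γ : K → C) :
    ∑ ω : K → C, (∏ k, W k (ω k)) * ∏ k ∈ S, ind (ω k = γ k) = ∏ k ∈ S, W k (γ k) := by
  have e : ∀ ω : K → C, (∏ k, W k (ω k)) * ∏ k ∈ S, ind (ω k = γ k) =
      ∏ k, W k (ω k) * (if k ∈ S then ind (ω k = γ k) else 1) := by
    intro ω
    rw [prod_mul_distrib, prod_ite_mem]
    simp
  simp only [e]
  rw [← Fintype.prod_sum (fun k c => W k c * (if k ∈ S then ind (c = γ k) else 1))]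
  have e2 : ∀ k, ∑ c, W k c * (if k ∈ S then ind (c = γ k) else 1) =
      if k ∈ S then W k (γ k) else 1 := by
    intro k
    by_cases hk : k ∈ S
    · simp only [hk, if_true]
      rw [← sum_ind_mul (γ k) fun c => W k c]
      exact sum_congr rfl fun c _ => by rw [mul_comm, ind_congr (eq_comm (a := c))]
    · simp [hk, hW]
  simp only [e2, prod_ite_mem]
  simp

lemma sum_prod_weight (hW : ∀ k, ∑ c, W k c = 1) : ∑ ω : K → C, ∏ k, W k (ω k) = 1 := by
  rw [← Fintype.prod_sum]
  simp [hW]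

lemma sum_weight_sq_sub_le {X : Type} [Fintype X] [Nonempty X] {Ω : Type} [Fintype Ω]
    {w : Ω → ℝ} (hw0 : ∀ ω, 0 ≤ w ω) (hw1 : ∑ ω, w ω = 1) {Z : X → Ω → ℝ}
    (hZ0 : ∀ x ω, 0 ≤ Z x ω) (hZ1 : ∀ x ω, Z x ω ≤ 1) {M : X → ℝ}
    (hM : ∀ x, ∑ ω, w ω * Z x ω = M x) (bad : X → X → Prop)
    (hind : ∀ x y, ¬bad x y → ∑ ω, w ω * (Z x ω * Z y ω) = M x * M y) :
    ∑ ω, w ω * (𝔼 x, Z x ω - 𝔼 x, M x) ^ 2 ≤ 𝔼 x, 𝔼 y, ind (bad x y) := by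
  have e : ∑ ω, w ω * (𝔼 x, Z x ω - 𝔼 x, M x) ^ 2 =
      𝔼 x, 𝔼 y, (∑ ω, w ω * (Z x ω * Z y ω) - M x * M y) := by
    have hA : ∑ ω, w ω * 𝔼 x, Z x ω = 𝔼 x, M x := by
      simp only [mul_expect, ← expect_sum_comm, hM]
    have hB : ∑ ω, w ω * (𝔼 x, Z x ω) ^ 2 = 𝔼 x, 𝔼 y, ∑ ω, w ω * (Z x ω * Z y ω) := by
      simp only [expect_sum_comm, ← mul_expect, ← expect_mul, sq]
    have hC : 𝔼 x, 𝔼 y, M x * M y = (𝔼 x, M x) ^ 2 := by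
      simp only [← mul_expect, ← expect_mul, sq]
    have e1 : ∀ ω, w ω * (𝔼 x, Z x ω - 𝔼 x, M x) ^ 2 =
        w ω * (𝔼 x, Z x ω) ^ 2 - 2 * (𝔼 x, M x) * (w ω * 𝔼 x, Z x ω) +
          w ω * (𝔼 x, M x) ^ 2 := fun ω => by ring
    simp only [e1, sum_add_distrib, sum_sub_distrib]
    rw [← mul_sum, ← sum_mul, hw1, hA, hB]
    simp only [expect_sub_distrib, hC]
    ring
  rw [e]
  refine expect_le_expect fun x _ => expect_le_expect fun y _ => ?_
  by_cases hb : bad x y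
  · rw [ind_true hb]
    have hM0 : ∀ x, 0 ≤ M x := fun x => by
      rw [← hM]
      exact sum_nonneg fun ω _ => mul_nonneg (hw0 ω) (hZ0 x ω)
    have : ∑ ω, w ω * (Z x ω * Z y ω) ≤ ∑ ω, w ω :=
      sum_le_sum fun ω _ => mul_le_of_le_one_right (hw0 ω)
        (mul_le_one₀ (hZ1 x ω) (hZ0 y ω) (hZ1 y ω))
    rw [hw1] at this
    nlinarith [mul_nonneg (hM0 x) (hM0 y)]
  · rw [ind_false hb, hind x y hb, sub_self]

end Rounding

lemma expect_ind_apply_eq (i : ι) (a : V i) :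
    𝔼 y : ∀ i, V i, ind (a = y i) = 1 / Fintype.card (V i) := by
  have h := Fintype.expect_equiv (Equiv.piSplitAt i V) (fun y => ind (a = y i))
    (fun p => ind (a = p.1)) fun y => rfl
  have : Nonempty (∀ j : {j // j ≠ i}, V j) := inferInstance
  rw [h, ← univ_product_univ, expect_product]
  simp only [Fintype.expect_const]
  rw [Fintype.expect_eq_sum_div_card, sum_ind_eq]

lemma expect_ind_exists_eq_le {N : ℕ} (hN : 0 < N) (hV : ∀ i, N ≤ Fintype.card (V i)) :
    𝔼 x : ∀ i, V i, 𝔼 y : ∀ i, V i, ind (∃ i, x i = y i) ≤ Fintype.card ι / N := by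
  have hN' : (0 : ℝ) < N := by exact_mod_cast hN
  calc 𝔼 x : ∀ i, V i, 𝔼 y : ∀ i, V i, ind (∃ i, x i = y i)
      ≤ 𝔼 x : ∀ i, V i, 𝔼 y : ∀ i, V i, ∑ i, ind (x i = y i) := by
        refine expect_le_expect fun x _ => expect_le_expect fun y _ => ?_
        by_cases h : ∃ i, x i = y i
        · obtain ⟨i, hi⟩ := h
          refine (ind_le_one _).trans ?_
          rw [← ind_true hi]
          exact single_le_sum (f := fun i => ind (x i = y i)) (fun j _ => ind_nonneg _)
            (mem_univ i)
        · rw [ind_false h]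
          exact sum_nonneg fun i _ => ind_nonneg _
    _ = 𝔼 _x : ∀ i, V i, ∑ i, 1 / (Fintype.card (V i) : ℝ) := by
        simp only [expect_sum_comm univ univ, expect_ind_apply_eq]
    _ = ∑ i, 1 / (Fintype.card (V i) : ℝ) := Fintype.expect_const _
    _ ≤ ∑ _i : ι, 1 / (N : ℝ) := by
        refine sum_le_sum fun i _ => one_div_le_one_div_of_le hN' ?_
        exact_mod_cast hV i
    _ = _ := by simp [div_eq_mul_inv]

/-- Random rounding: a family of probability distributions on colours can be replaced by an honest
colouring with almost the same pattern densities. -/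
lemma exists_coloring_of_weights {C : Type} [Fintype C] {N : ℕ} (hN : 0 < N)
    (hV : ∀ i, N ≤ Fintype.card (V i)) {W : Finset ι → (∀ i, V i) → C → ℝ}
    (hW0 : ∀ B x c, 0 ≤ W B x c) (hW1 : ∀ B x, ∑ c, W B x c = 1)
    (hW : ∀ B c, DependsOn (fun x => W B x c) B) {τ : Finset (Finset ι)}
    (hτ : ∀ B ∈ τ, B.Nonempty) {Θ : Type} [Fintype Θ] {g : Θ → (∀ i, V i) → ℝ}
    (hg0 : ∀ t x, 0 ≤ g t x) (hg1 : ∀ t x, g t x ≤ 1) (γ : Θ → Finset ι → C) {δ : ℝ} (hδ : 0 < δ)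
    (hsmall : Fintype.card Θ * (Fintype.card ι / N : ℝ) < δ ^ 2) :
    ∃ χ : Finset ι → (∀ i, V i) → C, (∀ B, DependsOn (χ B) B) ∧
      ∀ t, |𝔼 x, g t x * ∏ B ∈ τ, ind (χ B x = γ t B) - 𝔼 x, g t x * ∏ B ∈ τ, W B x (γ t B)|
        ≤ δ := by
  classical
  obtain ⟨x₀⟩ : Nonempty (∀ i, V i) := inferInstance
  let K := Finset ι × (∀ i, V i)
  let key : (∀ i, V i) → Finset ι → K := fun x B => (B, B.piecewise x x₀)
  have hkey : ∀ x, Function.Injective (key x) := fun x B B' h => congrArg Prod.fst h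
  let w : (K → C) → ℝ := fun ω => ∏ k : K, W k.1 k.2 (ω k)
  have hw0 : ∀ ω, 0 ≤ w ω := fun ω => prod_nonneg fun k _ => hW0 _ _ _
  have hw1 : ∑ ω, w ω = 1 := sum_prod_weight (W := fun k : K => W k.1 k.2) fun k => hW1 _ _
  have hprod : ∀ (S : Finset K) (c : Finset ι → C),
      ∑ ω, w ω * ∏ k ∈ S, ind (ω k = c k.1) = ∏ k ∈ S, W k.1 k.2 (c k.1) := fun S c =>
    sum_prod_weight_mul_prod_ind (W := fun k : K => W k.1 k.2) (fun k => hW1 _ _) S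
      fun k => c k.1
  let Z : Θ → (∀ i, V i) → (K → C) → ℝ := fun t x ω =>
    g t x * ∏ B ∈ τ, ind (ω (key x B) = γ t B)
  have hZS : ∀ t x ω, Z t x ω = g t x * ∏ k ∈ τ.image (key x), ind (ω k = γ t k.1) := by
    intro t x ω
    rw [prod_image (hkey x).injOn]
  have hWS : ∀ t x, ∏ k ∈ τ.image (key x), W k.1 k.2 (γ t k.1) = ∏ B ∈ τ, W B x (γ t B) := by
    intro t x
    rw [prod_image (hkey x).injOn]
    exact prod_congr rfl fun B _ => apply_piecewise_of_dependsOn (hW B (γ t B)) x x₀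
  have hP0 : ∀ t x (ω : K → C), 0 ≤ ∏ B ∈ τ, ind (ω (key x B) = γ t B) := fun t x ω =>
    prod_nonneg fun _ _ => ind_nonneg _
  have hP1 : ∀ t x (ω : K → C), ∏ B ∈ τ, ind (ω (key x B) = γ t B) ≤ 1 := fun t x ω =>
    prod_le_one (fun _ _ => ind_nonneg _) fun _ _ => ind_le_one _
  have hM : ∀ t x, ∑ ω, w ω * Z t x ω = g t x * ∏ B ∈ τ, W B x (γ t B) := by
    intro t x
    rw [← hWS, ← hprod, mul_sum]
    exact sum_congr rfl fun ω _ => by rw [hZS]; ring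
  have hindep : ∀ t x y, (¬∃ i, x i = y i) → ∑ ω, w ω * (Z t x ω * Z t y ω) =
      (g t x * ∏ B ∈ τ, W B x (γ t B)) * (g t y * ∏ B ∈ τ, W B y (γ t B)) := by
    intro t x y hxy
    have hdisj : Disjoint (τ.image (key x)) (τ.image (key y)) := by
      rw [disjoint_left]
      intro k hk hk'
      obtain ⟨B, hB, rfl⟩ := mem_image.1 hk
      obtain ⟨B', hB', h⟩ := mem_image.1 hk'
      obtain rfl : B' = B := congrArg Prod.fst h
      obtain ⟨i, hi⟩ := hτ B' hB'
      have := congrFun (congrArg Prod.snd h) i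
      simp only [key, piecewise_eq_of_mem _ _ _ hi] at this
      exact hxy ⟨i, this.symm⟩
    rw [← hWS, ← hWS]
    have : ∀ a b c d : ℝ, a * b * (c * d) = a * c * (b * d) := fun a b c d => by ring
    rw [this, ← prod_union hdisj, ← hprod, mul_sum]
    refine sum_congr rfl fun ω _ => ?_
    rw [hZS, hZS, prod_union hdisj]
    ring
  have hvar : ∀ t, ∑ ω, w ω * (𝔼 x, Z t x ω - 𝔼 x, g t x * ∏ B ∈ τ, W B x (γ t B)) ^ 2 ≤
      (Fintype.card ι / N : ℝ) := fun t =>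
    (sum_weight_sq_sub_le hw0 hw1 (fun x ω => mul_nonneg (hg0 t x) (hP0 t x ω))
      (fun x ω => mul_le_one₀ (hg1 t x) (hP0 t x ω) (hP1 t x ω)) (hM t) (fun x y => ∃ i, x i = y i)
      (hindep t)).trans (expect_ind_exists_eq_le hN hV)
  have htot : ∑ ω, w ω * ∑ t, (𝔼 x, Z t x ω - 𝔼 x, g t x * ∏ B ∈ τ, W B x (γ t B)) ^ 2 <
      δ ^ 2 := by
    simp only [mul_sum]
    rw [sum_comm]
    refine (sum_le_sum fun t _ => hvar t).trans_lt ?_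
    simpa using hsmall
  obtain ⟨ω, hω⟩ : ∃ ω, ∑ t, (𝔼 x, Z t x ω - 𝔼 x, g t x * ∏ B ∈ τ, W B x (γ t B)) ^ 2 <
      δ ^ 2 := by
    by_contra! hcon
    have : ∑ ω, w ω * δ ^ 2 ≤ _ := sum_le_sum fun ω _ =>
      mul_le_mul_of_nonneg_left (hcon ω) (hw0 ω)
    rw [← sum_mul, hw1, one_mul] at this
    exact absurd htot (not_lt.2 this)
  refine ⟨fun B x => ω (key x B), fun B x y hxy => ?_, fun t => ?_⟩
  · exact congrArg (fun z => ω (B, z)) (piecewise_dependsOn B x₀ hxy)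
  · refine abs_le_of_sq_le_sq ?_ hδ.le
    exact (single_le_sum (f := fun t => (𝔼 x, Z t x ω - 𝔼 x, g t x * ∏ B ∈ τ, W B x (γ t B)) ^ 2)
      (fun t _ => sq_nonneg _) (mem_univ t)).trans hω.le

lemma ce_sum {X D α : Type*} [Fintype X] (Φ : X → D) (s : Finset α) (f : α → X → ℝ) (x : X) :
    ∑ a ∈ s, ce Φ (f a) x = ce Φ (fun y => ∑ a ∈ s, f a y) x := by
  simp only [ce, ← sum_div, mul_sum]
  rw [sum_comm]

lemma exists_weights {X D L C : Type} [Fintype X] [Nonempty X] [Fintype C] (Φ : X → D) (l : X → L)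
    (χ : X → C) : ∃ w : L → C → D → ℝ, (∀ a c d, 0 ≤ w a c d) ∧ (∀ a d, ∑ c, w a c d = 1) ∧
      ∀ a c x, ce Φ (fun y => ind (l y = a) * ind (χ y = c)) x =
        w a c (Φ x) * ce Φ (fun y => ind (l y = a)) x := by
  classical
  obtain ⟨x₀⟩ : Nonempty X := inferInstance
  have h0 : ∀ a c x, 0 ≤ ce Φ (fun y => ind (l y = a) * ind (χ y = c)) x := fun a c x =>
    (ce_mem_Icc Φ (fun y => mul_nonneg (ind_nonneg _) (ind_nonneg _))
      (fun y => mul_le_one₀ (ind_le_one _) (ind_nonneg _) (ind_le_one _)) x).1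
  have h0' : ∀ a x, 0 ≤ ce Φ (fun y => ind (l y = a)) x := fun a x =>
    (ce_mem_Icc Φ (fun y => ind_nonneg _) (fun y => ind_le_one _) x).1
  have hsum : ∀ a x, ∑ c, ce Φ (fun y => ind (l y = a) * ind (χ y = c)) x =
      ce Φ (fun y => ind (l y = a)) x := by
    intro a x
    rw [ce_sum]
    simp only [← mul_sum, sum_ind_eq, mul_one]
  let good : L → D → Prop := fun a d => ∃ x, Φ x = d ∧ ce Φ (fun y => ind (l y = a)) x ≠ 0
  refine ⟨fun a c d => if h : good a d then
    ce Φ (fun y => ind (l y = a) * ind (χ y = c)) h.choose /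
      ce Φ (fun y => ind (l y = a)) h.choose else ind (χ x₀ = c), fun a c d => ?_, fun a d => ?_,
    fun a c x => ?_⟩
  · dsimp only
    split_ifs
    · exact div_nonneg (h0 _ _ _) (h0' _ _)
    · exact ind_nonneg _
  · by_cases h : good a d
    · simp only [dif_pos h]
      rw [← sum_div, hsum, div_self h.choose_spec.2]
    · simp only [dif_neg h]
      exact sum_ind_eq _
  · by_cases h : good a (Φ x)
    · simp only [dif_pos h]
      have := h.choose_spec
      rw [ce_congr Φ _ this.1, ce_congr Φ (fun y => ind (l y = a)) this.1, div_mul_cancel₀]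
      rw [← ce_congr Φ (fun y => ind (l y = a)) this.1]
      exact this.2
    · have hz : ce Φ (fun y => ind (l y = a)) x = 0 := by
        by_contra hne
        exact h ⟨x, rfl, hne⟩
      rw [hz, mul_zero]
      rw [← hsum] at hz
      exact (sum_eq_zero_iff_of_nonneg fun c _ => h0 a c x).1 hz c (mem_univ c)

lemma ind_levelPat_eq {C : Type} [Nonempty C] (j : ℕ) (θ : Finset ι → Option C) :
    (∀ (X : Type) (ψ : Finset ι → X → C) (x : X), ind (levelPat j ψ x = θ) = 0) ∨
    ∃ γ : Finset ι → C, ∀ (X : Type) (ψ : Finset ι → X → C) (x : X),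
      ind (levelPat j ψ x = θ) = ∏ B with #B = j, ind (ψ B x = γ B) := by
  classical
  by_cases h : ∃ γ : Finset ι → C, θ = fun B => if #B = j then some (γ B) else none
  · obtain ⟨γ, rfl⟩ := h
    refine Or.inr ⟨γ, fun X ψ x => ?_⟩
    rw [← ind_forall_mem]
    refine ind_congr ⟨fun h B hB => ?_, fun h => funext fun B => ?_⟩
    · have := congrFun h B
      simpa [levelPat, (mem_filter.1 hB).2] using this
    · by_cases hB : #B = j
      · simp [levelPat, hB, h B (by simp [hB])]
      · simp [levelPat, hB]
  · refine Or.inl fun X ψ x => ind_false fun hx => h ⟨fun B => ψ B x, ?_⟩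
    rw [← hx]
    rfl

/-- The indicator of the event that the labels of the sets of size at most `j` are given by `a` and
the colours of the `j`-sets are given by `γ`. -/
noncomputable def patInd {X L C : Type} (j : ℕ) (l : Finset ι → X → L) (χ : Finset ι → X → C)
    (a : Finset ι → L) (γ : Finset ι → C) (x : X) : ℝ :=
  (∏ B with #B ≤ j, ind (l B x = a B)) * ∏ B with #B = j, ind (χ B x = γ B)

lemma patInd_succ {X L C : Type} (j : ℕ) (l : Finset ι → X → L) (χ : Finset ι → X → C)
    (a : Finset ι → L) (γ : Finset ι → C) (x : X) :
    patInd (j + 1) l χ a γ x = (∏ B with #B ≤ j, ind (l B x = a B)) *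
      ∏ B with #B = j + 1, (ind (l B x = a B) * ind (χ B x = γ B)) := by
  have h : (univ.filter fun B : Finset ι => #B ≤ j + 1) =
      (univ.filter fun B => #B ≤ j) ∪ univ.filter fun B => #B = j + 1 := by
    ext B
    simp only [mem_filter, mem_union, mem_univ, true_and]
    omega
  rw [patInd, h, prod_union, prod_mul_distrib, mul_assoc]
  rw [disjoint_left]
  intro B hB hB'
  simp only [mem_filter, mem_univ, true_and] at hB hB'
  omega

/-- The `j`-sets can be recoloured on another, similarly labelled, vertex set so that the densities
of all colour patterns are approximately kept. -/
def MimicAt (ι L : Type) [Fintype ι] [DecidableEq ι] (j : ℕ) : Prop :=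
  ∀ (R : ℕ) (δ : ℝ), 0 < δ → ∃ ε : ℝ, 0 < ε ∧ ∃ N : ℕ,
    ∀ (V V' : ι → Type) [∀ i, Fintype (V i)] [∀ i, Nonempty (V i)] [∀ i, Fintype (V' i)]
      [∀ i, Nonempty (V' i)] (l : Finset ι → (∀ i, V i) → L) (l' : Finset ι → (∀ i, V' i) → L)
      (p : Finset ι → L → ℝ), (∀ B a, 0 ≤ p B a) → (∀ B a, p B a ≤ 1) →
      (∀ B, DependsOn (l B) B) → (∀ B, DependsOn (l' B) B) →
      (∀ B a, CutLE B (fun x => ind (l B x = a) - p B a) ε) →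
      (∀ B a, CutLE B (fun x => ind (l' B x = a) - p B a) ε) → (∀ i, N ≤ Fintype.card (V' i)) →
      ∀ (C : Type) [Fintype C], Fintype.card C ≤ R →
      ∀ χ : Finset ι → (∀ i, V i) → C, (∀ B, DependsOn (χ B) B) →
      ∃ χ' : Finset ι → (∀ i, V' i) → C, (∀ B, DependsOn (χ' B) B) ∧
        ∀ a γ, |𝔼 x, patInd j l χ a γ x - 𝔼 x, patInd j l' χ' a γ x| ≤ δ

lemma mimicAt_zero {L : Type} : MimicAt ι L 0 := by
  intro R δ hδ
  refine ⟨δ / 2, by positivity, 0, ?_⟩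
  intro V V' _ _ _ _ l l' p hp0 hp1 hl hl' hcut hcut' _ C _ _ χ hχ
  obtain ⟨x₀⟩ : Nonempty (∀ i, V i) := inferInstance
  refine ⟨fun B _ => χ B x₀, fun B x y _ => rfl, fun a γ => ?_⟩
  have hs : (univ.filter fun B : Finset ι => #B = 0) = {∅} := by
    ext B; simp
  have hc : ∀ x, χ ∅ x = χ ∅ x₀ := fun x => hχ ∅ fun i hi => by simp at hi
  simp only [patInd, Nat.le_zero, hs, prod_singleton, hc]
  simp only [← expect_mul]
  rw [← sub_mul, abs_mul, abs_of_nonneg (ind_nonneg (χ ∅ x₀ = γ ∅))]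
  refine (mul_le_of_le_one_right (abs_nonneg _) (ind_le_one _)).trans ?_
  have h1 := (hcut ∅ (a ∅)).abs_expect_le
  have h2 := (hcut' ∅ (a ∅)).abs_expect_le
  rw [expect_sub_distrib, Fintype.expect_const] at h1 h2
  rw [abs_le] at *
  constructor <;> linarith

lemma expect_mul_prod_facets {C : Type} [Fintype C] {j : ℕ} (ψ : Finset ι → (∀ i, V i) → C)
    (E : (∀ i, V i) → ℝ) (F : Finset ι → (ι → Option C) → ℝ) :
    𝔼 x, E x * ∏ B with #B = j + 1, F B (facets ψ B x) =
      ∑ θ : Finset ι → Option C, (𝔼 x, E x * ind (levelPat j ψ x = θ)) *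
        ∏ B with #B = j + 1, F B (facetPat B θ) := by
  simp only [expect_mul, ← expect_sum_comm]
  refine expect_congr rfl fun x _ => ?_
  have := sum_ind_mul (levelPat j ψ x) fun θ =>
    E x * ∏ B with #B = j + 1, F B (facetPat B θ)
  rw [sum_congr rfl fun θ _ => show E x * ind (levelPat j ψ x = θ) *
    ∏ B with #B = j + 1, F B (facetPat B θ) = ind (levelPat j ψ x = θ) *
      (E x * ∏ B with #B = j + 1, F B (facetPat B θ)) by ring, this]
  congr 1
  refine prod_congr rfl fun B hB => ?_
  rw [facetPat_levelPat ψ (mem_filter.1 hB).2]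

lemma freeOf_prod_ind {L : Type} {l : Finset ι → (∀ i, V i) → L} (hl : ∀ B, DependsOn (l B) B)
    (a : Finset ι → L) {j : ℕ} {B : Finset ι} (hB : #B = j + 1) :
    FreeOf B (fun x => ∏ A with #A ≤ j, ind (l A x = a A)) := by
  refine FreeOf.prod _ fun A hA => FreeOf.of_dependsOn (S := A) (fun x y h => ?_)
    (fun x => ind_nonneg _) (fun x => ind_le_one _) fun h => ?_
  · rw [hl A h]
  · have := card_le_card h
    have := (mem_filter.1 hA).2
    omega

lemma abs_expect_patInd_succ_sub_le {L C C' : Type} [Fintype C'] {j : ℕ}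
    {l : Finset ι → (∀ i, V i) → L} {χ : Finset ι → (∀ i, V i) → C}
    (hl : ∀ B, DependsOn (l B) B) (hχ : ∀ B, DependsOn (χ B) B)
    {ψ : Finset ι → (∀ i, V i) → C'} (hψ : ∀ B, DependsOn (ψ B) B) (a : Finset ι → L)
    (γ : Finset ι → C) {P : Finset ι → (ι → Option C') → ℝ} (hP0 : ∀ B d, 0 ≤ P B d)
    (hP1 : ∀ B d, P B d ≤ 1) {c : ℝ}
    (hcut : ∀ B, CutLE B (fun x => ind (l B x = a B) * ind (χ B x = γ B) -
      P B (facets ψ B x)) c) :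
    |𝔼 x, patInd (j + 1) l χ a γ x - 𝔼 x, (∏ B with #B ≤ j, ind (l B x = a B)) *
      ∏ B with #B = j + 1, P B (facets ψ B x)| ≤ #(univ.filter fun B : Finset ι => #B = j + 1) * c := by
  simp only [patInd_succ]
  refine abs_expect_prod_sub_prod_le
    (F := fun B x => ind (l B x = a B) * ind (χ B x = γ B))
    (G := fun B x => P B (facets ψ B x))
    (fun B _ x y h => by simp only [hl B h, hχ B h])
    (fun B _ x y h => by simp only [facets_dependsOn hψ B h])
    (fun B x => mul_nonneg (ind_nonneg _) (ind_nonneg _))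
    (fun B x => mul_le_one₀ (ind_le_one _) (ind_nonneg _) (ind_le_one _))
    (fun B x => hP0 _ _) (fun B x => hP1 _ _) (fun B _ => hcut B)
    (fun B hB B' hB' hne hsub => hne (eq_of_subset_of_card_le hsub ?_))
    fun B hB => freeOf_prod_ind hl a (mem_filter.1 hB).2
  rw [(mem_filter.1 hB).2, (mem_filter.1 hB').2]

lemma abs_sum_pat_sub_le {L C : Type} [Fintype C] [Nonempty C] {V' : ι → Type}
    [∀ i, Fintype (V' i)] [∀ i, Nonempty (V' i)] {j : ℕ} {l : Finset ι → (∀ i, V i) → L}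
    {l' : Finset ι → (∀ i, V' i) → L} {ψ : Finset ι → (∀ i, V i) → C}
    {ψ' : Finset ι → (∀ i, V' i) → C} {a : Finset ι → L} {δ : ℝ} (hδ : 0 ≤ δ)
    (h : ∀ γ, |𝔼 x, patInd j l ψ a γ x - 𝔼 x, patInd j l' ψ' a γ x| ≤ δ)
    {F : Finset ι → (ι → Option C) → ℝ} (hF0 : ∀ B d, 0 ≤ F B d) (hF1 : ∀ B d, F B d ≤ 1) :
    |𝔼 x, (∏ B with #B ≤ j, ind (l B x = a B)) * ∏ B with #B = j + 1, F B (facets ψ B x) -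
      𝔼 x, (∏ B with #B ≤ j, ind (l' B x = a B)) * ∏ B with #B = j + 1, F B (facets ψ' B x)| ≤
      Fintype.card (Finset ι → Option C) * δ := by
  rw [expect_mul_prod_facets, expect_mul_prod_facets, ← sum_sub_distrib]
  refine (abs_sum_le_sum_abs _ _).trans ?_
  refine (sum_le_sum (g := fun _ => δ) fun θ _ => ?_).trans (by simp)
  rw [← sub_mul, abs_mul, abs_of_nonneg (prod_nonneg fun B _ => hF0 _ _)]
  refine (mul_le_of_le_one_right (abs_nonneg _)
    (prod_le_one (fun B _ => hF0 _ _) fun B _ => hF1 _ _)).trans ?_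
  obtain h0 | ⟨γ, hγ⟩ := ind_levelPat_eq j θ
  · simpa [h0] using hδ
  · simp only [hγ]
    exact h γ

lemma MimicAt.succ {L : Type} [Fintype L] {j : ℕ} (hj : MimicAt ι L j) :
    MimicAt ι L (j + 1) := by
  intro R δ hδ
  set nB : ℕ := Fintype.card (Finset ι) with hnB
  set δ₁ : ℝ := δ / (5 * (nB + 1)) with hδ₁
  have hδ₁0 : 0 < δ₁ := by positivity
  obtain ⟨R', hR'⟩ := exists_facet_coloring (ι := ι) (nB * Fintype.card L * R) hδ₁0
  set M : ℕ := (R' + 1) ^ Fintype.card ι with hM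
  set M₂ : ℕ := (R' + 1) ^ nB with hM₂
  obtain ⟨ε', hε', N', hN'⟩ := hj R' (δ / (5 * (M₂ + 1))) (by positivity)
  set T : ℕ := Fintype.card L ^ nB * R ^ nB with hT
  obtain ⟨N, hN⟩ := exists_nat_gt (T * Fintype.card ι / δ₁ ^ 2)
  have hNpos : 0 < N := by
    have : (0 : ℝ) < N := lt_of_le_of_lt (by positivity) hN
    exact_mod_cast this
  refine ⟨min ε' (δ / (5 * ((nB + 1) * (M + 1)))), lt_min hε' (by positivity), max N' N, ?_⟩
  intro V V' _ _ _ _ l l' p hp0 hp1 hl hl' hcut hcut' hcard C _ hC χ hχ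
  have hcC : (Fintype.card C : ℝ) ≤ R := by exact_mod_cast hC
  obtain ⟨C', _, ψ, hC', hψ, hψc⟩ := hR' V (Finset ι × L × C)
    (by simp only [Fintype.card_prod]; rw [← mul_assoc]; gcongr)
    (fun t => t.1) (fun t x => ind (l t.1 x = t.2.1) * ind (χ t.1 x = t.2.2))
    (fun t x => mul_nonneg (ind_nonneg _) (ind_nonneg _))
    (fun t x => mul_le_one₀ (ind_le_one _) (ind_nonneg _) (ind_le_one _))
  obtain ⟨x₀⟩ : Nonempty (∀ i, V i) := inferInstance
  have : Nonempty C' := ⟨ψ ∅ x₀⟩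
  obtain ⟨ψ', hψ', hψψ⟩ := hN' V V' l l' p hp0 hp1 hl hl'
    (fun B a => (hcut B a).mono (min_le_left _ _)) (fun B a => (hcut' B a).mono (min_le_left _ _))
    (fun i => (le_max_left _ _).trans (hcard i)) C' hC' ψ hψ
  have hw := fun B : Finset ι => exists_weights (facets ψ B) (l B) (χ B)
  choose w hw0 hwsum hwce using hw
  have hw1 : ∀ B a c d, w B a c d ≤ 1 := fun B a c d => by
    rw [← hwsum B a d]
    exact single_le_sum (f := fun c => w B a c d) (fun c _ => hw0 B a c d) (mem_univ c)
  set η : ℝ := δ / (5 * ((nB + 1) * (M + 1))) with hη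
  have hη0 : 0 < η := by positivity
  have hcM : (Fintype.card (ι → Option C') : ℝ) ≤ M := by
    simp only [Fintype.card_fun, Fintype.card_option, hM]
    push_cast
    have : (Fintype.card C' : ℝ) ≤ R' := by exact_mod_cast hC'
    gcongr
  have hcM₂ : (Fintype.card (Finset ι → Option C') : ℝ) ≤ M₂ := by
    simp only [Fintype.card_fun, Fintype.card_option, hM₂]
    push_cast
    have : (Fintype.card C' : ℝ) ≤ R' := by exact_mod_cast hC'
    gcongr
  have hτ : (#(univ.filter fun B : Finset ι => #B = j + 1) : ℝ) ≤ nB := by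
    exact_mod_cast card_filter_le _ _
  obtain ⟨χ', hχ', hround⟩ := exists_coloring_of_weights (V := V') hNpos
    (fun i => (le_max_right _ _).trans (hcard i))
    (W := fun B x c => w B (l' B x) c (facets ψ' B x)) (fun B x c => hw0 _ _ _ _)
    (fun B x => hwsum _ _ _)
    (fun B c x y h => by simp only [hl' B h, facets_dependsOn hψ' B h])
    (τ := univ.filter fun B : Finset ι => #B = j + 1)
    (fun B hB => card_pos.1 (by rw [(mem_filter.1 hB).2]; omega))
    (Θ := (Finset ι → L) × (Finset ι → C))
    (g := fun t x => (∏ B with #B ≤ j, ind (l' B x = t.1 B)) *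
      ∏ B with #B = j + 1, ind (l' B x = t.1 B))
    (fun t x => mul_nonneg (prod_nonneg fun _ _ => ind_nonneg _)
      (prod_nonneg fun _ _ => ind_nonneg _))
    (fun t x => mul_le_one₀ (prod_le_one (fun _ _ => ind_nonneg _) fun _ _ => ind_le_one _)
      (prod_nonneg fun _ _ => ind_nonneg _)
      (prod_le_one (fun _ _ => ind_nonneg _) fun _ _ => ind_le_one _))
    (fun t => t.2) hδ₁0 (by
      have h1 : (Fintype.card ((Finset ι → L) × (Finset ι → C)) : ℝ) ≤ T := by
        simp only [Fintype.card_prod, Fintype.card_fun, hT]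
        push_cast
        gcongr
      have hN0 : (0 : ℝ) < N := by exact_mod_cast hNpos
      have h2 : (T * Fintype.card ι : ℝ) < N * δ₁ ^ 2 := by
        rwa [div_lt_iff₀ (by positivity)] at hN
      calc _ ≤ (T * (Fintype.card ι / N) : ℝ) := by gcongr
        _ = (T * Fintype.card ι : ℝ) / N := by ring
        _ < δ₁ ^ 2 := by
          rw [div_lt_iff₀ hN0]
          linarith)
  refine ⟨χ', hχ', fun a γ => ?_⟩
  let P : Finset ι → (ι → Option C') → ℝ := fun B d => p B (a B) * w B (a B) (γ B) d
  have hP0 : ∀ B d, 0 ≤ P B d := fun B d => mul_nonneg (hp0 _ _) (hw0 _ _ _ _)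
  have hP1 : ∀ B d, P B d ≤ 1 := fun B d => mul_le_one₀ (hp1 _ _) (hw0 _ _ _ _) (hw1 _ _ _ _)
  have hεη : ∀ B : Finset ι, ∀ a, CutLE B (fun x => ind (l B x = a) - p B a) η := fun B a =>
    (hcut B a).mono (min_le_right _ _)
  have hεη' : ∀ B : Finset ι, ∀ a, CutLE B (fun x => ind (l' B x = a) - p B a) η := fun B a =>
    (hcut' B a).mono (min_le_right _ _)
  have s1 := abs_expect_patInd_succ_sub_le (j := j) hl hχ hψ a γ hP0 hP1
    (c := δ₁ + Fintype.card (ι → Option C') * η) fun B =>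
      (hεη B (a B)).of_ce hψ (hψc (B, a B, γ B)) (hw0 B (a B) (γ B)) (hw1 B (a B) (γ B))
        (hwce B (a B) (γ B))
  have s2 := abs_sum_pat_sub_le (δ := δ / (5 * (M₂ + 1))) (by positivity) (hψψ a) hP0 hP1
  have s3 : |𝔼 x, (∏ B with #B ≤ j, ind (l' B x = a B)) *
      ∏ B with #B = j + 1, (ind (l' B x = a B) * w B (a B) (γ B) (facets ψ' B x)) -
      𝔼 x, (∏ B with #B ≤ j, ind (l' B x = a B)) *
      ∏ B with #B = j + 1, P B (facets ψ' B x)| ≤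
      #(univ.filter fun B : Finset ι => #B = j + 1) *
        (Fintype.card (ι → Option C') * η) := by
    refine abs_expect_prod_sub_prod_le
      (F := fun B x => ind (l' B x = a B) * w B (a B) (γ B) (facets ψ' B x))
      (G := fun B x => P B (facets ψ' B x))
      (fun B _ x y h => by simp only [hl' B h, facets_dependsOn hψ' B h])
      (fun B _ x y h => by simp only [facets_dependsOn hψ' B h])
      (fun B x => mul_nonneg (ind_nonneg _) (hw0 _ _ _ _))
      (fun B x => mul_le_one₀ (ind_le_one _) (hw0 _ _ _ _) (hw1 _ _ _ _))
      (fun B x => hP0 _ _) (fun B x => hP1 _ _) (fun B _ => ?_)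
      (fun B hB B' hB' hne hsub => hne (eq_of_subset_of_card_le hsub ?_))
      fun B hB => freeOf_prod_ind hl' a (mem_filter.1 hB).2
    · have := (hεη' B (a B)).mul_weight hψ' (w := w B (a B) (γ B)) fun d => by
        rw [abs_of_nonneg (hw0 _ _ _ _)]
        exact hw1 _ _ _ _
      convert this using 2 with x
      simp only [P]
      ring
    · rw [(mem_filter.1 hB).2, (mem_filter.1 hB').2]
  have s4 := hround (a, γ)
  have e4 : ∀ x, (∏ B with #B ≤ j, ind (l' B x = a B)) *
      (∏ B with #B = j + 1, ind (l' B x = a B)) *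
      ∏ B with #B = j + 1, w B (l' B x) (γ B) (facets ψ' B x) =
      (∏ B with #B ≤ j, ind (l' B x = a B)) *
      ∏ B with #B = j + 1, (ind (l' B x = a B) * w B (a B) (γ B) (facets ψ' B x)) := by
    intro x
    rw [mul_assoc, ← prod_mul_distrib]
    congr 1
    refine prod_congr rfl fun B _ => ?_
    by_cases h : l' B x = a B
    · rw [h]
    · rw [ind_false h, zero_mul, zero_mul]
  have e5 : ∀ x, (∏ B with #B ≤ j, ind (l' B x = a B)) *
      (∏ B with #B = j + 1, ind (l' B x = a B)) * ∏ B with #B = j + 1, ind (χ' B x = γ B) =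
      patInd (j + 1) l' χ' a γ x := by
    intro x
    rw [patInd_succ, mul_assoc, ← prod_mul_distrib]
  simp only [e4, e5] at s4
  have b1 : (#(univ.filter fun B : Finset ι => #B = j + 1) : ℝ) *
      (δ₁ + Fintype.card (ι → Option C') * η) ≤ 2 * (δ / 5) := by
    have h1 : (nB : ℝ) * δ₁ ≤ δ / 5 := by
      rw [hδ₁, mul_div_assoc', div_le_div_iff₀ (by positivity) (by positivity)]
      nlinarith
    have h2 : (nB : ℝ) * (M * η) ≤ δ / 5 := by
      have : (nB : ℝ) * M ≤ (nB + 1) * (M + 1) := by gcongr <;> linarith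
      rw [hη, ← mul_assoc, mul_div_assoc', div_le_div_iff₀ (by positivity) (by positivity)]
      nlinarith
    calc _ ≤ (nB : ℝ) * (δ₁ + M * η) := by gcongr
      _ ≤ _ := by linarith
  have b3 : (#(univ.filter fun B : Finset ι => #B = j + 1) : ℝ) *
      (Fintype.card (ι → Option C') * η) ≤ δ / 5 := by
    have h2 : (nB : ℝ) * (M * η) ≤ δ / 5 := by
      have : (nB : ℝ) * M ≤ (nB + 1) * (M + 1) := by gcongr <;> linarith
      rw [hη, ← mul_assoc, mul_div_assoc', div_le_div_iff₀ (by positivity) (by positivity)]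
      nlinarith
    exact le_trans (by gcongr) h2
  have b2 : (Fintype.card (Finset ι → Option C') : ℝ) * (δ / (5 * (M₂ + 1))) ≤ δ / 5 := by
    have : (M₂ : ℝ) * (δ / (5 * (M₂ + 1))) ≤ δ / 5 := by
      rw [mul_div_assoc', div_le_div_iff₀ (by positivity) (by positivity)]
      nlinarith
    exact le_trans (by gcongr) this
  have b4 : δ₁ ≤ δ / 5 := by
    rw [hδ₁]
    exact div_le_div_of_nonneg_left hδ.le (by positivity) (by
      have : (0 : ℝ) ≤ nB := Nat.cast_nonneg _
      linarith)
  have s1' := s1.trans b1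
  have s2' := s2.trans b2
  have s3' := s3.trans b3
  have s4' := s4.trans b4
  rw [abs_le] at *
  constructor <;> linarith [s1'.1, s1'.2, s2'.1, s2'.2, s3'.1, s3'.2, s4'.1, s4'.2]

lemma mimicAt {L : Type} [Fintype L] (j : ℕ) : MimicAt ι L j := by
  induction j with
  | zero => exact mimicAt_zero
  | succ j ih => exact ih.succ

lemma ind_pattern_eq {X L C : Type} {j : ℕ} (l : Finset ι → X → L) (χ : Finset ι → X → C) (a₀ : L)
    (c₀ : C) (a : Finset ι → L) (γ : Finset ι → C) (x : X) :
    ind (((fun B : Finset ι => if #B ≤ j then l B x else a₀),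
      fun B : Finset ι => if #B = j then χ B x else c₀) = (a, γ)) =
    ind ((∀ B : Finset ι, ¬#B ≤ j → a B = a₀) ∧ ∀ B : Finset ι, #B ≠ j → γ B = c₀) *
      patInd j l χ a γ x := by
  rw [patInd, ← ind_forall_mem, ← ind_forall_mem, ← ind_and, ← ind_and]
  simp only [mem_filter, mem_univ, true_and, Prod.mk.injEq, funext_iff]
  refine ind_congr ⟨fun h => ⟨⟨fun B hB => ?_, fun B hB => ?_⟩, fun B hB => ?_, fun B hB => ?_⟩,
    fun h => ⟨fun B => ?_, fun B => ?_⟩⟩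
  · rw [← h.1, if_neg hB]
  · rw [← h.2, if_neg hB]
  · rw [← h.1, if_pos hB]
  · rw [← h.2, if_pos hB]
  · by_cases hB : #B ≤ j
    · rw [if_pos hB, h.2.1 B hB]
    · rw [if_neg hB, h.1.1 B hB]
  · by_cases hB : #B = j
    · rw [if_pos hB, h.2.2 B hB]
    · rw [if_neg hB, h.1.2 B hB]

lemma expect_comp_eq_sum {X T : Type*} [Fintype X] [Fintype T] (g : X → T) (f : T → ℝ) :
    𝔼 x, f (g x) = ∑ t, (𝔼 x, ind (g x = t)) * f t := by
  simp only [expect_mul, ← expect_sum_comm]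
  exact expect_congr rfl fun x _ => (sum_ind_mul (g x) f).symm

lemma abs_expect_pattern_sub_le {L C : Type} [Fintype L] [Fintype C] {V' : ι → Type}
    [∀ i, Fintype (V' i)] [∀ i, Nonempty (V' i)] {j : ℕ} {l : Finset ι → (∀ i, V i) → L}
    {l' : Finset ι → (∀ i, V' i) → L} {χ : Finset ι → (∀ i, V i) → C}
    {χ' : Finset ι → (∀ i, V' i) → C} {δ : ℝ}
    (h : ∀ a γ, |𝔼 x, patInd j l χ a γ x - 𝔼 x, patInd j l' χ' a γ x| ≤ δ) (a₀ : L) (c₀ : C)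
    {f : (Finset ι → L) × (Finset ι → C) → ℝ} (hf0 : ∀ t, 0 ≤ f t) (hf1 : ∀ t, f t ≤ 1) :
    |𝔼 x, f ((fun B : Finset ι => if #B ≤ j then l B x else a₀),
        fun B : Finset ι => if #B = j then χ B x else c₀) -
      𝔼 x, f ((fun B : Finset ι => if #B ≤ j then l' B x else a₀),
        fun B : Finset ι => if #B = j then χ' B x else c₀)| ≤
      Fintype.card ((Finset ι → L) × (Finset ι → C)) * δ := by
  classical
  rw [expect_comp_eq_sum _ f, expect_comp_eq_sum _ f, ← sum_sub_distrib]
  simp only [← sub_mul]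
  refine (abs_sum_le_sum_abs _ _).trans
    ((sum_le_sum (g := fun _ => δ) fun t _ => ?_).trans (by simp))
  obtain ⟨a, γ⟩ := t
  rw [abs_mul, abs_of_nonneg (hf0 _)]
  refine (mul_le_of_le_one_right (abs_nonneg _) (hf1 _)).trans ?_
  simp only [ind_pattern_eq, ← mul_expect]
  rw [← mul_sub, abs_mul, abs_of_nonneg (ind_nonneg _)]
  exact (mul_le_of_le_one_left (abs_nonneg _) (ind_le_one _)).trans (h a γ)

lemma abs_div_sub_div_le {A A' D D' c δ : ℝ} (hc : 0 < c) (hD : c ≤ D) (hD' : c ≤ D')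
    (hA' : 0 ≤ A') (hAD' : A' ≤ D') (h : |A - A'| ≤ δ) (h' : |D - D'| ≤ δ) :
    |A / D - A' / D'| ≤ 2 * δ / c := by
  have hD0 : 0 < D := hc.trans_le hD
  have hD0' : 0 < D' := hc.trans_le hD'
  have hδ : 0 ≤ δ := (abs_nonneg _).trans h
  have e : A / D - A' / D' = ((A - A') - A' / D' * (D - D')) / D := by
    field_simp
    ring
  have hr : |A' / D'| ≤ 1 := by
    rw [abs_of_nonneg (div_nonneg hA' hD0'.le)]
    exact (div_le_one hD0').2 hAD'
  rw [e, abs_div, abs_of_pos hD0]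
  refine div_le_div₀ (by positivity) ((abs_sub _ _).trans ?_) hc hD
  rw [abs_mul]
  have := mul_le_mul hr h' (abs_nonneg _) zero_le_one
  linarith

lemma exists_mimic (ι L : Type) [Fintype ι] [DecidableEq ι] [Fintype L] (k : ℕ) (hk : 1 ≤ k) {c ν : ℝ}
    (hc : 0 < c) (hν : 0 < ν) : ∃ ε : ℝ, 0 < ε ∧ ∃ N : ℕ,
    ∀ (V V' : ι → Type) [∀ i, Fintype (V i)] [∀ i, Nonempty (V i)] [∀ i, Fintype (V' i)]
      [∀ i, Nonempty (V' i)] (l : Finset ι → (∀ i, V i) → L) (l' : Finset ι → (∀ i, V' i) → L)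
      (p : Finset ι → L → ℝ), (∀ B a, 0 ≤ p B a) → (∀ B a, p B a ≤ 1) →
      (∀ B, DependsOn (l B) B) → (∀ B, DependsOn (l' B) B) →
      (∀ B a, CutLE B (fun x => ind (l B x = a) - p B a) ε) →
      (∀ B a, CutLE B (fun x => ind (l' B x = a) - p B a) ε) → (∀ i, N ≤ Fintype.card (V' i)) →
      ∀ χ : Finset ι → (∀ i, V i) → Bool, (∀ B, DependsOn (χ B) B) →
      ∃ χ' : Finset ι → (∀ i, V' i) → Bool, (∀ B, DependsOn (χ' B) B) ∧
        ∀ (Z : Finset ι) (a : Finset ι → L), #Z = k → (∀ B ∈ Z.ssubsets, c ≤ p B (a B)) →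
        |(𝔼 x, (∏ B ∈ Z.ssubsets, ind (l B x = a B)) *
              ∏ B ∈ Z.powersetCard (k - 1), ind (χ B x = true)) /
            (𝔼 x, ∏ B ∈ Z.ssubsets, ind (l B x = a B)) -
          (𝔼 x, (∏ B ∈ Z.ssubsets, ind (l' B x = a B)) *
              ∏ B ∈ Z.powersetCard (k - 1), ind (χ' B x = true)) /
            (𝔼 x, ∏ B ∈ Z.ssubsets, ind (l' B x = a B))| ≤ ν := by
  classical
  set nB : ℕ := Fintype.card (Finset ι) with hnB
  set c₁ : ℝ := min c 1 ^ nB / 2 with hc₁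
  have hc₁0 : 0 < c₁ := by positivity
  set δ : ℝ := ν * c₁ / 2 with hδ
  have hδ0 : 0 < δ := by positivity
  set Q : ℕ := Fintype.card ((Finset ι → L) × (Finset ι → Bool)) with hQ
  obtain ⟨ε, hε, N, hN⟩ := mimicAt (ι := ι) (L := L) (k - 1) 2 (δ / (Q + 1)) (by positivity)
  refine ⟨min ε (min (c₁ / (nB + 1)) (δ / (2 * (nB + 1)))), by positivity, N, ?_⟩
  intro V V' _ _ _ _ l l' p hp0 hp1 hl hl' hcut hcut' hcard χ hχ
  obtain ⟨χ', hχ', h⟩ := hN V V' l l' p hp0 hp1 hl hl'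
    (fun B a => (hcut B a).mono (min_le_left _ _)) (fun B a => (hcut' B a).mono (min_le_left _ _))
    hcard Bool (by simp) χ hχ
  refine ⟨χ', hχ', fun Z a hZ hpZ => ?_⟩
  have hsz : (#Z.ssubsets : ℝ) ≤ nB := by exact_mod_cast card_le_univ _
  set e : ℝ := min ε (min (c₁ / (nB + 1)) (δ / (2 * (nB + 1)))) with he
  have he0 : 0 < e := by positivity
  have he1 : (nB : ℝ) * e ≤ c₁ := by
    have h1 : e ≤ c₁ / (nB + 1) := (min_le_right _ _).trans (min_le_left _ _)
    rw [le_div_iff₀ (by positivity)] at h1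
    nlinarith
  have he2 : 2 * ((nB : ℝ) * e) ≤ δ := by
    have h1 : e ≤ δ / (2 * (nB + 1)) := (min_le_right _ _).trans (min_le_right _ _)
    rw [le_div_iff₀ (by positivity)] at h1
    nlinarith
  have hπ : 2 * c₁ ≤ ∏ B ∈ Z.ssubsets, p B (a B) := by
    calc 2 * c₁ = min c 1 ^ nB := by rw [hc₁]; ring
      _ ≤ min c 1 ^ #Z.ssubsets := by
        refine pow_le_pow_of_le_one (by positivity) (min_le_right _ _) ?_
        exact card_le_univ _
      _ = ∏ _B ∈ Z.ssubsets, min c 1 := by rw [prod_const]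
      _ ≤ _ := prod_le_prod (fun _ _ => by positivity) fun B hB =>
        (min_le_left _ _).trans (hpZ B hB)
  have hD := (abs_expect_prod_ind_sub_le hl hp0 hp1 hcut a Z.ssubsets).trans
    (mul_le_mul_of_nonneg_right hsz he0.le)
  have hD' := (abs_expect_prod_ind_sub_le hl' hp0 hp1 hcut' a Z.ssubsets).trans
    (mul_le_mul_of_nonneg_right hsz he0.le)
  have hA : |(𝔼 x, (∏ B ∈ Z.ssubsets, ind (l B x = a B)) *
        ∏ B ∈ Z.powersetCard (k - 1), ind (χ B x = true)) -
      (𝔼 x, (∏ B ∈ Z.ssubsets, ind (l' B x = a B)) *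
        ∏ B ∈ Z.powersetCard (k - 1), ind (χ' B x = true))| ≤ δ := by
    have := abs_expect_pattern_sub_le h (a ∅) true
      (f := fun t => (∏ B ∈ Z.ssubsets, ind (t.1 B = a B)) *
        ∏ B ∈ Z.powersetCard (k - 1), ind (t.2 B = true))
      (fun t => mul_nonneg (prod_nonneg fun _ _ => ind_nonneg _)
        (prod_nonneg fun _ _ => ind_nonneg _))
      (fun t => mul_le_one₀ (prod_le_one (fun _ _ => ind_nonneg _) fun _ _ => ind_le_one _)
        (prod_nonneg fun _ _ => ind_nonneg _)
        (prod_le_one (fun _ _ => ind_nonneg _) fun _ _ => ind_le_one _))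
    have hs : ∀ B ∈ Z.ssubsets, #B ≤ k - 1 := fun B hB => by
      have := card_lt_card (mem_ssubsets.1 hB)
      omega
    refine le_trans (le_of_eq ?_) (this.trans ?_)
    · congr 2 <;>
      · refine expect_congr rfl fun x _ => ?_
        congr 1
        · exact prod_congr rfl fun B hB => by dsimp only; rw [if_pos (hs B hB)]
        · exact prod_congr rfl fun B hB => by
            dsimp only
            rw [if_pos (mem_powersetCard.1 hB).2]
    · rw [← hQ, mul_div_assoc', div_le_iff₀ (by positivity)]
      nlinarith
  have hDD : |(𝔼 x, ∏ B ∈ Z.ssubsets, ind (l B x = a B)) -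
      𝔼 x, ∏ B ∈ Z.ssubsets, ind (l' B x = a B)| ≤ δ := by
    rw [abs_le] at *
    constructor <;> linarith [hD.1, hD.2, hD'.1, hD'.2]
  refine (abs_div_sub_div_le hc₁0 ?_ ?_ ?_ ?_ hA hDD).trans (le_of_eq ?_)
  · linarith [(abs_le.1 hD).1]
  · linarith [(abs_le.1 hD').1]
  · exact expect_nonneg fun x _ => mul_nonneg (prod_nonneg fun _ _ => ind_nonneg _)
        (prod_nonneg fun _ _ => ind_nonneg _)
  · exact expect_le_expect fun x _ => mul_le_of_le_one_right (prod_nonneg fun _ _ => ind_nonneg _)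
      (prod_le_one (fun _ _ => ind_nonneg _) fun _ _ => ind_le_one _)
  · rw [hδ]
    field_simp

end Transversal

end HypReg

namespace HypReg
open Finset
open scoped BigOperators
section Translation
variable {V₁ : Type} [DecidableEq V₁] {P : LabFam V₁} {N : ℕ}

/-- The indices of the classes. -/
abbrev Idx (N : ℕ) : Type := {i : ℕ // i ∈ Finset.Icc 1 N}

/-- The class with index `i`. -/
abbrev LabFam.Part (P : LabFam V₁) (N : ℕ) (i : Idx N) : Type :=
  {v : V₁ // v ∈ P.gnd.filter fun v => P.vIdx v = i}

/-- A set of class indices as a set of natural numbers. -/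
def idxSet (B : Finset (Idx N)) : Finset ℕ := B.map (Function.Embedding.subtype _)

/-- The part of a transversal in the classes with index in `B`. -/
def tr (B : Finset (Idx N)) (x : ∀ i, P.Part N i) : Finset V₁ := B.image fun i => (x i).1

lemma part_mem_gnd {i : Idx N} (v : P.Part N i) : v.1 ∈ P.gnd := (mem_filter.1 v.2).1

lemma vIdx_part {i : Idx N} (v : P.Part N i) : P.vIdx v.1 = i := (mem_filter.1 v.2).2

lemma mem_idxSet {B : Finset (Idx N)} {i : Idx N} : (i : ℕ) ∈ idxSet B ↔ i ∈ B := by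
  simp [idxSet, -mem_Icc]

lemma card_idxSet (B : Finset (Idx N)) : #(idxSet B) = #B := card_map _

lemma idxSet_injective : Function.Injective (idxSet (N := N)) := map_injective _

lemma idxSet_subset_idxSet {A B : Finset (Idx N)} : idxSet A ⊆ idxSet B ↔ A ⊆ B :=
  map_subset_map

lemma exists_idxSet_eq {M : Finset ℕ} (hM : ∀ i ∈ M, 1 ≤ i ∧ i ≤ N) :
    ∃ B : Finset (Idx N), idxSet B = M := by
  refine ⟨M.subtype (· ∈ Icc 1 N), ?_⟩
  rw [idxSet, subtype_map, filter_eq_self]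
  exact fun i hi => mem_Icc.2 (hM i hi)

lemma exists_idxSet_eq_of_subset {M : Finset ℕ} {B : Finset (Idx N)} (hM : M ⊆ idxSet B) :
    ∃ A ⊆ B, idxSet A = M := by
  obtain ⟨A, hA⟩ := exists_idxSet_eq (N := N) (M := M) fun i hi => by
    have := hM hi
    simp only [idxSet, mem_map] at this
    obtain ⟨j, _, rfl⟩ := this
    exact mem_Icc.1 j.2
  exact ⟨A, idxSet_subset_idxSet.1 (hA.symm ▸ hM), hA⟩

section tr

variable {A B Z : Finset (Idx N)} {x y : ∀ i, P.Part N i}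

lemma mem_tr {v : V₁} : v ∈ tr B x ↔ ∃ i ∈ B, (x i).1 = v := mem_image

lemma tr_apply_injective (x : ∀ i, P.Part N i) : Function.Injective fun i => (x i).1 := by
  intro i j h
  have h' : (x i).1 = (x j).1 := h
  have := vIdx_part (x i)
  rw [h', vIdx_part] at this
  exact Subtype.ext this.symm

lemma card_tr : #(tr B x) = #B := card_image_of_injective _ (tr_apply_injective x)

lemma tr_mono (h : A ⊆ B) : tr A x ⊆ tr B x := image_subset_image h

lemma tr_subset_gnd : tr B x ⊆ P.gnd := by
  intro v hv
  obtain ⟨i, _, rfl⟩ := mem_tr.1 hv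
  exact part_mem_gnd (x i)

lemma image_vIdx_tr : (tr B x).image P.vIdx = idxSet B := by
  ext n
  simp only [mem_image, mem_tr, idxSet, mem_map, Function.Embedding.subtype_apply]
  constructor
  · rintro ⟨_, ⟨i, hi, rfl⟩, rfl⟩
    exact ⟨i, hi, (vIdx_part (x i)).symm⟩
  · rintro ⟨i, hi, rfl⟩
    exact ⟨_, ⟨i, hi, rfl⟩, vIdx_part (x i)⟩

lemma filter_tr (h : A ⊆ B) : ((tr B x).filter fun v => P.vIdx v ∈ idxSet A) = tr A x := by
  ext v
  simp only [mem_filter, mem_tr]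
  constructor
  · rintro ⟨⟨i, hi, rfl⟩, hA⟩
    rw [vIdx_part (x i), mem_idxSet] at hA
    exact ⟨i, hA, rfl⟩
  · rintro ⟨i, hi, rfl⟩
    rw [vIdx_part (x i), mem_idxSet]
    exact ⟨⟨i, h hi, rfl⟩, hi⟩

lemma tr_eq_tr (h : tr A x = tr B y) : A = B ∧ ∀ i ∈ A, x i = y i := by
  have hAB : A = B := idxSet_injective (by rw [← image_vIdx_tr (x := x), h, image_vIdx_tr])
  subst hAB
  refine ⟨rfl, fun i hi => ?_⟩
  have : (x i).1 ∈ tr A y := h ▸ mem_tr.2 ⟨i, hi, rfl⟩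
  obtain ⟨j, _, hj⟩ := mem_tr.1 this
  have hij : j = i := Subtype.ext (by rw [← vIdx_part (y j), hj, vIdx_part (x i)])
  subst hij
  exact Subtype.ext hj.symm

lemma tr_dependsOn (B : Finset (Idx N)) : DependsOn (tr (P := P) B) B := fun x y h =>
  image_congr fun i hi => by rw [h i hi]

lemma exists_eq_tr_of_subset {T : Finset V₁} (h : T ⊆ tr B x) : ∃ A ⊆ B, T = tr A x := by
  obtain ⟨A, hA, rfl⟩ := subset_image_iff.1 h
  exact ⟨A, by exact_mod_cast hA, rfl⟩

lemma mem_powersetCard_tr {j : ℕ} {T : Finset V₁} :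
    T ∈ (tr B x).powersetCard j ↔ ∃ A ∈ B.powersetCard j, T = tr A x := by
  rw [mem_powersetCard]
  constructor
  · rintro ⟨h, hj⟩
    obtain ⟨A, hA, rfl⟩ := exists_eq_tr_of_subset h
    exact ⟨A, mem_powersetCard.2 ⟨hA, by rwa [card_tr] at hj⟩, rfl⟩
  · rintro ⟨A, hA, rfl⟩
    rw [mem_powersetCard] at hA
    exact ⟨tr_mono hA.1, by rw [card_tr, hA.2]⟩

end tr

/-- The number of transversals extending a given partial one does not depend on the latter. -/
lemma exists_expect_eq_mul_card [∀ i, Nonempty (P.Part N i)] (B : Finset (Idx N)) :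
    ∃ c : ℝ, 0 < c ∧ ∀ E : (∀ i, P.Part N i) → Prop, ∀ S : Finset (Finset V₁), DependsOn E B →
      (∀ T, T ∈ S ↔ ∃ x, T = tr B x ∧ E x) → 𝔼 x, ind (E x) = c * #S := by
  classical
  set m : ℕ := ∏ i, if i ∈ B then 1 else Fintype.card (P.Part N i) with hm
  have hm0 : 0 < m := prod_pos fun i _ => by
    split_ifs
    · exact one_pos
    · exact Fintype.card_pos
  refine ⟨m / Fintype.card (∀ i, P.Part N i), by positivity, fun E S hE hS => ?_⟩
  have hcard : #(univ.filter E) = #S * m := by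
    rw [card_eq_sum_card_fiberwise (f := tr B) (t := S)
      fun x hx => (hS _).2 ⟨x, rfl, (mem_filter.1 hx).2⟩]
    refine sum_const_nat fun T hT => ?_
    obtain ⟨x₀, rfl, hx₀⟩ := (hS T).1 hT
    have : ((univ.filter E).filter fun x => tr B x = tr B x₀) =
        Fintype.piFinset fun i => if i ∈ B then {x₀ i} else univ := by
      ext x
      simp only [mem_filter, mem_univ, true_and, Fintype.mem_piFinset]
      constructor
      · rintro ⟨_, h⟩ i
        by_cases hi : i ∈ B
        · simpa [hi] using (tr_eq_tr h).2 i hi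
        · simp [hi]
      · intro h
        have hx : ∀ i ∈ (B : Set (Idx N)), x i = x₀ i := fun i hi => by
          have hi' : i ∈ B := hi
          simpa [hi'] using h i
        exact ⟨by rwa [hE hx], tr_dependsOn B hx⟩
    rw [this, Fintype.card_piFinset]
    refine prod_congr rfl fun i _ => ?_
    split_ifs
    · exact card_singleton _
    · exact card_univ
  rw [Fintype.expect_eq_sum_div_card]
  have : ∑ x, ind (E x) = (#(univ.filter E) : ℝ) := by
    simp [ind]
  rw [this, hcard]
  push_cast
  ring

section Labeled

variable {k : ℕ} {a : ℕ → ℕ}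

lemma image_vIdx_gnd (hP : P.IsLabeled k a) : P.gnd.image P.vIdx = Icc 1 (a 1) := by
  classical
  obtain ⟨⟨_, _, _, hcard, _⟩, hidx, hiff, _⟩ := hP
  refine eq_of_subset_of_card_le (fun i hi => ?_) ?_
  · obtain ⟨v, hv, rfl⟩ := mem_image.1 hi
    exact mem_Icc.2 (hidx v hv)
  · rw [Nat.card_Icc, Nat.add_sub_cancel, ← hcard]
    have : ∃ g : ℕ → Finset V₁, ∀ v ∈ P.gnd, g (P.vIdx v) = P.vClass v := by
      refine ⟨fun n => if h : ∃ v ∈ P.gnd, P.vIdx v = n then P.vClass h.choose else ∅,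
        fun v hv => ?_⟩
      have h : ∃ u ∈ P.gnd, P.vIdx u = P.vIdx v := ⟨v, hv, rfl⟩
      simp only [dif_pos h]
      exact (hiff _ h.choose_spec.1 _ hv).1 h.choose_spec.2
    obtain ⟨g, hg⟩ := this
    rw [← image_congr (s := P.gnd) (f := g ∘ P.vIdx) fun v hv => hg v hv, ← image_image]
    exact card_image_le

lemma nonempty_part (hP : P.IsLabeled k a) (i : Idx (a 1)) : Nonempty (P.Part (a 1) i) := by
  have : (i : ℕ) ∈ P.gnd.image P.vIdx := by
    rw [image_vIdx_gnd hP]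
    exact i.2
  rw [mem_image] at this
  obtain ⟨v, hv, h⟩ := this
  exact ⟨⟨v, mem_filter.2 ⟨hv, h⟩⟩⟩

lemma vClass_eq_filter (hP : P.IsLabeled k a) {v : V₁} (hv : v ∈ P.gnd) :
    P.vClass v = P.gnd.filter fun u => P.vIdx u = P.vIdx v := by
  obtain ⟨⟨hself, hsub, hcl, _⟩, _, hiff, _⟩ := hP
  ext u
  rw [mem_filter]
  constructor
  · intro hu
    have hu' := hsub v hv hu
    exact ⟨hu', (hiff u hu' v hv).2 (hcl u hu' v hv hu)⟩
  · rintro ⟨hu, h⟩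
    rw [← (hiff u hu v hv).1 h]
    exact hself u hu

lemma le_card_part (hP : P.IsLabeled k a) {η ε : ℝ} (hE : P.toPartFam.IsEquitableE k a η ε)
    (i : Idx (a 1)) : #P.gnd / a 1 ≤ Fintype.card (P.Part (a 1) i) := by
  obtain ⟨v, hv⟩ := nonempty_part hP i
  rw [mem_filter] at hv
  rw [Fintype.card_coe, ← hv.2, ← vClass_eq_filter hP hv.1]
  rcases hE.2.1 v hv.1 with h | h <;> omega

lemma tr_mem_cross (hP : P.IsLabeled k a) {j : ℕ} {B : Finset (Idx N)} (hB : #B = j)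
    (x : ∀ i, P.Part N i) : tr B x ∈ P.cross j := by
  refine mem_filter.2 ⟨mem_powersetCard.2 ⟨tr_subset_gnd, by rw [card_tr, hB]⟩, ?_⟩
  intro u hu v hv huv h
  obtain ⟨i, hi, rfl⟩ := mem_tr.1 hu
  obtain ⟨j, hj, rfl⟩ := mem_tr.1 hv
  rw [← hP.2.2.1 _ (part_mem_gnd (x i)) _ (part_mem_gnd (x j)), vIdx_part, vIdx_part] at h
  exact huv (by rw [Subtype.ext h])

lemma exists_eq_tr (hP : P.IsLabeled k a) {S : Finset V₁} (hS : S ⊆ P.gnd)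
    (hinj : Set.InjOn P.vIdx S) :
    ∃ (B : Finset (Idx (a 1))) (x : ∀ i, P.Part (a 1) i), S = tr B x := by
  classical
  obtain ⟨B, hB⟩ := exists_idxSet_eq (N := a 1) (M := S.image P.vIdx) fun i hi => by
    obtain ⟨v, hv, rfl⟩ := mem_image.1 hi
    exact hP.2.1 v (hS hv)
  have hx : ∀ i : Idx (a 1), ∃ v : P.Part (a 1) i, i ∈ B → v.1 ∈ S := by
    intro i
    by_cases hi : i ∈ B
    · have := mem_idxSet.2 hi
      rw [hB, mem_image] at this
      obtain ⟨v, hv, h⟩ := this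
      exact ⟨⟨v, mem_filter.2 ⟨hS hv, h⟩⟩, fun _ => hv⟩
    · exact ⟨(nonempty_part hP i).some, fun h => absurd h hi⟩
  choose x hx using hx
  refine ⟨B, x, (eq_of_subset_of_card_le (fun v hv => ?_) ?_).symm⟩
  · obtain ⟨i, hi, rfl⟩ := mem_tr.1 hv
    exact hx i hi
  · rw [card_tr, ← card_idxSet, hB, card_image_of_injOn hinj]

lemma exists_eq_tr_of_mem_cross (hP : P.IsLabeled k a) {S : Finset V₁} {j : ℕ}
    (hS : S ∈ P.cross j) :
    ∃ (B : Finset (Idx (a 1))) (x : ∀ i, P.Part (a 1) i), #B = j ∧ S = tr B x := by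
  obtain ⟨h, hinj⟩ := mem_filter.1 hS
  obtain ⟨h1, h2⟩ := mem_powersetCard.1 h
  obtain ⟨B, x, rfl⟩ := exists_eq_tr hP h1 fun u hu v hv huv => by
    by_contra hne
    exact hinj u hu v hv hne ((hP.2.2.1 u (h1 hu) v (h1 hv)).1 huv)
  exact ⟨B, x, by rwa [card_tr] at h2, rfl⟩

lemma exists_eq_tr_of_image_eq (hP : P.IsLabeled k a) {S : Finset V₁} {j : ℕ}
    (hS : S ∈ P.cross j) {B : Finset (Idx (a 1))} (hB : S.image P.vIdx = idxSet B) :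
    ∃ x : ∀ i, P.Part (a 1) i, S = tr B x := by
  obtain ⟨A, x, _, rfl⟩ := exists_eq_tr_of_mem_cross hP hS
  rw [image_vIdx_tr] at hB
  exact ⟨x, by rw [idxSet_injective hB]⟩

lemma mem_KsetC_of_mem_cross (F : PartFam V₁) {j : ℕ} {T : Finset V₁} (hT : T ∈ F.cross j)
    (i : ℕ) (R : Finset (Finset V₁)) :
    T ∈ KsetC F.gnd (F.cross j) i j R ↔ ∀ S ∈ T.powersetCard i, S ∈ R := by
  unfold KsetC
  split_ifs with h
  · subst h
    simp [mem_filter, hT, mem_powersetCard, card_eq_one]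
    constructor
    · rintro h S hS v rfl
      exact h v (by simpa using hS)
    · exact fun h v hv => h _ (by simpa using hv) v rfl
  · have := (mem_filter.1 hT).1
    simp [Kset, mem_filter, this]

end Labeled

/-- The two transversals have the same labels on all parts indexed by subsets of `B`. -/
def Agree (B : Finset (Idx N)) (x y : ∀ i, P.Part N i) : Prop :=
  ∀ A ⊆ B, 2 ≤ #A → P.lbl #A (tr A x) = P.lbl #A (tr A y)

section Cells

variable {k : ℕ} {a : ℕ → ℕ}

lemma mem_polyad_one {F : PartFam V₁} {J : Finset V₁} {v : V₁} :
    {v} ∈ F.polyad 1 J ↔ ∃ u ∈ J, v ∈ F.vClass u := by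
  simp [PartFam.polyad, sing, mem_sup]

lemma mem_polyad_of_two_le {F : PartFam V₁} {J T : Finset V₁} {i : ℕ} (hi : 2 ≤ i) :
    T ∈ F.polyad i J ↔ ∃ S ∈ J.powersetCard i, T ∈ F.cls i S := by
  rw [PartFam.polyad, if_neg (by omega), mem_sup]

lemma mem_cls_self (hP : P.IsLabeled k a) {j : ℕ} (hj : 2 ≤ j) (hjk : j ≤ k - 1) {S : Finset V₁}
    (hS : S ∈ P.cross j) : S ∈ P.cls j S :=
  (hP.1.2.2.2.2.2 j hj hjk).1 S hS

lemma cls_eq_of_mem (hP : P.IsLabeled k a) {j : ℕ} (hj : 2 ≤ j) (hjk : j ≤ k - 1)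
    {S T : Finset V₁} (hS : S ∈ P.cross j) (hT : T ∈ P.cls j S) : P.cls j T = P.cls j S :=
  (hP.1.2.2.2.2.2 j hj hjk).2.1 S hS T hT

lemma cls_subset_polyCliques (hP : P.IsLabeled k a) {j : ℕ} (hj : 2 ≤ j) (hjk : j ≤ k - 1)
    {S : Finset V₁} (hS : S ∈ P.cross j) : P.cls j S ⊆ P.polyCliques j S :=
  (hP.1.2.2.2.2.2 j hj hjk).2.2.1 S hS

lemma polyCliques_subset_cross (hP : P.IsLabeled k a) {j : ℕ} (hj : 2 ≤ j) (hjk : j ≤ k - 1)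
    {S : Finset V₁} (hS : S ∈ P.cross j) : P.polyCliques j S ⊆ P.cross j :=
  (hP.1.2.2.2.2.2 j hj hjk).2.2.2.1 S hS

lemma subset_mem_cross {F : PartFam V₁} {j : ℕ} {S T : Finset V₁} (hS : S ∈ F.cross j) (hT : T ⊆ S) :
    T ∈ F.cross #T := by
  obtain ⟨h, hinj⟩ := mem_filter.1 hS
  exact mem_filter.2 ⟨mem_powersetCard.2 ⟨hT.trans (mem_powersetCard.1 h).1, rfl⟩,
    fun u hu v hv => hinj u (hT hu) v (hT hv)⟩

lemma card_image_vIdx (hP : P.IsLabeled k a) {j : ℕ} {S : Finset V₁} (hS : S ∈ P.cross j) :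
    #(S.image P.vIdx) = j := by
  obtain ⟨B, x, hB, rfl⟩ := exists_eq_tr_of_mem_cross hP hS
  rw [image_vIdx_tr, card_idxSet, hB]

lemma image_vIdx_eq_of_mem_polyCliques (hP : P.IsLabeled k a) {j : ℕ} (hj : 2 ≤ j) :
    j ≤ k - 1 → ∀ {S T : Finset V₁}, S ∈ P.cross j → T ∈ P.polyCliques j S →
      T.image P.vIdx = S.image P.vIdx := by
  induction j, hj using Nat.le_induction with
  | base =>
    intro hjk S T hS hT
    have hT' := polyCliques_subset_cross hP le_rfl hjk hS hT
    refine eq_of_subset_of_card_le (fun n hn => ?_) (by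
      rw [card_image_vIdx hP hS, card_image_vIdx hP hT'])
    obtain ⟨v, hv, rfl⟩ := mem_image.1 hn
    have h := (mem_KsetC_of_mem_cross P.toPartFam hT' _ _).1 hT {v}
      (mem_powersetCard.2 ⟨singleton_subset_iff.2 hv, rfl⟩)
    obtain ⟨u, hu, hvu⟩ := mem_polyad_one.1 h
    have hu' : u ∈ P.gnd := (mem_powersetCard.1 (mem_filter.1 hS).1).1 hu
    rw [vClass_eq_filter hP hu', mem_filter] at hvu
    exact mem_image.2 ⟨u, hu, hvu.2.symm⟩
  | succ j hj ih =>
    intro hjk S T hS hT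
    have hT' := polyCliques_subset_cross hP (by omega) hjk hS hT
    refine eq_of_subset_of_card_le (fun n hn => ?_) (by
      rw [card_image_vIdx hP hS, card_image_vIdx hP hT'])
    obtain ⟨v, hv, rfl⟩ := mem_image.1 hn
    have hcT : #T = j + 1 := (mem_powersetCard.1 (mem_filter.1 hT').1).2
    obtain ⟨R, hvR, hRT, hR⟩ := exists_subsuperset_card_eq (n := j) (singleton_subset_iff.2 hv)
      (by simp; omega) (by omega)
    have h := (mem_KsetC_of_mem_cross P.toPartFam hT' _ _).1 hT R
      (mem_powersetCard.2 ⟨hRT, hR⟩)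
    obtain ⟨S', hS', hRS'⟩ := (mem_polyad_of_two_le (by omega)).1 h
    rw [mem_powersetCard] at hS'
    have hc : S' ∈ P.cross j := by simpa [hS'.2] using subset_mem_cross hS hS'.1
    have := ih (by omega) hc (cls_subset_polyCliques hP hj (by omega) hc hRS')
    exact image_subset_image hS'.1 (this ▸ mem_image_of_mem _ (singleton_subset_iff.1 hvR))

variable {A B Z : Finset (Idx (a 1))} {x y : ∀ i, P.Part (a 1) i}

lemma mem_polyad_tr {i : ℕ} (hi : 2 ≤ i) {T : Finset V₁} :
    T ∈ P.polyad i (tr B x) ↔ ∃ A ∈ B.powersetCard i, T ∈ P.cls i (tr A x) := by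
  rw [mem_polyad_of_two_le hi]
  constructor
  · rintro ⟨S, hS, hT⟩
    obtain ⟨A, hA, rfl⟩ := mem_powersetCard_tr.1 hS
    exact ⟨A, hA, hT⟩
  · rintro ⟨A, hA, hT⟩
    exact ⟨_, mem_powersetCard_tr.2 ⟨A, hA, rfl⟩, hT⟩

lemma tr_mem_polyad_iff_cls (hP : P.IsLabeled k a) {i : ℕ} (hi : 2 ≤ i) (hik : i ≤ k - 1)
    (hA : A ∈ B.powersetCard i) :
    tr A y ∈ P.polyad i (tr B x) ↔ tr A y ∈ P.cls i (tr A x) := by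
  rw [mem_polyad_tr hi]
  refine ⟨?_, fun h => ⟨A, hA, h⟩⟩
  rintro ⟨A', hA', h⟩
  have hc := tr_mem_cross hP (mem_powersetCard.1 hA').2 x
  have := image_vIdx_eq_of_mem_polyCliques hP hi hik hc (cls_subset_polyCliques hP hi hik hc h)
  rw [image_vIdx_tr, image_vIdx_tr] at this
  rwa [← idxSet_injective this] at h

lemma vClass_part (hP : P.IsLabeled k a) {i : Idx (a 1)} (v w : P.Part (a 1) i) :
    P.vClass v.1 = P.vClass w.1 :=
  (hP.2.2.1 _ (part_mem_gnd v) _ (part_mem_gnd w)).1 (by rw [vIdx_part, vIdx_part])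

lemma tr_mem_polyad_one (hP : P.IsLabeled k a) (hA : A ∈ B.powersetCard 1) :
    tr A y ∈ P.polyad 1 (tr B x) := by
  obtain ⟨hAB, hA1⟩ := mem_powersetCard.1 hA
  obtain ⟨i, rfl⟩ := card_eq_one.1 hA1
  have : tr {i} y = {(y i).1} := by simp [tr]
  rw [this, mem_polyad_one]
  refine ⟨(x i).1, mem_tr.2 ⟨i, hAB (mem_singleton_self i), rfl⟩, ?_⟩
  rw [vClass_part hP (x i) (y i)]
  exact hP.1.1 _ (part_mem_gnd (y i))

lemma polyad_one_eq (hP : P.IsLabeled k a) : P.polyad 1 (tr B x) = P.polyad 1 (tr B y) := by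
  simp only [PartFam.polyad, if_true]
  congr 1
  ext v
  simp only [mem_sup, mem_tr]
  constructor
  · rintro ⟨_, ⟨i, hi, rfl⟩, h⟩
    exact ⟨_, ⟨i, hi, rfl⟩, vClass_part hP (x i) (y i) ▸ h⟩
  · rintro ⟨_, ⟨i, hi, rfl⟩, h⟩
    exact ⟨_, ⟨i, hi, rfl⟩, vClass_part hP (y i) (x i) ▸ h⟩

lemma polyad_eq_of_mem_cls (hP : P.IsLabeled k a) {i : ℕ} (hi : 1 ≤ i) (hik : i ≤ k - 1)
    (h : ∀ A ∈ B.powersetCard i, 2 ≤ i → tr A y ∈ P.cls i (tr A x)) :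
    P.polyad i (tr B x) = P.polyad i (tr B y) := by
  rcases hi.eq_or_lt with rfl | hi
  · exact polyad_one_eq hP
  · ext T
    rw [mem_polyad_tr hi, mem_polyad_tr hi]
    refine exists_congr fun A => and_congr_right fun hA => ?_
    rw [cls_eq_of_mem hP hi hik (tr_mem_cross hP (mem_powersetCard.1 hA).2 x) (h A hA hi)]

lemma Agree.mono (h : Agree B x y) (hA : A ⊆ B) : Agree A x y :=
  fun A' hA' => h A' (hA'.trans hA)

lemma Agree.of_card_le (h : #B ≤ 1) : Agree B x y := fun A hA h2 => by
  have := card_le_card hA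
  omega

lemma mem_polyCliques_iff_polyad (hP : P.IsLabeled k a) {j : ℕ} (hB : #B = j) :
    tr B y ∈ P.polyCliques j (tr B x) ↔
      ∀ A ∈ B.powersetCard (j - 1), tr A y ∈ P.polyad (j - 1) (tr B x) := by
  rw [PartFam.polyCliques, mem_KsetC_of_mem_cross _ (tr_mem_cross hP hB y)]
  constructor
  · exact fun h A hA => h _ (mem_powersetCard_tr.2 ⟨A, hA, rfl⟩)
  · rintro h S hS
    obtain ⟨A, hA, rfl⟩ := mem_powersetCard_tr.1 hS
    exact h A hA

lemma mem_cls_iff (hP : P.IsLabeled k a) {j : ℕ} (hj : 2 ≤ j) :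
    j ≤ k - 1 → ∀ {B : Finset (Idx (a 1))} {x y : ∀ i, P.Part (a 1) i}, #B = j →
      (tr B y ∈ P.cls j (tr B x) ↔ Agree B x y) := by
  induction j using Nat.strong_induction_on with
  | _ j ih =>
  intro hjk B x y hB
  have hx := tr_mem_cross hP hB x
  have hy := tr_mem_cross hP hB y
  have key : (∀ A ∈ B.powersetCard (j - 1), tr A y ∈ P.polyad (j - 1) (tr B x)) ↔
      ∀ A ∈ B.powersetCard (j - 1), Agree A x y := by
    refine forall₂_congr fun A hA => ?_
    have hA1 := (mem_powersetCard.1 hA).2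
    rcases Nat.lt_or_ge 2 j with h | h
    · rw [tr_mem_polyad_iff_cls hP (by omega) (by omega) hA]
      exact ih _ (by omega) (by omega) (by omega) hA1
    · have : j = 2 := by omega
      subst this
      exact iff_of_true (tr_mem_polyad_one hP hA) (Agree.of_card_le hA1.le)
  constructor
  · intro h A hA h2
    rcases hA.eq_or_ssubset with rfl | hA'
    · rw [hB]
      exact ((hP.2.2.2 j hj hjk).2.1 _ hx _ h).symm
    · have h3 := key.1 ((mem_polyCliques_iff_polyad hP hB).1
        (cls_subset_polyCliques hP hj hjk hx h))
      obtain ⟨C, hAC, hCB, hC⟩ := exists_subsuperset_card_eq (n := j - 1) hA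
        (by have := card_lt_card hA'; omega) (by omega)
      exact h3 C (mem_powersetCard.2 ⟨hCB, hC⟩) A hAC h2
  · intro h
    have hpoly : P.polyad (j - 1) (tr B x) = P.polyad (j - 1) (tr B y) :=
      polyad_eq_of_mem_cls hP (by omega) (by omega) fun A hA h2 =>
        (ih (j - 1) (by omega) h2 (by omega) (mem_powersetCard.1 hA).2).2
          (h.mono (mem_powersetCard.1 hA).1)
    rw [(hP.2.2.2 j hj hjk).2.2 _ hx _ hy hpoly (by simpa [hB] using h B subset_rfl (by omega))]
    exact mem_cls_self hP hj hjk hy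

lemma tr_mem_polyad_iff (hP : P.IsLabeled k a) {i : ℕ} (hi : 1 ≤ i) (hik : i ≤ k - 1)
    (hA : A ∈ B.powersetCard i) : tr A y ∈ P.polyad i (tr B x) ↔ Agree A x y := by
  have hA' := mem_powersetCard.1 hA
  rcases hi.eq_or_lt with rfl | hi
  · exact iff_of_true (tr_mem_polyad_one hP hA) (Agree.of_card_le hA'.2.le)
  · rw [tr_mem_polyad_iff_cls hP hi hik hA, mem_cls_iff hP hi hik hA'.2]

lemma forall_agree_iff {j : ℕ} (hB : #B = j) (hj : 1 ≤ j) :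
    (∀ A ∈ B.powersetCard (j - 1), Agree A x y) ↔
      ∀ A ∈ B.ssubsets, 2 ≤ #A → P.lbl #A (tr A x) = P.lbl #A (tr A y) := by
  constructor
  · intro h A hA h2
    rw [mem_ssubsets] at hA
    obtain ⟨C, hAC, hCB, hC⟩ := exists_subsuperset_card_eq (n := j - 1) hA.subset
      (by have := card_lt_card hA; omega) (by omega)
    exact h C (mem_powersetCard.2 ⟨hCB, hC⟩) A hAC h2
  · intro h A hA A' hA' h2
    rw [mem_powersetCard] at hA
    refine h A' (mem_ssubsets.2 ?_) h2
    refine (hA'.trans hA.1).ssubset_of_ne ?_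
    rintro rfl
    have := card_le_card hA'
    omega

lemma tr_mem_polyCliques_iff (hP : P.IsLabeled k a) {j : ℕ} (hj : 2 ≤ j) (hjk : j ≤ k - 1)
    (hB : #B = j) : tr B y ∈ P.polyCliques j (tr B x) ↔
      ∀ A ∈ B.ssubsets, 2 ≤ #A → P.lbl #A (tr A x) = P.lbl #A (tr A y) := by
  rw [mem_polyCliques_iff_polyad hP hB, ← forall_agree_iff hB (by omega)]
  exact forall₂_congr fun A hA => tr_mem_polyad_iff hP (by omega) (by omega) hA

/-- Every label occurs in every polyad. -/
lemma exists_lbl_eq (hP : P.IsLabeled k a) {j : ℕ} (hj : 2 ≤ j) (hjk : j ≤ k - 1) (hB : #B = j)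
    (x : ∀ i, P.Part (a 1) i) {b : ℕ} (hb : 1 ≤ b) (hba : b ≤ a j) :
    ∃ y : ∀ i, P.Part (a 1) i, P.lbl j (tr B y) = b ∧
      ∀ A ∈ B.ssubsets, 2 ≤ #A → P.lbl #A (tr A x) = P.lbl #A (tr A y) := by
  classical
  have hx := tr_mem_cross hP hB x
  obtain ⟨hlb, hlbl, hlinj⟩ := hP.2.2.2 j hj hjk
  have hcr := polyCliques_subset_cross hP hj hjk hx
  have hrep : ∀ T ∈ P.polyCliques j (tr B x), ∃ y : ∀ i, P.Part (a 1) i, T = tr B y := by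
    intro T hT
    refine exists_eq_tr_of_image_eq hP (hcr hT) ?_
    rw [image_vIdx_eq_of_mem_polyCliques hP hj hjk hx hT, image_vIdx_tr]
  have himg : (P.polyCliques j (tr B x)).image (P.lbl j) = Icc 1 (a j) := by
    refine eq_of_subset_of_card_le (fun n hn => ?_) ?_
    · obtain ⟨T, hT, rfl⟩ := mem_image.1 hn
      exact mem_Icc.2 (hlb T (hcr hT))
    · rw [Nat.card_Icc, Nat.add_sub_cancel, ← (hP.1.2.2.2.2.2 j hj hjk).2.2.2.2 _ hx]
      refine card_le_card_of_surjOn (fun n => if h : ∃ T ∈ P.polyCliques j (tr B x),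
        P.lbl j T = n then P.cls j h.choose else ∅) ?_
      intro C hC
      obtain ⟨T, hT, rfl⟩ := mem_image.1 (mem_coe.1 hC)
      have h : ∃ T' ∈ P.polyCliques j (tr B x), P.lbl j T' = P.lbl j T := ⟨T, hT, rfl⟩
      refine ⟨P.lbl j T, mem_coe.2 (mem_image_of_mem _ hT), ?_⟩
      simp only [dif_pos h]
      obtain ⟨h1, h2⟩ := h.choose_spec
      refine hlinj _ (hcr h1) _ (hcr hT) ?_ h2
      have hpoly : ∀ S ∈ P.polyCliques j (tr B x),
          P.polyad (j - 1) S = P.polyad (j - 1) (tr B x) := by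
        intro S hS
        obtain ⟨y, rfl⟩ := hrep S hS
        rw [tr_mem_polyCliques_iff hP hj hjk hB, ← forall_agree_iff hB (by omega)] at hS
        exact (polyad_eq_of_mem_cls hP (by omega) (by omega) fun A hA h2 =>
          (mem_cls_iff hP h2 (by omega) (mem_powersetCard.1 hA).2).2 (hS A hA)).symm
      rw [hpoly _ h1, hpoly _ hT]
  have : b ∈ (P.polyCliques j (tr B x)).image (P.lbl j) := by
    rw [himg]
    exact mem_Icc.2 ⟨hb, hba⟩
  obtain ⟨T, hT, h⟩ := mem_image.1 this
  obtain ⟨y, rfl⟩ := hrep T hT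
  exact ⟨y, h, (tr_mem_polyCliques_iff hP hj hjk hB).1 hT⟩

end Cells

section Address

variable {k : ℕ} {a : ℕ → ℕ} {Z : Finset (Idx (a 1))} {z : Addr}

lemma addrOf_tr_eq_iff {j : ℕ} {A B : Finset (Idx (a 1))} {x : ∀ i, P.Part (a 1) i} :
    P.addrOf j (tr A x) = restrictA z j (idxSet B) ↔
      A = B ∧ ∀ C ⊆ B, 2 ≤ #C → #C ≤ j → P.lbl #C (tr C x) = z.2 (idxSet C) := by
  unfold LabFam.addrOf restrictA
  rw [Prod.mk.injEq, image_vIdx_tr, idxSet_injective.eq_iff]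
  refine and_congr_right ?_
  rintro rfl
  constructor
  · intro h C hC h2 hj
    have := congrFun h (idxSet C)
    simp only [idxSet_subset_idxSet, card_idxSet, hC, h2, hj, and_self, if_true] at this
    rw [← this, filter_tr hC]
  · intro h
    funext M
    split_ifs with hM
    · obtain ⟨hMA, h2, hj⟩ := hM
      obtain ⟨C, hC, rfl⟩ := exists_idxSet_eq_of_subset hMA
      rw [card_idxSet] at h2 hj ⊢
      rw [filter_tr hC]
      exact h C hC h2 hj
    · rfl

lemma mem_polyAt_iff (hP : P.IsLabeled k a) {j : ℕ} (hj : 2 ≤ j) (hZ : idxSet Z = z.1)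
    {T : Finset V₁} : T ∈ P.polyAt j z ↔ ∃ B ∈ Z.powersetCard j, ∃ x : ∀ i, P.Part (a 1) i,
      T = tr B x ∧ ∀ A ⊆ B, 2 ≤ #A → P.lbl #A (tr A x) = z.2 (idxSet A) := by
  classical
  rw [LabFam.polyAt, if_neg (by omega), mem_sup]
  constructor
  · rintro ⟨M, hM, hT⟩
    rw [← hZ, mem_powersetCard] at hM
    obtain ⟨B, hB, rfl⟩ := exists_idxSet_eq_of_subset hM.1
    rw [LabFam.partAt, if_neg (by omega), mem_filter] at hT
    obtain ⟨hT, haddr, hlbl⟩ := hT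
    obtain ⟨A, x, hA, rfl⟩ := exists_eq_tr_of_mem_cross hP hT
    obtain ⟨rfl, h⟩ := addrOf_tr_eq_iff.1 haddr
    refine ⟨A, mem_powersetCard.2 ⟨hB, hA⟩, x, rfl, fun C hC h2 => ?_⟩
    rcases hC.eq_or_ssubset with rfl | hC'
    · rw [hA, hlbl]
    · have := card_lt_card hC'
      exact h C hC h2 (by omega)
  · rintro ⟨B, hB, x, rfl, h⟩
    rw [mem_powersetCard] at hB
    refine ⟨idxSet B, ?_, ?_⟩
    · rw [← hZ, mem_powersetCard, card_idxSet]
      exact ⟨idxSet_subset_idxSet.2 hB.1, hB.2⟩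
    · rw [LabFam.partAt, if_neg (by omega), mem_filter]
      refine ⟨tr_mem_cross hP hB.2 x, addrOf_tr_eq_iff.2 ⟨rfl, fun C hC h2 _ => h C hC h2⟩, ?_⟩
      have := h B subset_rfl (by omega)
      rwa [hB.2] at this

/-- The cliques of the polyad with address `z`. -/
lemma mem_KsetC_polyAt_iff (hP : P.IsLabeled k a) (hk : 2 ≤ k) (hZ : idxSet Z = z.1)
    (hZk : #Z = k) {T : Finset V₁} :
    T ∈ KsetC P.gnd (P.cross k) (k - 1) k (P.polyAt (k - 1) z) ↔
      ∃ x : ∀ i, P.Part (a 1) i, T = tr Z x ∧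
        ∀ A ∈ Z.ssubsets, 2 ≤ #A → P.lbl #A (tr A x) = z.2 (idxSet A) := by
  rcases hk.eq_or_lt with rfl | hk3
  · have hvac : ∀ x : ∀ i, P.Part (a 1) i,
        ∀ A ∈ Z.ssubsets, 2 ≤ #A → P.lbl #A (tr A x) = z.2 (idxSet A) := by
      intro x A hA h2
      have := card_lt_card (mem_ssubsets.1 hA)
      omega
    constructor
    · intro hT
      rw [KsetC, if_pos rfl, mem_filter] at hT
      obtain ⟨B, x, hB, rfl⟩ := exists_eq_tr_of_mem_cross hP hT.1
      have hBZ : B = Z := by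
        refine eq_of_subset_of_card_le (fun i hi => ?_) (by omega)
        have := hT.2 _ (mem_tr.2 ⟨i, hi, rfl⟩)
        simp only [LabFam.polyAt, if_true, Nat.add_one_sub_one, sing, mem_image, mem_filter,
          singleton_inj] at this
        obtain ⟨v, ⟨_, hv⟩, rfl⟩ := this
        rwa [vIdx_part, ← hZ, mem_idxSet] at hv
      subst hBZ
      exact ⟨x, rfl, hvac x⟩
    · rintro ⟨x, rfl, _⟩
      rw [KsetC, if_pos rfl, mem_filter]
      refine ⟨tr_mem_cross hP hZk x, fun v hv => ?_⟩
      obtain ⟨i, hi, rfl⟩ := mem_tr.1 hv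
      simp only [LabFam.polyAt, if_true, Nat.add_one_sub_one, sing, mem_image, mem_filter,
        singleton_inj]
      exact ⟨_, ⟨part_mem_gnd _, by rwa [vIdx_part, ← hZ, mem_idxSet]⟩, rfl⟩
  · have hk1 : 2 ≤ k - 1 := by omega
    constructor
    · intro hT
      rw [KsetC, if_neg (by omega), Kset, mem_filter, mem_powersetCard] at hT
      obtain ⟨⟨hTg, hTk⟩, hT⟩ := hT
      simp only [mem_polyAt_iff hP hk1 hZ] at hT
      have hcov : ∀ U ⊆ T, #U ≤ 2 → ∃ B ∈ Z.powersetCard (k - 1),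
          ∃ x : ∀ i, P.Part (a 1) i, U ⊆ tr B x := by
        intro U hU hU2
        obtain ⟨R, hUR, hRT, hR⟩ := exists_subsuperset_card_eq (n := k - 1) hU
          (by omega) (by omega)
        obtain ⟨B, hB, x, rfl, _⟩ := hT R (mem_powersetCard.2 ⟨hRT, hR⟩)
        exact ⟨B, hB, x, hUR⟩
      obtain ⟨B, x, rfl⟩ := exists_eq_tr hP hTg fun u hu v hv huv => by
        obtain ⟨B, _, x, hB⟩ := hcov {u, v} (by
          intro w hw
          rcases mem_insert.1 hw with rfl | hw
          · exact hu
          · rw [mem_singleton.1 hw]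
            exact hv) card_le_two
        obtain ⟨i, _, rfl⟩ := mem_tr.1 (hB (mem_insert_self u {v}))
        obtain ⟨j, _, rfl⟩ := mem_tr.1 (hB (mem_insert_of_mem (mem_singleton_self v)))
        rw [vIdx_part, vIdx_part] at huv
        rw [Subtype.ext huv]
      rw [card_tr] at hTk
      have hBZ : B = Z := by
        refine eq_of_subset_of_card_le (fun i hi => ?_) (by omega)
        obtain ⟨C, hC, y, hCy⟩ := hcov {(x i).1}
          (singleton_subset_iff.2 (mem_tr.2 ⟨i, hi, rfl⟩)) (by simp)
        obtain ⟨j, hj, hji⟩ := mem_tr.1 (singleton_subset_iff.1 hCy)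
        have : j = i := Subtype.ext (by rw [← vIdx_part (y j), hji, vIdx_part])
        exact this ▸ (mem_powersetCard.1 hC).1 hj
      subst hBZ
      refine ⟨x, rfl, fun A hA h2 => ?_⟩
      rw [mem_ssubsets] at hA
      obtain ⟨C, hAC, hCB, hC⟩ := exists_subsuperset_card_eq (n := k - 1) hA.subset
        (by have := card_lt_card hA; omega) (by omega)
      obtain ⟨C', _, y, hy, hlbl⟩ := hT _
        (mem_powersetCard_tr.2 ⟨C, mem_powersetCard.2 ⟨hCB, hC⟩, rfl⟩)
      obtain ⟨rfl, hxy⟩ := tr_eq_tr hy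
      rw [← hlbl A hAC h2, tr_dependsOn A fun i hi => hxy i (hAC hi)]
    · rintro ⟨x, rfl, hlbl⟩
      rw [mem_KsetC_of_mem_cross _ (tr_mem_cross hP hZk x)]
      intro S hS
      obtain ⟨B, hB, rfl⟩ := mem_powersetCard_tr.1 hS
      rw [mem_polyAt_iff hP hk1 hZ]
      refine ⟨B, hB, x, rfl, fun A hA h2 => hlbl A (mem_ssubsets.2 ?_) h2⟩
      rw [mem_powersetCard] at hB
      refine (hA.trans hB.1).ssubset_of_ne ?_
      rintro rfl
      have := card_le_card hA
      omega

end Address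

section Labels

variable {k o : ℕ} {a : ℕ → ℕ}

/-- The label of a partial transversal. -/
noncomputable def labelOf (P : LabFam V₁) (k o : ℕ) (B : Finset (Idx N)) (x : ∀ i, P.Part N i) :
    Fin (o + 1) :=
  if 2 ≤ #B ∧ #B ≤ k - 1 then Fin.ofNat (o + 1) (P.lbl #B (tr B x)) else 0

/-- The density of the parts with label `b`. -/
noncomputable def labelDens (k o : ℕ) (a : ℕ → ℕ) (B : Finset (Idx N)) (b : Fin (o + 1)) : ℝ :=
  if 2 ≤ #B ∧ #B ≤ k - 1 then if 1 ≤ (b : ℕ) ∧ (b : ℕ) ≤ a #B then 1 / a #B else 0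
  else if b = 0 then 1 else 0

lemma labelDens_nonneg (B : Finset (Idx N)) (b : Fin (o + 1)) : 0 ≤ labelDens k o a B b := by
  unfold labelDens
  split_ifs <;> positivity

lemma one_div_natCast_le_one (n : ℕ) : 1 / (n : ℝ) ≤ 1 := by
  rw [one_div]
  exact Nat.cast_inv_le_one n

lemma labelDens_le_one (B : Finset (Idx N)) (b : Fin (o + 1)) : labelDens k o a B b ≤ 1 := by
  unfold labelDens
  split_ifs
  · exact one_div_natCast_le_one _
  all_goals norm_num

lemma labelOf_dependsOn (B : Finset (Idx N)) : DependsOn (labelOf P k o B) B := fun x y h => by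
  rw [labelOf, labelOf, tr_dependsOn B h]

lemma labelOf_eq_iff (hP : P.IsLabeled k a) (ha : ∀ i, 1 ≤ i → i ≤ k - 1 → a i ≤ o)
    {B : Finset (Idx N)} (hB : 2 ≤ #B ∧ #B ≤ k - 1) {x : ∀ i, P.Part N i} {b : Fin (o + 1)} :
    labelOf P k o B x = b ↔ P.lbl #B (tr B x) = b := by
  have h1 := ((hP.2.2.2 _ hB.1 hB.2).1 _ (tr_mem_cross hP rfl x)).2
  have h2 := ha #B (by omega) hB.2
  rw [labelOf, if_pos hB, Fin.ext_iff, Fin.val_ofNat, Nat.mod_eq_of_lt (by omega)]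

lemma labelOf_eq_labelOf_iff (hP : P.IsLabeled k a) (ha : ∀ i, 1 ≤ i → i ≤ k - 1 → a i ≤ o)
    {B : Finset (Idx N)} (hB : 2 ≤ #B ∧ #B ≤ k - 1) {x y : ∀ i, P.Part N i} :
    labelOf P k o B x = labelOf P k o B y ↔ P.lbl #B (tr B x) = P.lbl #B (tr B y) := by
  rw [labelOf_eq_iff hP ha hB, ← (labelOf_eq_iff hP ha hB (x := y)).1 rfl]

/-- The labels of all the proper subtransversals of the transversal of `B`. -/
noncomputable def lowPat (P : LabFam V₁) (k o : ℕ) (B : Finset (Idx N)) (x : ∀ i, P.Part N i) :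
    Finset (Idx N) → Fin (o + 1) := fun A => if A ⊂ B then labelOf P k o A x else 0

lemma lowPat_dependsOn (B : Finset (Idx N)) : DependsOn (lowPat P k o B) B := fun x y h => by
  funext A
  unfold lowPat
  split_ifs with hA
  · exact labelOf_dependsOn A fun i hi => h i (hA.subset hi)
  · rfl

lemma lowPat_eq_lowPat_iff (hP : P.IsLabeled k a) (ha : ∀ i, 1 ≤ i → i ≤ k - 1 → a i ≤ o)
    {B : Finset (Idx N)} (hB : #B ≤ k - 1) {x y : ∀ i, P.Part N i} :
    lowPat P k o B x = lowPat P k o B y ↔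
      ∀ A ∈ B.ssubsets, 2 ≤ #A → P.lbl #A (tr A x) = P.lbl #A (tr A y) := by
  constructor
  · intro h A hA h2
    rw [mem_ssubsets] at hA
    have h' := congrFun h A
    simp only [lowPat, if_pos hA] at h'
    exact (labelOf_eq_labelOf_iff hP ha ⟨h2, (card_lt_card hA).le.trans hB⟩).1 h'
  · intro h
    funext A
    unfold lowPat
    split_ifs with hA
    · by_cases h2 : 2 ≤ #A
      · exact (labelOf_eq_labelOf_iff hP ha ⟨h2, (card_lt_card hA).le.trans hB⟩).2
          (h A (mem_ssubsets.2 hA) h2)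
      · rw [labelOf, labelOf, if_neg (fun h => h2 h.1), if_neg (fun h => h2 h.1)]
    · rfl

lemma abs_mul_sub_le_of_regular {c n s t d ε : ℝ} (hc : 0 ≤ c) (hd0 : 0 ≤ d) (hd1 : d ≤ 1)
    (hε : 0 ≤ ε) (ht0 : 0 ≤ t) (hts : t ≤ s) (hn : c * n ≤ 1) (hs : c * s ≤ 1)
    (h : ε * n ≤ s → |t - d * s| ≤ ε * s) : |c * t - d * (c * s)| ≤ ε := by
  have e : c * t - d * (c * s) = c * (t - d * s) := by ring
  rw [e, abs_mul, abs_of_nonneg hc]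
  rcases le_or_gt (ε * n) s with h1 | h1
  · calc c * |t - d * s| ≤ c * (ε * s) := mul_le_mul_of_nonneg_left (h h1) hc
      _ = ε * (c * s) := by ring
      _ ≤ ε * 1 := mul_le_mul_of_nonneg_left hs hε
      _ = ε := mul_one ε
  · have hds : d * s ≤ 1 * s := mul_le_mul_of_nonneg_right hd1 (ht0.trans hts)
    have hds0 : 0 ≤ d * s := mul_nonneg hd0 (ht0.trans hts)
    calc c * |t - d * s| ≤ c * (ε * n) :=
          mul_le_mul_of_nonneg_left ((abs_le.2 ⟨by linarith, by linarith⟩).trans h1.le) hc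
      _ = ε * (c * n) := by ring
      _ ≤ ε * 1 := mul_le_mul_of_nonneg_left hn hε
      _ = ε := mul_one ε

/-- Regularity of a polyad in terms of random transversals. -/
lemma abs_expect_cell_le (hP : P.IsLabeled k a) (ha : ∀ i, 1 ≤ i → i ≤ k - 1 → a i ≤ o)
    {ε : ℝ} (hε : 0 ≤ ε) (hreg : P.PolyadReg k a ε) {B : Finset (Idx (a 1))} {j : ℕ}
    (hBj : #B = j) (hj : 2 ≤ j) (hjk : j ≤ k - 1) {b : Fin (o + 1)} (hb : 1 ≤ (b : ℕ))
    (hba : (b : ℕ) ≤ a j) {u : Idx (a 1) → (∀ i, P.Part (a 1) i) → Prop}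
    (hu : ∀ i ∈ B, DependsOn (u i) (B.erase i)) (θ : Finset (Idx (a 1)) → Fin (o + 1)) :
    |𝔼 x, (ind (labelOf P k o B x = b) - 1 / a j) *
      ind (lowPat P k o B x = θ ∧ ∀ i ∈ B, u i x)| ≤ ε := by
  classical
  have := nonempty_part hP
  by_cases hθ : ∃ x₀, lowPat P k o B x₀ = θ
  swap
  · have : ∀ x, ind (lowPat P k o B x = θ ∧ ∀ i ∈ B, u i x) = 0 := fun x =>
      ind_false fun h => hθ ⟨x, h.1⟩
    simp only [this, mul_zero, expect_const_zero, abs_zero]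
    exact hε
  obtain ⟨x₀, rfl⟩ := hθ
  obtain ⟨x₁, hx₁, hagree⟩ := exists_lbl_eq hP hj hjk hBj x₀ hb hba
  have hBk : #B ≤ k - 1 := by omega
  have hcell : ∀ x, lowPat P k o B x = lowPat P k o B x₀ ↔ tr B x ∈ P.polyCliques j (tr B x₁) := by
    intro x
    rw [(lowPat_eq_lowPat_iff hP ha hBk).2 hagree, tr_mem_polyCliques_iff hP hj hjk hBj,
      eq_comm, lowPat_eq_lowPat_iff hP ha hBk]
  obtain ⟨Z, hBZ, -, hZ⟩ := exists_subsuperset_card_eq (n := k) (subset_univ B) (by omega)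
    (by simpa using hP.1.2.2.2.2.1)
  have hR := hreg (tr Z x₁) (tr_mem_cross hP hZ x₁) j hj hjk (tr B x₁)
    (mem_powersetCard_tr.2 ⟨B, mem_powersetCard.2 ⟨hBZ, hBj⟩, rfl⟩)
  have hj1 : j - 1 + 1 = j := by omega
  set R : Finset (Finset V₁) := (P.polyad (j - 1) (tr B x₁)).filter fun S =>
    ∃ i ∈ B, ∃ x, S = tr (B.erase i) x ∧ u i x with hRdef
  have hRsub : R ⊆ P.polyad (j - 1) (tr B x₁) := filter_subset _ _
  have hQ := hR R hRsub
  rw [hj1] at hQ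
  have hdep : DependsOn (fun x => ∀ i ∈ B, u i x) B := fun x y h => by
    refine propext (forall₂_congr fun i hi => ?_)
    exact (hu i hi (fun i' hi' => h i' (erase_subset _ _ hi'))).to_iff
  have hclique : ∀ x, tr B x ∈ KsetC P.gnd (P.cross j) (j - 1) j R ↔
      lowPat P k o B x = lowPat P k o B x₀ ∧ ∀ i ∈ B, u i x := by
    intro x
    rw [hcell, PartFam.polyCliques, mem_KsetC_of_mem_cross _ (tr_mem_cross hP hBj x),
      mem_KsetC_of_mem_cross _ (tr_mem_cross hP hBj x)]
    constructor
    · intro h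
      refine ⟨fun S hS => hRsub (h S hS), fun i hi => ?_⟩
      have := h (tr (B.erase i) x) (mem_powersetCard_tr.2 ⟨_, mem_powersetCard.2
        ⟨erase_subset _ _, by rw [card_erase_of_mem hi, hBj]⟩, rfl⟩)
      obtain ⟨_, i', hi', y, hy, huy⟩ := mem_filter.1 this
      obtain ⟨he, hxy⟩ := tr_eq_tr hy
      have hii : i = i' := by
        by_contra hne
        have : i ∈ B.erase i' := mem_erase.2 ⟨hne, hi⟩
        rw [← he] at this
        exact notMem_erase i B this
      subst hii
      rwa [hu i hi hxy]
    · rintro ⟨h, hux⟩ S hS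
      refine mem_filter.2 ⟨h S hS, ?_⟩
      obtain ⟨A, hA, rfl⟩ := mem_powersetCard_tr.1 hS
      rw [mem_powersetCard] at hA
      obtain ⟨i, hi⟩ := card_eq_one.1 (show #(B \ A) = 1 by
        rw [card_sdiff_of_subset hA.1]
        omega)
      have hiB : i ∈ B := (mem_sdiff.1 (hi ▸ mem_singleton_self i)).1
      refine ⟨i, hiB, x, ?_, hux i hiB⟩
      rw [← sdiff_singleton_eq_erase, ← hi, Finset.sdiff_sdiff_eq_self hA.1]
  have hrep : ∀ T ∈ P.polyCliques j (tr B x₁), ∃ y : ∀ i, P.Part (a 1) i, T = tr B y := by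
    intro T hT
    have hx := tr_mem_cross hP hBj x₁
    refine exists_eq_tr_of_image_eq hP (polyCliques_subset_cross hP hj hjk hx hT) ?_
    rw [image_vIdx_eq_of_mem_polyCliques hP hj hjk hx hT, image_vIdx_tr]
  have hKmono : KsetC P.gnd (P.cross j) (j - 1) j R ⊆ P.polyCliques j (tr B x₁) := by
    unfold PartFam.polyCliques KsetC Kset
    split_ifs
    · exact monotone_filter_right _ fun S _ h v hv => hRsub (h v hv)
    · exact monotone_filter_right _ fun S _ h v hv => hRsub (h v hv)
  have hS1 : ∀ T, T ∈ P.polyCliques j (tr B x₁) ↔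
      ∃ x, T = tr B x ∧ lowPat P k o B x = lowPat P k o B x₀ := by
    intro T
    constructor
    · intro hT
      obtain ⟨x, rfl⟩ := hrep T hT
      exact ⟨x, rfl, (hcell x).2 hT⟩
    · rintro ⟨x, rfl, hx⟩
      exact (hcell x).1 hx
  have hS2 : ∀ T, T ∈ KsetC P.gnd (P.cross j) (j - 1) j R ↔
      ∃ x, T = tr B x ∧ (lowPat P k o B x = lowPat P k o B x₀ ∧ ∀ i ∈ B, u i x) := by
    intro T
    constructor
    · intro hT
      obtain ⟨x, rfl⟩ := hrep T (hKmono hT)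
      exact ⟨x, rfl, (hclique x).1 hT⟩
    · rintro ⟨x, rfl, hx⟩
      exact (hclique x).2 hx
  have hlab : ∀ x, lowPat P k o B x = lowPat P k o B x₀ →
      (tr B x ∈ P.polyad j (tr Z x₁) ↔ labelOf P k o B x = b) := by
    intro x hx
    rw [hcell, tr_mem_polyCliques_iff hP hj hjk hBj] at hx
    rw [tr_mem_polyad_iff hP (by omega) hjk (mem_powersetCard.2 ⟨hBZ, hBj⟩),
      labelOf_eq_iff hP ha ⟨by omega, hBk⟩, hBj, ← hx₁]
    constructor
    · intro h
      simpa [hBj] using (h B subset_rfl (by omega)).symm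
    · intro h A hA h2
      rcases hA.eq_or_ssubset with rfl | hA'
      · rw [hBj, h]
      · exact hx A (mem_ssubsets.2 hA') h2
  have hS3 : ∀ T, T ∈ P.polyad j (tr Z x₁) ∩ KsetC P.gnd (P.cross j) (j - 1) j R ↔
      ∃ x, T = tr B x ∧ (labelOf P k o B x = b ∧
        (lowPat P k o B x = lowPat P k o B x₀ ∧ ∀ i ∈ B, u i x)) := by
    intro T
    rw [mem_inter, hS2]
    constructor
    · rintro ⟨h1, x, rfl, hx⟩
      exact ⟨x, rfl, (hlab x hx.1).1 h1, hx⟩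
    · rintro ⟨x, rfl, h1, hx⟩
      exact ⟨(hlab x hx.1).2 h1, x, rfl, hx⟩
  obtain ⟨c, hc, hcount⟩ := exists_expect_eq_mul_card (P := P) B
  have hd1 : DependsOn (fun x => lowPat P k o B x = lowPat P k o B x₀) B := fun x y h => by
    simp only [lowPat_dependsOn B h]
  have hd2 : DependsOn (fun x => lowPat P k o B x = lowPat P k o B x₀ ∧ ∀ i ∈ B, u i x) B :=
    fun x y h => by
      have := hdep h
      simp only at this
      simp only [lowPat_dependsOn B h, this]
  have hd3 : DependsOn (fun x => labelOf P k o B x = b ∧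
      (lowPat P k o B x = lowPat P k o B x₀ ∧ ∀ i ∈ B, u i x)) B :=
    fun x y h => by
      have := hd2 h
      simp only at this
      simp only [labelOf_dependsOn B h, this]
  have e1 := hcount _ _ hd1 hS1
  have e2 := hcount _ _ hd2 hS2
  have e3 := hcount _ _ hd3 hS3
  have hle : ∀ p : (∀ i, P.Part (a 1) i) → Prop, 𝔼 x, ind (p x) ≤ 1 := fun p =>
    expect_le univ_nonempty fun x _ => ind_le_one _
  have hsplit : 𝔼 x, (ind (labelOf P k o B x = b) - 1 / a j) *
      ind (lowPat P k o B x = lowPat P k o B x₀ ∧ ∀ i ∈ B, u i x) =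
      𝔼 x, ind (labelOf P k o B x = b ∧
        (lowPat P k o B x = lowPat P k o B x₀ ∧ ∀ i ∈ B, u i x)) -
      1 / a j * 𝔼 x, ind (lowPat P k o B x = lowPat P k o B x₀ ∧ ∀ i ∈ B, u i x) := by
    rw [mul_expect, ← expect_sub_distrib]
    refine expect_congr rfl fun x _ => ?_
    rw [ind_and (labelOf P k o B x = b)]
    ring
  rw [hsplit, e2, e3]
  refine abs_mul_sub_le_of_regular hc.le (by positivity) (one_div_natCast_le_one _) hε
    (Nat.cast_nonneg _) (Nat.cast_le.2 (card_le_card inter_subset_right))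
    (n := #(P.polyCliques j (tr B x₁))) (e1 ▸ hle _) (e2 ▸ hle _) hQ

/-- The labels of an equitable family are quasirandom. -/
lemma cutLE_labelOf (hP : P.IsLabeled k a) (ha : ∀ i, 1 ≤ i → i ≤ k - 1 → a i ≤ o)
    {ε : ℝ} (hε : 0 ≤ ε) (hreg : P.PolyadReg k a ε) (B : Finset (Idx (a 1))) (b : Fin (o + 1)) :
    CutLE B (fun x => ind (labelOf P k o B x = b) - labelDens k o a B b)
      (Fintype.card (Finset (Idx (a 1)) → Fin (o + 1)) * ε) := by
  classical
  have := nonempty_part hP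
  intro u hu
  have hzero : (∀ x, ind (labelOf P k o B x = b) = labelDens k o a B b) →
      |𝔼 x, (ind (labelOf P k o B x = b) - labelDens k o a B b) * ind (∀ i ∈ B, u i x)| ≤
        Fintype.card (Finset (Idx (a 1)) → Fin (o + 1)) * ε := by
    intro h
    simp only [h, sub_self, zero_mul, expect_const_zero, abs_zero]
    positivity
  by_cases hB : 2 ≤ #B ∧ #B ≤ k - 1
  swap
  · refine hzero fun x => ?_
    simp [labelDens, labelOf, hB, ind, eq_comm]
  by_cases hb : 1 ≤ (b : ℕ) ∧ (b : ℕ) ≤ a #B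
  swap
  · refine hzero fun x => ?_
    rw [labelDens, if_pos hB, if_neg hb, ind_false]
    rw [labelOf_eq_iff hP ha hB]
    intro h
    exact hb (h ▸ (hP.2.2.2 _ hB.1 hB.2).1 _ (tr_mem_cross hP rfl x))
  rw [labelDens, if_pos hB, if_pos hb]
  have hsplit : 𝔼 x, (ind (labelOf P k o B x = b) - 1 / a #B) * ind (∀ i ∈ B, u i x) =
      ∑ θ, 𝔼 x, (ind (labelOf P k o B x = b) - 1 / a #B) *
        ind (lowPat P k o B x = θ ∧ ∀ i ∈ B, u i x) := by
    rw [← expect_sum_comm]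
    refine expect_congr rfl fun x _ => ?_
    simp only [ind_and (lowPat P k o B x = _)]
    rw [← mul_sum, ← sum_mul, sum_ind_eq, one_mul]
  rw [hsplit]
  refine (abs_sum_le_sum_abs _ _).trans ((sum_le_sum fun θ _ =>
    abs_expect_cell_le hP ha hε hreg rfl hB.1 hB.2 hb.1 hb.2 hu θ).trans (le_of_eq ?_))
  simp

end Labels

section Density

variable {k o : ℕ} {a : ℕ → ℕ} {Z : Finset (Idx (a 1))} {z : Addr}

/-- The labels prescribed by an address. -/
noncomputable def addrLabel (k o : ℕ) (z : Addr) (B : Finset (Idx N)) : Fin (o + 1) :=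
  if 2 ≤ #B ∧ #B ≤ k - 1 then Fin.ofNat (o + 1) (z.2 (idxSet B)) else 0

lemma val_addrLabel (ha : ∀ i, 1 ≤ i → i ≤ k - 1 → a i ≤ o) (hz : IsAddress k (k - 1) a z)
    (hZ : idxSet Z = z.1) {B : Finset (Idx (a 1))} (hBZ : B ⊆ Z) (hB : 2 ≤ #B ∧ #B ≤ k - 1) :
    (addrLabel k o z B : ℕ) = z.2 (idxSet B) ∧ 1 ≤ z.2 (idxSet B) ∧ z.2 (idxSet B) ≤ a #B := by
  have h := hz.2.2.1 (idxSet B) (by rw [← hZ]; exact idxSet_subset_idxSet.2 hBZ)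
    (by rw [card_idxSet]; exact hB.1) (by rw [card_idxSet]; exact hB.2)
  rw [card_idxSet] at h
  have h2 := ha #B (by omega) hB.2
  refine ⟨?_, h⟩
  rw [addrLabel, if_pos hB, Fin.val_ofNat, Nat.mod_eq_of_lt (by omega)]

lemma one_div_le_labelDens (ha : ∀ i, 1 ≤ i → i ≤ k - 1 → a i ≤ o)
    (hz : IsAddress k (k - 1) a z) (hZ : idxSet Z = z.1) {B : Finset (Idx (a 1))} (hBZ : B ⊆ Z) :
    1 / (o : ℝ) ≤ labelDens k o a B (addrLabel k o z B) := by
  by_cases hB : 2 ≤ #B ∧ #B ≤ k - 1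
  · obtain ⟨h1, h2, h3⟩ := val_addrLabel ha hz hZ hBZ hB
    rw [labelDens, if_pos hB, h1, if_pos ⟨h2, h3⟩]
    have h4 := ha #B (by omega) hB.2
    exact one_div_le_one_div_of_le (by exact_mod_cast (by omega : 0 < a #B)) (by exact_mod_cast h4)
  · rw [labelDens, if_neg hB, addrLabel, if_neg hB, if_pos rfl]
    exact one_div_natCast_le_one o

lemma forall_labelOf_eq_iff (hP : P.IsLabeled k a) (ha : ∀ i, 1 ≤ i → i ≤ k - 1 → a i ≤ o)
    (hz : IsAddress k (k - 1) a z) (hZ : idxSet Z = z.1) (hZk : #Z = k)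
    (x : ∀ i, P.Part (a 1) i) :
    (∀ A ∈ Z.ssubsets, 2 ≤ #A → P.lbl #A (tr A x) = z.2 (idxSet A)) ↔
      ∀ A ∈ Z.ssubsets, labelOf P k o A x = addrLabel k o z A := by
  refine forall₂_congr fun A hA => ?_
  rw [mem_ssubsets] at hA
  have hAk := card_lt_card hA
  by_cases h2 : 2 ≤ #A
  · have hA' : 2 ≤ #A ∧ #A ≤ k - 1 := ⟨h2, by omega⟩
    rw [labelOf_eq_iff hP ha hA', (val_addrLabel ha hz hZ hA.subset hA').1]
    exact ⟨fun h => h h2, fun h _ => h⟩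
  · have hA' : ¬(2 ≤ #A ∧ #A ≤ k - 1) := fun h => h2 h.1
    rw [labelOf, addrLabel, if_neg hA', if_neg hA']
    exact iff_of_true (fun h => absurd h h2) rfl

/-- The relative density of the cliques of `H` as a ratio of expectations. -/
lemma dens_eq_expect_div (hP : P.IsLabeled k a) (hk : 2 ≤ k)
    (ha : ∀ i, 1 ≤ i → i ≤ k - 1 → a i ≤ o) (hz : IsAddress k (k - 1) a z)
    (hZ : idxSet Z = z.1) (hZk : #Z = k) (H : Finset (Finset V₁)) :
    dens P.gnd (P.cross k) (k - 1) (KsetC P.gnd (P.cross k) (k - 1) k H) (P.polyAt (k - 1) z) =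
      (𝔼 x : ∀ i, P.Part (a 1) i,
        (∏ B ∈ Z.ssubsets, ind (labelOf P k o B x = addrLabel k o z B)) *
          ∏ B ∈ Z.powersetCard (k - 1), ind (tr B x ∈ H)) /
        (𝔼 x : ∀ i, P.Part (a 1) i,
          ∏ B ∈ Z.ssubsets, ind (labelOf P k o B x = addrLabel k o z B)) := by
  have := nonempty_part hP
  obtain ⟨c, hc, hcount⟩ := exists_expect_eq_mul_card (P := P) Z
  simp only [← ind_forall_mem, ← ind_and]
  have hd1 : DependsOn (fun x : ∀ i, P.Part (a 1) i => ∀ B ∈ Z.ssubsets,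
      labelOf P k o B x = addrLabel k o z B) Z := fun x y h => by
    refine propext (forall₂_congr fun B hB => ?_)
    rw [labelOf_dependsOn B fun i hi => h i ((mem_ssubsets.1 hB).subset hi)]
  have hd2 : DependsOn (fun x : ∀ i, P.Part (a 1) i => (∀ B ∈ Z.ssubsets,
      labelOf P k o B x = addrLabel k o z B) ∧ ∀ B ∈ Z.powersetCard (k - 1), tr B x ∈ H) Z :=
    fun x y h => by
      refine propext (and_congr (hd1 h).to_iff (forall₂_congr fun B hB => ?_))
      rw [tr_dependsOn B fun i hi => h i ((mem_powersetCard.1 hB).1 hi)]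
  have hS1 : ∀ T, T ∈ KsetC P.gnd (P.cross k) (k - 1) k (P.polyAt (k - 1) z) ↔
      ∃ x : ∀ i, P.Part (a 1) i, T = tr Z x ∧
        ∀ B ∈ Z.ssubsets, labelOf P k o B x = addrLabel k o z B := fun T => by
    rw [mem_KsetC_polyAt_iff hP hk hZ hZk]
    simp only [forall_labelOf_eq_iff hP ha hz hZ hZk]
  have hS2 : ∀ T, T ∈ KsetC P.gnd (P.cross k) (k - 1) k H ∩
      KsetC P.gnd (P.cross k) (k - 1) k (P.polyAt (k - 1) z) ↔
      ∃ x : ∀ i, P.Part (a 1) i, T = tr Z x ∧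
        ((∀ B ∈ Z.ssubsets, labelOf P k o B x = addrLabel k o z B) ∧
          ∀ B ∈ Z.powersetCard (k - 1), tr B x ∈ H) := fun T => by
    have hH : ∀ x : ∀ i, P.Part (a 1) i, tr Z x ∈ KsetC P.gnd (P.cross k) (k - 1) k H ↔
        ∀ B ∈ Z.powersetCard (k - 1), tr B x ∈ H := fun x => by
      rw [mem_KsetC_of_mem_cross _ (tr_mem_cross hP hZk x)]
      constructor
      · exact fun h B hB => h _ (mem_powersetCard_tr.2 ⟨B, hB, rfl⟩)
      · rintro h S hS
        obtain ⟨B, hB, rfl⟩ := mem_powersetCard_tr.1 hS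
        exact h B hB
    rw [mem_inter, hS1]
    constructor
    · rintro ⟨h, x, rfl, hx⟩
      exact ⟨x, rfl, hx, (hH x).1 h⟩
    · rintro ⟨x, rfl, hx, h⟩
      exact ⟨(hH x).2 h, x, rfl, hx⟩
  rw [hcount _ _ hd1 hS1, hcount _ _ hd2 hS2, mul_div_mul_left _ _ hc.ne', dens,
    Nat.sub_add_cancel (by omega : 1 ≤ k)]
  split_ifs with h0
  · rw [h0, Nat.cast_zero, div_zero]
  · rfl

end Density

section Transfer

variable {k : ℕ} {a : ℕ → ℕ}

/-- A `j`-graph of crossing sets with prescribed membership of the transversals. -/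
lemma exists_graph_of_dependsOn (hP : P.IsLabeled k a) (j : ℕ)
    {χ : Finset (Idx (a 1)) → (∀ i, P.Part (a 1) i) → Bool} (hχ : ∀ B, DependsOn (χ B) B) :
    ∃ H ⊆ P.cross j, ∀ B, #B = j → ∀ x, tr B x ∈ H ↔ χ B x = true := by
  classical
  refine ⟨(P.cross j).filter fun T => ∃ B x, T = tr B x ∧ χ B x = true, filter_subset _ _,
    fun B hB x => ?_⟩
  rw [mem_filter]
  constructor
  · rintro ⟨_, A, y, h, hA⟩
    obtain ⟨rfl, hxy⟩ := tr_eq_tr h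
    rwa [hχ B hxy]
  · exact fun h => ⟨tr_mem_cross hP hB x, B, x, rfl, h⟩

end Transfer

end Translation

end HypReg

namespace HypReg

open Finset

/-- Transferring the large-scale structure of a (k−1)-graph to another vertex set
(Lemma 5.2 of the paper). -/
theorem mimic_lemma :
    ∀ k o : ℕ, 2 ≤ k → 2 ≤ o → ∀ ν : ℝ, 0 < ν →
    ∃ ε₀ : ℝ, 0 < ε₀ ∧ ∀ ε : ℝ, 0 < ε → ε ≤ ε₀ →
    ∃ n₀ : ℕ,
    ∀ (V₁ : Type) [DecidableEq V₁], ∀ (V₂ : Type) [DecidableEq V₂],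
    ∀ (W₁ : Finset V₁) (W₂ : Finset V₂) (n m : ℕ),
    W₁.card = n → W₂.card = m → n₀ ≤ n → n₀ ≤ m →
    ∀ a : ℕ → ℕ, (∀ i, 1 ≤ i → i ≤ k - 1 → 1 ≤ a i ∧ a i ≤ o) →
    ∀ (P : LabFam V₁) (Q : LabFam V₂), P.gnd = W₁ → Q.gnd = W₂ →
    P.IsLabeled k a → P.toPartFam.IsEquitableE k a (1 / (a 1 : ℝ)) ε →
    Q.IsLabeled k a → Q.toPartFam.IsEquitableE k a (1 / (a 1 : ℝ)) ε →
    ∀ H : Finset (Finset V₁), H ⊆ P.toPartFam.cross (k-1) →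
    ∃ (G : Finset (Finset V₁)) (Fk : Finset (Finset V₂)),
      G ⊆ P.toPartFam.cross (k-1) ∧ Fk ⊆ Q.toPartFam.cross (k-1) ∧
      -- (F1)
      ((sd H G).card : ℝ) ≤ ν * (n.choose (k-1) : ℝ) ∧
      -- (F2)
      ∀ z : Addr, IsAddress k (k-1) a z →
        |dens P.gnd (P.toPartFam.cross k) (k-1)
            (KsetC P.gnd (P.toPartFam.cross k) (k-1) k G) (P.polyAt (k-1) z) -
          dens Q.gnd (Q.toPartFam.cross k) (k-1)
            (KsetC Q.gnd (Q.toPartFam.cross k) (k-1) k Fk) (Q.polyAt (k-1) z)| ≤ ν := by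
  intro k o hk ho ν hν
  have hc : (0 : ℝ) < 1 / o := by
    have : (0 : ℝ) < o := by exact_mod_cast (by omega : 0 < o)
    positivity
  choose δ hδ M hmimic using fun N : ℕ =>
    exists_mimic (Idx N) (Fin (o + 1)) k (by omega) hc hν
  have hrange : (range (o + 1)).Nonempty := ⟨0, by simp⟩
  set q : ℕ → ℝ := fun N => Fintype.card (Finset (Idx N) → Fin (o + 1)) with hq
  have hq0 : ∀ N, 0 < q N := fun N => by
    simp only [hq]
    exact_mod_cast Fintype.card_pos
  refine ⟨(range (o + 1)).inf' hrange fun N => δ N / q N,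
    (lt_inf'_iff _).2 fun N _ => div_pos (hδ N) (hq0 N), fun ε hε hεle => ?_⟩
  refine ⟨o * (range (o + 1)).sup M, ?_⟩
  intro V₁ _ V₂ _ W₁ W₂ n m hn hm hn₀ hm₀ a ha P Q hPg hQg hP hPE hQ hQE H hH
  have ha' : ∀ i, 1 ≤ i → i ≤ k - 1 → a i ≤ o := fun i h1 h2 => (ha i h1 h2).2
  obtain ⟨ha1, ha1o⟩ := ha 1 le_rfl (by omega)
  have hmem : a 1 ∈ range (o + 1) := mem_range.2 (by omega)
  have hεδ : q (a 1) * ε ≤ δ (a 1) := by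
    have := hεle.trans (inf'_le _ hmem)
    rw [le_div_iff₀ (hq0 _)] at this
    linarith
  have hcut : ∀ {V : Type} [DecidableEq V] {R : LabFam V}, R.IsLabeled k a →
      R.toPartFam.IsEquitableE k a (1 / (a 1 : ℝ)) ε → ∀ B b,
      CutLE B (fun x => ind (labelOf R k o B x = b) - labelDens k o a B b) (δ (a 1)) :=
    fun hR hRE B b =>
      have := nonempty_part hR
      (cutLE_labelOf hR ha' hε.le hRE.2.2 B b).mono hεδ
  have hlarge : ∀ i : Idx (a 1), M (a 1) ≤ Fintype.card (Q.Part (a 1) i) := by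
    intro i
    refine le_trans ?_ (le_card_part hQ hQE i)
    rw [hQg, hm, Nat.le_div_iff_mul_le ha1, mul_comm]
    exact (Nat.mul_le_mul ha1o (le_sup (f := M) hmem)).trans hm₀
  have := nonempty_part hP
  have := nonempty_part hQ
  obtain ⟨χ', hχ', hdens⟩ := hmimic (a 1) (P.Part (a 1)) (Q.Part (a 1)) (labelOf P k o)
    (labelOf Q k o) (labelDens k o a) labelDens_nonneg labelDens_le_one labelOf_dependsOn
    labelOf_dependsOn (hcut hP hPE) (hcut hQ hQE) hlarge
    (fun B x => decide (tr B x ∈ H)) fun B x y h => by simp only [tr_dependsOn B h]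
  obtain ⟨Fk, hFk, hFχ⟩ := exists_graph_of_dependsOn hQ (k - 1) hχ'
  refine ⟨H, Fk, hH, hFk, ?_, fun z hz => ?_⟩
  · simp only [sd, sdiff_self, union_idempotent, bot_eq_empty, card_empty, Nat.cast_zero]
    positivity
  · obtain ⟨Z, hZ⟩ := exists_idxSet_eq hz.2.1
    have hZk : #Z = k := by rw [← card_idxSet, hZ, hz.1]
    rw [dens_eq_expect_div hP hk ha' hz hZ hZk, dens_eq_expect_div hQ hk ha' hz hZ hZk]
    have hF : ∀ x : ∀ i, Q.Part (a 1) i, ∏ B ∈ Z.powersetCard (k - 1), ind (tr B x ∈ Fk) =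
        ∏ B ∈ Z.powersetCard (k - 1), ind (χ' B x = true) := fun x =>
      prod_congr rfl fun B hB => ind_congr (hFχ B (mem_powersetCard.1 hB).2 x)
    have := hdens Z (addrLabel k o z) hZk fun B hB =>
      one_div_le_labelDens ha' hz hZ (mem_ssubsets.1 hB).subset
    simpa only [hF, decide_eq_true_eq] using this

end HypReg
end
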